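/- Let q be an odd prime and k ≥ 1 an integer. Put r = gcd(k, q−1) and h = (q−1)/r, and assume h is even. Then there exists a constant C > 0 (depending only on r and q) such that, as x → ∞, S_{k,q}(x) = (C·x/(log x)^{1/h})·(1 + (1 − γ_{k,q})/(h·log x)) + O(x/(log x)^{2+1/h}). -/

import Mathlib

open Filter Topology

/-- The `k`-th divisor sum function `σ_k(n) = ∑_{d ∣ n} d^k`. -/
def sigmak (k n : ℕ) : ℕ := ∑ d ∈ n.divisors, d ^ k

/-- The multiplicative order `g_p` of `p^m` modulo `q`. -/
noncomputable def gp (q m p : ℕ) : ℕ := orderOf ((p : ZMod q) ^ m)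

/-- The local term at a prime `p` of the prime sum `S(m,q)` of the paper. -/
noncomputable def Sterm (q m p : ℕ) : ℝ :=
  if p = q then 0 else
    (if gp q m p = 1 then
        (q : ℝ) * Real.log p / ((p : ℝ) ^ q - 1)
          - ((q : ℝ) - 1) * Real.log p / ((p : ℝ) ^ (q - 1) - 1)
      else 0)
    + (if 3 ≤ gp q m p then
        (gp q m p : ℝ) * Real.log p / ((p : ℝ) ^ gp q m p - 1)
          - ((gp q m p : ℝ) - 1) * Real.log p / ((p : ℝ) ^ (gp q m p - 1) - 1)
      else 0)
    + (if gp q m p = 2 then Real.log p / ((p : ℝ) ^ 2 - 1) else 0)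
    + (if 4 ≤ gp q m p ∧ 2 ∣ gp q m p then
        Real.log p / ((p : ℝ) ^ (gp q m p / 2) - ((p : ℝ) ^ (gp q m p / 2))⁻¹)
      else 0)

/-- The prime sum `S(m,q)` of the paper (a sum over all primes `p ≠ q`). -/
noncomputable def Smq (q m : ℕ) : ℝ := ∑' p : Nat.Primes, Sterm q m (p : ℕ)

/-- The Dirichlet L-function attached to a Dirichlet character mod `q` (junk value for `q = 0`). -/
noncomputable def Lfun {q : ℕ} (χ : DirichletCharacter ℂ q) (s : ℂ) : ℂ :=
  if h : q = 0 then 0 else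
    haveI : NeZero q := ⟨h⟩
    DirichletCharacter.LFunction χ s

/-- `γ_{K_m} = γ + ∑_{χ ∈ X_m^*} (L'/L)(1,χ)`, the Euler–Kronecker constant of the unique
subfield of `ℚ(ζ_q)` of degree `(q-1)/m`; here `X_m^*` is the set of nonprincipal Dirichlet
characters mod `q` that are trivial on the group `C_m` of `m`-th roots of unity mod `q`. -/
noncomputable def gammaK (q m : ℕ) : ℝ :=
  Real.eulerMascheroniConstant +
    (∑ᶠ χ ∈ {χ : DirichletCharacter ℂ q | χ ≠ 1 ∧ ∀ a : ZMod q, a ^ m = 1 → χ a = 1},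
      deriv (Lfun χ) 1 / Lfun χ 1).re

/-- The Euler–Kronecker constant `γ_{k,q}`, for `q` an odd prime, `r = gcd(k, q-1)` and
`h = (q-1)/r` even:  `γ_{k,q} = γ − (1/h)(2γ_{K_{2r}} − γ_{K_r}) − log q/(h(q−1)) − S(r,q)`. -/
noncomputable def gammakq (q k : ℕ) : ℝ :=
  Real.eulerMascheroniConstant
    - (1 / (((q - 1) / Nat.gcd k (q - 1) : ℕ) : ℝ)) *
        (2 * gammaK q (2 * Nat.gcd k (q - 1)) - gammaK q (Nat.gcd k (q - 1)))
    - Real.log q / ((((q - 1) / Nat.gcd k (q - 1) : ℕ) : ℝ) * ((q : ℝ) - 1))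
    - Smq q (Nat.gcd k (q - 1))

/-- `γ'_{k,q} = γ_{k,q} + log q/(q-1)`. -/
noncomputable def gammakq' (q k : ℕ) : ℝ := gammakq q k + Real.log q / ((q : ℝ) - 1)

/-- `S_{k,q}(x) = #{1 ≤ n ≤ x : q ∤ σ_k(n)}`. -/
noncomputable def Skq (k q : ℕ) (x : ℝ) : ℕ :=
  Nat.card {n : ℕ | 1 ≤ n ∧ (n : ℝ) ≤ x ∧ ¬ q ∣ sigmak k n}

/-- `S'_{k,q}(x) = #{1 ≤ n ≤ x : q ∤ n·σ_k(n)}`. -/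
noncomputable def Skq' (k q : ℕ) (x : ℝ) : ℕ :=
  Nat.card {n : ℕ | 1 ≤ n ∧ (n : ℝ) ≤ x ∧ ¬ q ∣ n * sigmak k n}

/-- The error in the partial sums of `f` beyond `N` relative to the mean value `m`. -/
noncomputable def partialSumError (f : ℕ → ℂ) (m : ℂ) (N : ℕ) (t : ℝ) : ℂ :=
  (∑ k ∈ Finset.Icc 1 ⌊t⌋₊, if k ≤ N then 0 else f k) - m * (max (t - N) 0 : ℝ)

lemma sum_Icc_ite_le_eq (f : ℕ → ℂ) {N n : ℕ} (h : N ≤ n) :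
    (∑ k ∈ Finset.Icc 1 n, if k ≤ N then 0 else f k) =
      ∑ k ∈ Finset.Icc 1 n, f k - ∑ k ∈ Finset.Icc 1 N, f k := by
  induction n, h using Nat.le_induction with
  | base =>
    rw [sub_self]
    exact Finset.sum_eq_zero fun k hk => if_pos (Finset.mem_Icc.mp hk).2
  | succ n hn ih =>
    rw [Finset.sum_Icc_succ_top (by omega), Finset.sum_Icc_succ_top (by omega), ih,
      if_neg (by omega)]
    ring

lemma partialSumError_eq_zero (f : ℕ → ℂ) (m : ℂ) {N : ℕ} {t : ℝ} (ht : t ≤ N) :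
    partialSumError f m N t = 0 := by
  unfold partialSumError
  rw [max_eq_right (by linarith), Finset.sum_eq_zero]
  · simp
  · intro k hk
    have hk := (Finset.mem_Icc.mp hk)
    refine if_pos (hk.2.trans ?_)
    exact Nat.floor_le_of_le ht

lemma norm_partialSumError_le {f : ℕ → ℂ} {m : ℂ} {B : ℝ}
    (hB : ∀ n : ℕ, ‖∑ k ∈ Finset.Icc 1 n, f k - m * n‖ ≤ B) (N : ℕ) (t : ℝ) :
    ‖partialSumError f m N t‖ ≤ 2 * B + ‖m‖ := by
  have hB0 : 0 ≤ B := (norm_nonneg _).trans (hB 0)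
  rcases lt_or_ge t N with h | h
  · rw [partialSumError_eq_zero f m h.le, norm_zero]; positivity
  · have h0 : (0 : ℝ) ≤ t := (Nat.cast_nonneg N).trans h
    have hN : N ≤ ⌊t⌋₊ := Nat.le_floor h
    rw [partialSumError, max_eq_left (by linarith), sum_Icc_ite_le_eq f hN]
    have e : (∑ k ∈ Finset.Icc 1 ⌊t⌋₊, f k - ∑ k ∈ Finset.Icc 1 N, f k) - m * ((t - N : ℝ) : ℂ)
        = (∑ k ∈ Finset.Icc 1 ⌊t⌋₊, f k - m * (⌊t⌋₊ : ℕ)) - (∑ k ∈ Finset.Icc 1 N, f k - m * N)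
          - m * ((t - ⌊t⌋₊ : ℝ) : ℂ) := by push_cast; ring
    rw [e]
    refine (norm_sub_le _ _).trans ?_
    refine add_le_add ((norm_sub_le _ _).trans (by linarith [hB ⌊t⌋₊, hB N])) ?_
    rw [norm_mul, Complex.norm_real, Real.norm_eq_abs]
    refine mul_le_of_le_one_right (norm_nonneg _) ?_
    rw [abs_le]
    constructor <;> linarith [Nat.floor_le h0, Nat.lt_floor_add_one t]

lemma measurable_partialSumError (f : ℕ → ℂ) (m : ℂ) (N : ℕ) :
    Measurable (partialSumError f m N) := by
  unfold partialSumError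
  refine Measurable.sub ?_ ?_
  · exact (measurable_from_nat (f := fun n : ℕ =>
      ∑ k ∈ Finset.Icc 1 n, if k ≤ N then 0 else f k)).comp Nat.measurable_floor
  · fun_prop

lemma locallyIntegrable_partialSumError {f : ℕ → ℂ} {m : ℂ} {B : ℝ}
    (hB : ∀ n : ℕ, ‖∑ k ∈ Finset.Icc 1 n, f k - m * n‖ ≤ B) (N : ℕ) :
    MeasureTheory.LocallyIntegrable (partialSumError f m N) := by
  rw [MeasureTheory.locallyIntegrable_iff]
  intro K hK
  refine MeasureTheory.Measure.integrableOn_of_bounded (M := 2 * B + ‖m‖) hK.measure_lt_top.ne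
    (measurable_partialSumError f m N).aestronglyMeasurable ?_
  exact Eventually.of_forall fun t => norm_partialSumError_le hB N t

lemma setIntegral_partialSumError {f : ℕ → ℂ} {m : ℂ} {N : ℕ} (hN : 1 ≤ N) (s : ℂ) :
    ∫ t in Set.Ioi (1 : ℝ), partialSumError f m N t * (t : ℂ) ^ (-(s + 1)) =
      mellin (partialSumError f m N) (-s) := by
  have e : ∀ t : ℝ, (t : ℂ) ^ (-s - 1) • partialSumError f m N t =
      partialSumError f m N t * (t : ℂ) ^ (-(s + 1)) := fun t => by
    rw [smul_eq_mul, mul_comm, neg_add, sub_eq_add_neg]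
  rw [mellin]
  simp_rw [e]
  rw [← MeasureTheory.integral_Ici_eq_integral_Ioi]
  refine MeasureTheory.setIntegral_eq_of_subset_of_forall_sdiff_eq_zero measurableSet_Ioi
    (fun x hx => lt_of_lt_of_le one_pos hx) ?_ |>.symm
  intro x hx
  rw [partialSumError_eq_zero f m ((not_le.mp fun h => hx.2 h).le.trans (by exact_mod_cast hN)),
    zero_mul]

lemma differentiableAt_mellin_partialSumError {f : ℕ → ℂ} {m : ℂ} {B : ℝ}
    (hB : ∀ n : ℕ, ‖∑ k ∈ Finset.Icc 1 n, f k - m * n‖ ≤ B) {N : ℕ} (hN : 1 ≤ N)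
    {s : ℂ} (hs : s.re < 0) :
    DifferentiableAt ℂ (mellin (partialSumError f m N)) s := by
  refine mellin_differentiableAt_of_isBigO_rpow (a := 0) (b := s.re - 1)
    ((locallyIntegrable_partialSumError hB N).locallyIntegrableOn _) ?_ hs ?_ (by linarith)
  · simp only [neg_zero, Real.rpow_zero]
    exact Asymptotics.IsBigO.of_bound (2 * B + ‖m‖) (Eventually.of_forall fun t => by
      simpa using norm_partialSumError_le hB N t)
  · refine Asymptotics.IsBigO.of_bound 1 ?_
    filter_upwards [nhdsWithin_le_nhds (Iio_mem_nhds one_pos)] with t ht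
    rw [partialSumError_eq_zero f m (le_trans (le_of_lt ht) (by exact_mod_cast hN)), norm_zero]
    positivity

lemma norm_mellin_partialSumError_le {f : ℕ → ℂ} {m : ℂ} {B : ℝ}
    (hB : ∀ n : ℕ, ‖∑ k ∈ Finset.Icc 1 n, f k - m * n‖ ≤ B) {N : ℕ} (hN : 1 ≤ N)
    {s : ℂ} (hs : 0 < s.re) :
    ‖mellin (partialSumError f m N) (-s)‖ ≤ (2 * B + ‖m‖) * (N ^ (-s.re) / s.re) := by
  have hN0 : (0 : ℝ) < N := by exact_mod_cast hN
  have h1 : mellin (partialSumError f m N) (-s) =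
      ∫ t in Set.Ioi (N : ℝ), partialSumError f m N t * (t : ℂ) ^ (-(s + 1)) := by
    rw [← setIntegral_partialSumError hN]
    refine MeasureTheory.setIntegral_eq_of_subset_of_forall_sdiff_eq_zero
      measurableSet_Ioi (Set.Ioi_subset_Ioi (by exact_mod_cast hN)) ?_
    intro x hx
    rw [partialSumError_eq_zero f m (not_lt.mp hx.2), zero_mul]
  rw [h1]
  have h2 := integral_Ioi_rpow_of_lt (a := -s.re - 1) (by linarith) hN0
  have h3 : (N : ℝ) ^ (-s.re) / s.re = ∫ t in Set.Ioi (N : ℝ), t ^ (-s.re - 1) := by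
    rw [h2, sub_add_cancel, neg_div_neg_eq]
  rw [h3, ← MeasureTheory.integral_const_mul]
  refine MeasureTheory.norm_integral_le_of_norm_le
    ((integrableOn_Ioi_rpow_of_lt (by linarith) hN0).const_mul _) ?_
  filter_upwards [MeasureTheory.ae_restrict_mem measurableSet_Ioi] with t ht
  rw [norm_mul, Complex.norm_cpow_eq_rpow_re_of_pos (hN0.trans ht)]
  have : (-(s + 1)).re = -s.re - 1 := by simp; ring
  rw [this]
  exact mul_le_mul_of_nonneg_right (norm_partialSumError_le hB N t)
    (Real.rpow_nonneg (hN0.trans ht).le _)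

lemma LSeries_eq_sum_add_mellin {f : ℕ → ℂ} {m : ℂ} {B : ℝ}
    (hB : ∀ n : ℕ, ‖∑ k ∈ Finset.Icc 1 n, f k - m * n‖ ≤ B) {N : ℕ} (hN : 1 ≤ N)
    {s : ℂ} (hs : 1 < s.re) (hf : LSeriesSummable f s) :
    LSeries f s = ∑ n ∈ Finset.Icc 1 N, f n * (n : ℂ) ^ (-s) + m * (N : ℂ) ^ (1 - s) / (s - 1)
      + s * mellin (partialSumError f m N) (-s) := by
  have hN0 : (0 : ℝ) < N := by exact_mod_cast hN
  set g : ℕ → ℂ := fun k => if k ≤ N then 0 else f k with hg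
  set f0 : ℕ → ℂ := fun k => if k ≤ N then f k else 0 with hf0
  have hs0 : s ≠ 0 := fun h => by simp [h] at hs; linarith
  have hs1 : s - 1 ≠ 0 := fun h => by
    rw [sub_eq_zero] at h; simp [h] at hs
  have hfg : f = f0 + g := by
    ext k; simp only [hg, hf0, Pi.add_apply]; split_ifs <;> simp
  have hf0z : ∀ n ∉ Finset.Icc 1 N, LSeries.term f0 s n = 0 := by
    intro n hn
    rw [Finset.mem_Icc, not_and_or] at hn
    rcases eq_or_ne n 0 with h | h
    · simp [h]
    · rw [LSeries.term_of_ne_zero h]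
      simp only [hf0]
      rw [if_neg (by omega), zero_div]
  have hf0s : LSeriesSummable f0 s := summable_of_ne_finset_zero hf0z
  have hgs : LSeriesSummable g s := by
    have := hf.sub hf0s
    rwa [hfg, add_sub_cancel_left] at this
  have hO : (fun n => ∑ k ∈ Finset.Icc 1 n, g k) =O[atTop] fun n : ℕ => (n : ℝ) ^ (1 : ℝ) := by
    refine Asymptotics.IsBigO.of_bound (2 * B + ‖m‖ + ‖m‖) ?_
    filter_upwards [eventually_ge_atTop 1] with n hn
    have hn' : (1 : ℝ) ≤ n := by exact_mod_cast hn
    have h1 := norm_partialSumError_le hB N n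
    rw [partialSumError, Nat.floor_natCast] at h1
    have h2 : ‖m * (max ((n : ℝ) - N) 0 : ℝ)‖ ≤ ‖m‖ * n := by
      rw [norm_mul, Complex.norm_real, Real.norm_eq_abs, abs_of_nonneg (le_max_right _ _)]
      refine mul_le_mul_of_nonneg_left (max_le ?_ ?_) (norm_nonneg _) <;> linarith
    rw [Real.rpow_one, Real.norm_of_nonneg (by linarith)]
    have h3 := norm_sub_norm_le (∑ k ∈ Finset.Icc 1 n, g k) (m * (max ((n : ℝ) - N) 0 : ℝ))
    have h4 : 0 ≤ 2 * B + ‖m‖ := (norm_nonneg _).trans h1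
    nlinarith
  have hmain := LSeries_eq_mul_integral g zero_le_one hs hgs hO
  have hI1 : MeasureTheory.IntegrableOn
      (fun t : ℝ => partialSumError f m N t * (t : ℂ) ^ (-(s + 1))) (Set.Ioi 1) := by
    refine MeasureTheory.Integrable.mono'
      (g := fun t : ℝ => (2 * B + ‖m‖) * t ^ (-s.re - 1)) ?_ ?_ ?_
    · exact (integrableOn_Ioi_rpow_of_lt (by linarith) one_pos).const_mul _
    · refine (measurable_partialSumError f m N).aestronglyMeasurable.mul ?_
      exact (Complex.measurable_ofReal.pow_const _).aestronglyMeasurable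
    · filter_upwards [MeasureTheory.ae_restrict_mem measurableSet_Ioi] with t ht
      have ht0 : (0 : ℝ) < t := one_pos.trans ht
      rw [norm_mul, Complex.norm_cpow_eq_rpow_re_of_pos ht0]
      have : (-(s + 1)).re = -s.re - 1 := by simp; ring
      rw [this]
      exact mul_le_mul_of_nonneg_right (norm_partialSumError_le hB N t)
        (Real.rpow_nonneg ht0.le _)
  have hval : ∀ t : ℝ, t ∈ Set.Ioi (N : ℝ) →
      ((max (t - N) 0 : ℝ) : ℂ) * (t : ℂ) ^ (-(s + 1)) =
        (t : ℂ) ^ (-s) - N * (t : ℂ) ^ (-s - 1) := fun t ht => by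
    have ht : (N : ℝ) < t := ht
    have ht0 : (t : ℂ) ≠ 0 := by exact_mod_cast (hN0.trans ht).ne'
    rw [max_eq_left (by linarith), show -s = (-s - 1) + 1 by ring, Complex.cpow_add _ _ ht0,
      Complex.cpow_one]
    push_cast
    ring_nf
  have hi1 := integrableOn_Ioi_cpow_of_lt (a := -s) (by simpa using hs) hN0
  have hi2 := integrableOn_Ioi_cpow_of_lt (a := -s - 1)
    (by simp; linarith) hN0
  have hzero : ∀ x ∈ Set.Ioi (1 : ℝ) \ Set.Ioi (N : ℝ),
      ((max (x - N) 0 : ℝ) : ℂ) * (x : ℂ) ^ (-(s + 1)) = 0 := by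
    intro x hx
    have : x ≤ N := not_lt.mp hx.2
    rw [max_eq_right (by linarith)]; simp
  have hI2 : MeasureTheory.IntegrableOn
      (fun t : ℝ => ((max (t - N) 0 : ℝ) : ℂ) * (t : ℂ) ^ (-(s + 1))) (Set.Ioi 1) := by
    refine MeasureTheory.IntegrableOn.of_forall_sdiff_eq_zero
      (s := Set.Ioi (N : ℝ)) ?_ measurableSet_Ioi hzero
    exact (hi1.sub (hi2.const_mul (N : ℂ))).congr_fun (fun t ht => (hval t ht).symm)
      measurableSet_Ioi
  have hI2v : ∫ t in Set.Ioi (1 : ℝ), ((max (t - N) 0 : ℝ) : ℂ) * (t : ℂ) ^ (-(s + 1)) =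
      (N : ℂ) ^ (1 - s) / (s * (s - 1)) := by
    rw [MeasureTheory.setIntegral_eq_of_subset_of_forall_sdiff_eq_zero
      measurableSet_Ioi (Set.Ioi_subset_Ioi (by exact_mod_cast hN)) hzero,
      MeasureTheory.setIntegral_congr_fun measurableSet_Ioi hval,
      MeasureTheory.integral_sub hi1 (hi2.const_mul _), MeasureTheory.integral_const_mul,
      integral_Ioi_cpow_of_lt (by simpa using hs) hN0,
      integral_Ioi_cpow_of_lt (by simp; linarith) hN0]
    have hNc : ((N : ℝ) : ℂ) ≠ 0 := by exact_mod_cast hN0.ne'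
    have e1 : -s + 1 = 1 - s := by ring
    have e2 : ((N : ℝ) : ℂ) ^ (-s - 1 + 1) = ((N : ℝ) : ℂ) ^ (1 - s) / (N : ℝ) := by
      rw [show -s - 1 + 1 = (1 - s) - 1 by ring, Complex.cpow_sub _ _ hNc, Complex.cpow_one]
    rw [e1, e2]
    have h3 : (1 - s) ≠ 0 := fun h => hs1 (by linear_combination -h)
    have h4 : (-s - 1 + 1) ≠ 0 := fun h => hs0 (by linear_combination -h)
    push_cast at hNc ⊢
    field_simp
    ring
  have hsplit : ∫ t in Set.Ioi (1 : ℝ), (∑ k ∈ Finset.Icc 1 ⌊t⌋₊, g k) * (t : ℂ) ^ (-(s + 1)) =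
      mellin (partialSumError f m N) (-s) + m * ((N : ℂ) ^ (1 - s) / (s * (s - 1))) := by
    rw [← hI2v, ← setIntegral_partialSumError hN, ← MeasureTheory.integral_const_mul,
      ← MeasureTheory.integral_add hI1 (hI2.const_mul m)]
    refine MeasureTheory.setIntegral_congr_fun measurableSet_Ioi fun t _ => ?_
    simp only [partialSumError, hg]
    ring
  have hF0 : LSeries f0 s = ∑ n ∈ Finset.Icc 1 N, f n * (n : ℂ) ^ (-s) := by
    rw [LSeries, tsum_eq_sum hf0z]
    refine Finset.sum_congr rfl fun n hn => ?_
    have := Finset.mem_Icc.mp hn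
    rw [LSeries.term_of_ne_zero (by omega)]
    simp only [hf0]
    rw [if_pos this.2, Complex.cpow_neg, div_eq_mul_inv]
  rw [show LSeries f s = LSeries f0 s + LSeries g s by
    conv_lhs => rw [hfg]
    exact LSeries_add hf0s hgs, hF0, hmain, hsplit]
  field_simp
  ring

lemma exists_norm_sum_sub_mul_le {q : ℕ} [NeZero q] (Φ : ZMod q → ℂ) :
    ∃ (m : ℂ) (B : ℝ), ∀ n : ℕ, ‖∑ k ∈ Finset.Icc 1 n, Φ k - m * n‖ ≤ B := by
  have hq0 : (q : ℂ) ≠ 0 := by exact_mod_cast NeZero.ne q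
  set S : ℂ := ∑ k ∈ Finset.Icc 1 q, Φ k
  set W : ℕ → ℂ := fun n => ∑ k ∈ Finset.Icc 1 n, Φ k - S / q * n with hW
  have hper : ∀ n, ∑ k ∈ Finset.Icc 1 (n + q), Φ (k : ℕ) = ∑ k ∈ Finset.Icc 1 n, Φ k + S := by
    intro n
    induction n with
    | zero => simp [S]
    | succ n ih =>
      rw [show n + 1 + q = (n + q) + 1 by ring, Finset.sum_Icc_succ_top (by omega),
        Finset.sum_Icc_succ_top (by omega), ih]
      push_cast
      simp
      ring
  have hWper : Function.Periodic W q := fun n => by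
    simp only [hW, hper]
    push_cast
    field_simp
    ring
  refine ⟨S / q, ∑ j ∈ Finset.range q, ‖W j‖, fun n => ?_⟩
  change ‖W n‖ ≤ _
  rw [← hWper.map_mod_nat n]
  exact Finset.single_le_sum (f := fun j => ‖W j‖) (fun _ _ => norm_nonneg _)
    (Finset.mem_range.mpr (Nat.mod_lt _ (NeZero.pos q)))

lemma LFunction_eq_sum_add_mellin {q : ℕ} [NeZero q] (χ : DirichletCharacter ℂ q) {m : ℂ} {B : ℝ}
    (hB : ∀ n : ℕ, ‖∑ k ∈ Finset.Icc 1 n, χ k - m * n‖ ≤ B) {N : ℕ} (hN : 1 ≤ N)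
    {s : ℂ} (hs : 0 < s.re) (him : s.im ≠ 0) :
    χ.LFunction s = ∑ n ∈ Finset.Icc 1 N, χ n * (n : ℂ) ^ (-s) + m * (N : ℂ) ^ (1 - s) / (s - 1)
      + s * mellin (partialSumError (fun n => χ n) m N) (-s) := by
  set R : ℂ → ℂ := fun s => ∑ n ∈ Finset.Icc 1 N, χ n * (n : ℂ) ^ (-s)
    + m * (N : ℂ) ^ (1 - s) / (s - 1)
    + s * mellin (partialSumError (fun n => χ n) m N) (-s) with hR
  set U : Set ℂ := {w | 0 < w.re ∧ 0 < w.im * s.im} with hU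
  have hUo : IsOpen U := (isOpen_lt continuous_const Complex.continuous_re).inter
    (isOpen_lt continuous_const (Complex.continuous_im.mul continuous_const))
  have hUc : Convex ℝ U := by
    refine (convex_halfSpace_re_gt 0).inter ?_
    intro x hx y hy a b ha hb hab
    have hx : 0 < x.im * s.im := hx
    have hy : 0 < y.im * s.im := hy
    change 0 < (a • x + b • y).im * s.im
    simp only [Complex.add_im, Complex.smul_im, smul_eq_mul]
    rcases eq_or_lt_of_le ha with h | h
    · subst h; rw [zero_add] at hab; subst hab; simpa using hy
    · nlinarith [mul_pos h hx, mul_nonneg hb hy.le]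
  have hU1 : ∀ w ∈ U, w ≠ 1 := by
    rintro w hw rfl
    simp [hU] at hw
  have hd1 : DifferentiableOn ℂ χ.LFunction U := fun w hw =>
    (χ.differentiableAt_LFunction w (Or.inl (hU1 w hw))).differentiableWithinAt
  have hd2 : DifferentiableOn ℂ R U := fun w hw => by
    refine DifferentiableAt.differentiableWithinAt ?_
    have hw1 : w - 1 ≠ 0 := sub_ne_zero.mpr (hU1 w hw)
    have hNc : (N : ℂ) ≠ 0 := by exact_mod_cast (by omega)
    refine DifferentiableAt.add (DifferentiableAt.add ?_ ?_) ?_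
    · refine DifferentiableAt.fun_sum fun n hn => ?_
      have : (n : ℂ) ≠ 0 := by
        have := (Finset.mem_Icc.mp hn).1
        exact_mod_cast (by omega)
      exact ((differentiableAt_id.neg).const_cpow (Or.inl this)).const_mul _
    · exact (((differentiableAt_id.const_sub 1).const_cpow (Or.inl hNc)).const_mul _).div
        (differentiableAt_id.sub_const 1) hw1
    · refine differentiableAt_id.mul ?_
      have := differentiableAt_mellin_partialSumError hB hN (s := -w)
        (by simpa using hw.1)
      exact this.comp w differentiableAt_id.neg
  have hpt : (⟨2, s.im⟩ : ℂ) ∈ U := ⟨by simp, by simpa using mul_self_pos.mpr him⟩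
  have hev : χ.LFunction =ᶠ[𝓝 (⟨2, s.im⟩ : ℂ)] R := by
    filter_upwards [(isOpen_lt continuous_const Complex.continuous_re).mem_nhds
      (show (⟨2, s.im⟩ : ℂ) ∈ {w : ℂ | 1 < w.re} by simp)] with w hw
    rw [χ.LFunction_eq_LSeries hw]
    exact LSeries_eq_sum_add_mellin hB hN hw (χ.LSeriesSummable_of_one_lt_re hw)
  exact (hd1.analyticOnNhd hUo).eqOn_of_preconnected_of_eventuallyEq (hd2.analyticOnNhd hUo)
    hUc.isPreconnected hpt hev ⟨hs, mul_self_pos.mpr him⟩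

lemma exists_norm_LFunction_le_rpow {q : ℕ} [NeZero q] (χ : DirichletCharacter ℂ q) {ε : ℝ}
    (hε : 0 < ε) (hε2 : ε ≤ 1 / 2) :
    ∃ C, 0 < C ∧ ∀ s : ℂ, 1 - ε ≤ s.re → s.re ≤ 4 → 1 ≤ |s.im| →
      ‖χ.LFunction s‖ ≤ C * |s.im| ^ (2 * ε) := by
  obtain ⟨m, B, hB⟩ := exists_norm_sum_sub_mul_le (χ : ZMod q → ℂ)
  have hB0 : 0 ≤ B := (norm_nonneg _).trans (hB 0)
  refine ⟨4 * (1 + 2 / ε) + 2 * ‖m‖ + 5 * ((2 * B + ‖m‖) * 2), by positivity,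
    fun s hs hs3 him => ?_⟩
  set τ := |s.im| with hτ
  have hτ0 : 0 < τ := by linarith
  set N := ⌈τ⌉₊ with hNdef
  have hN1 : 1 ≤ N := Nat.one_le_ceil_iff.mpr hτ0
  have hN1' : (1 : ℝ) ≤ N := by exact_mod_cast hN1
  have hN0 : (0 : ℝ) < N := by linarith
  have hNτ : τ ≤ N := Nat.le_ceil τ
  have hN2 : (N : ℝ) ≤ 2 * τ := by linarith [Nat.ceil_lt_add_one hτ0.le]
  have hre : 0 < s.re := by linarith
  have hNε : (N : ℝ) ^ ε ≤ 2 * τ ^ ε := by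
    refine (Real.rpow_le_rpow hN0.le hN2 hε.le).trans ?_
    rw [Real.mul_rpow (by norm_num) hτ0.le]
    refine mul_le_mul_of_nonneg_right ?_ (by positivity)
    calc (2 : ℝ) ^ ε ≤ 2 ^ (1 : ℝ) := Real.rpow_le_rpow_of_exponent_le (by norm_num) (by linarith)
      _ = 2 := Real.rpow_one 2
  have hττ : τ ^ ε ≤ τ ^ (2 * ε) := Real.rpow_le_rpow_of_exponent_le him (by linarith)
  have hτε : τ ^ ε * τ ^ ε = τ ^ (2 * ε) := by rw [← Real.rpow_add hτ0]; ring_nf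
  have hone : (1 : ℝ) ≤ τ ^ ε := Real.one_le_rpow him hε.le
  rw [LFunction_eq_sum_add_mellin χ hB hN1 hre (by intro h; simp [hτ, h] at him; linarith)]
  have h1 : ‖∑ n ∈ Finset.Icc 1 N, χ n * (n : ℂ) ^ (-s)‖ ≤ 4 * (1 + 2 / ε) * τ ^ (2 * ε) := by
    have hterm : ∀ n ∈ Finset.Icc 1 N, ‖χ n * (n : ℂ) ^ (-s)‖ ≤ (N : ℝ) ^ ε * (n : ℝ)⁻¹ := by
      intro n hn
      have hn := Finset.mem_Icc.mp hn
      have hn0 : (0 : ℝ) < n := by exact_mod_cast hn.1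
      have hn1 : (1 : ℝ) ≤ n := by exact_mod_cast hn.1
      rw [norm_mul, Complex.norm_natCast_cpow_of_pos hn.1]
      calc ‖χ n‖ * (n : ℝ) ^ (-s).re ≤ 1 * (n : ℝ) ^ (ε + -1) := by
            refine mul_le_mul (χ.norm_le_one _) ?_ (by positivity) zero_le_one
            exact Real.rpow_le_rpow_of_exponent_le hn1 (by simp; linarith)
        _ = (n : ℝ) ^ ε * (n : ℝ)⁻¹ := by
            rw [one_mul, Real.rpow_add hn0, Real.rpow_neg_one]
        _ ≤ _ := by
            refine mul_le_mul_of_nonneg_right ?_ (by positivity)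
            exact Real.rpow_le_rpow hn0.le (by exact_mod_cast hn.2) hε.le
    refine (norm_sum_le_of_le _ hterm).trans ?_
    rw [← Finset.mul_sum]
    have hharm : ∑ n ∈ Finset.Icc 1 N, (n : ℝ)⁻¹ ≤ 1 + Real.log N := by
      have := harmonic_le_one_add_log N
      rw [harmonic_eq_sum_Icc] at this
      push_cast at this
      exact this
    have hlog : Real.log N ≤ (N : ℝ) ^ ε / ε := Real.log_le_rpow_div hN0.le hε
    have hlog2 : 1 + Real.log N ≤ 2 * (1 + 2 / ε) * τ ^ ε := by
      calc 1 + Real.log N ≤ τ ^ ε + (2 * τ ^ ε) / ε := by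
            have : (N : ℝ) ^ ε / ε ≤ 2 * τ ^ ε / ε := by gcongr
            linarith
        _ = (1 + 2 / ε) * τ ^ ε := by ring
        _ ≤ _ := by
          have : 0 ≤ (1 + 2 / ε) * τ ^ ε := by positivity
          linarith
    calc (N : ℝ) ^ ε * ∑ n ∈ Finset.Icc 1 N, (n : ℝ)⁻¹
        ≤ (2 * τ ^ ε) * (2 * (1 + 2 / ε) * τ ^ ε) := by
          refine mul_le_mul hNε (hharm.trans hlog2) ?_ (by positivity)
          exact Finset.sum_nonneg fun _ _ => by positivity
      _ = 4 * (1 + 2 / ε) * (τ ^ ε * τ ^ ε) := by ring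
      _ = _ := by rw [hτε]
  have h2 : ‖m * (N : ℂ) ^ (1 - s) / (s - 1)‖ ≤ 2 * ‖m‖ * τ ^ (2 * ε) := by
    rw [norm_div, norm_mul, Complex.norm_natCast_cpow_of_pos (by omega)]
    have hden : 1 ≤ ‖s - 1‖ := by
      refine him.trans ?_
      have := Complex.abs_im_le_norm (s - 1)
      simpa [hτ] using this
    refine (div_le_self (by positivity) hden).trans ?_
    rw [mul_comm 2, mul_assoc]
    refine mul_le_mul_of_nonneg_left ?_ (norm_nonneg _)
    calc (N : ℝ) ^ (1 - s).re ≤ (N : ℝ) ^ ε :=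
          Real.rpow_le_rpow_of_exponent_le hN1' (by simp; linarith)
      _ ≤ 2 * τ ^ ε := hNε
      _ ≤ _ := by linarith
  have h3 : ‖s * mellin (partialSumError (fun n => χ n) m N) (-s)‖ ≤
      5 * ((2 * B + ‖m‖) * 2) * τ ^ (2 * ε) := by
    rw [norm_mul]
    have hsn : ‖s‖ ≤ 5 * τ := by
      refine (Complex.norm_le_abs_re_add_abs_im s).trans ?_
      rw [abs_of_pos hre]; linarith
    have hK : 0 ≤ 2 * B + ‖m‖ := by positivity
    have hpw : (N : ℝ) ^ (-s.re) / s.re ≤ 2 * (τ ^ (2 * ε) * τ⁻¹) := by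
      have e1 : (N : ℝ) ^ (-s.re) ≤ τ ^ (2 * ε) * τ⁻¹ := by
        calc (N : ℝ) ^ (-s.re) ≤ (N : ℝ) ^ (ε + -1) :=
              Real.rpow_le_rpow_of_exponent_le hN1' (by linarith)
          _ ≤ τ ^ (ε + -1) := Real.rpow_le_rpow_of_nonpos hτ0 hNτ (by linarith)
          _ = τ ^ ε * τ⁻¹ := by rw [Real.rpow_add hτ0, Real.rpow_neg_one]
          _ ≤ _ := by gcongr
      rw [div_le_iff₀ hre]
      have : 0 ≤ τ ^ (2 * ε) * τ⁻¹ := by positivity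
      nlinarith
    calc ‖s‖ * ‖mellin (partialSumError (fun n => χ n) m N) (-s)‖
        ≤ (5 * τ) * ((2 * B + ‖m‖) * (2 * (τ ^ (2 * ε) * τ⁻¹))) := by
          refine mul_le_mul hsn ?_ (norm_nonneg _) (by positivity)
          exact (norm_mellin_partialSumError_le hB hN1 hre).trans
            (mul_le_mul_of_nonneg_left hpw hK)
      _ = _ := by field_simp
  refine (norm_add_le _ _).trans ((add_le_add (norm_add_le _ _) h3).trans ?_)
  linarith

/-- `f` grows more slowly than any power of `|Im s|` in the strip `1 < Re s ≤ 2`,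
away from the real axis. -/
def SlowGrowth (f : ℂ → ℂ) : Prop :=
  ∀ ε > (0 : ℝ), ∀ ρ > (0 : ℝ), ∃ C, ∀ s : ℂ, 1 < s.re → s.re ≤ 2 → ρ ≤ |s.im| →
    ‖f s‖ ≤ C * (1 + |s.im|) ^ ε

/-- `f` is holomorphic on `Re s > 1` and its derivatives of order at most `n` grow slowly. -/
structure SlowUpTo (n : ℕ) (f : ℂ → ℂ) : Prop where
  differentiableOn : DifferentiableOn ℂ f {s | 1 < s.re}
  slow : ∀ j ≤ n, SlowGrowth (iteratedDeriv j f)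

lemma isOpen_one_lt_re : IsOpen {s : ℂ | 1 < s.re} :=
  isOpen_lt continuous_const Complex.continuous_re

lemma SlowGrowth.exists_pos {f : ℂ → ℂ} (hf : SlowGrowth f) {ε ρ : ℝ} (hε : 0 < ε)
    (hρ : 0 < ρ) : ∃ C, 0 < C ∧ ∀ s : ℂ, 1 < s.re → s.re ≤ 2 → ρ ≤ |s.im| →
    ‖f s‖ ≤ C * (1 + |s.im|) ^ ε := by
  obtain ⟨C, hC⟩ := hf ε hε ρ hρ
  refine ⟨max C 1, by positivity, fun s h1 h2 h3 => (hC s h1 h2 h3).trans ?_⟩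
  gcongr
  exact le_max_left _ _

lemma SlowGrowth.congr {f g : ℂ → ℂ} (hf : SlowGrowth f)
    (h : ∀ s : ℂ, 1 < s.re → f s = g s) : SlowGrowth g := by
  intro ε hε ρ hρ
  obtain ⟨C, hC⟩ := hf ε hε ρ hρ
  exact ⟨C, fun s h1 h2 h3 => by rw [← h s h1]; exact hC s h1 h2 h3⟩

lemma SlowGrowth.add {f g : ℂ → ℂ} (hf : SlowGrowth f) (hg : SlowGrowth g) :
    SlowGrowth (fun s => f s + g s) := by
  intro ε hε ρ hρ
  obtain ⟨C, hC⟩ := hf ε hε ρ hρ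
  obtain ⟨D, hD⟩ := hg ε hε ρ hρ
  refine ⟨C + D, fun s h1 h2 h3 => (norm_add_le _ _).trans ?_⟩
  rw [add_mul]
  exact add_le_add (hC s h1 h2 h3) (hD s h1 h2 h3)

lemma SlowGrowth.mul {f g : ℂ → ℂ} (hf : SlowGrowth f) (hg : SlowGrowth g) :
    SlowGrowth (fun s => f s * g s) := by
  intro ε hε ρ hρ
  obtain ⟨C, hC0, hC⟩ := hf.exists_pos (half_pos hε) hρ
  obtain ⟨D, hD0, hD⟩ := hg.exists_pos (half_pos hε) hρ
  refine ⟨C * D, fun s h1 h2 h3 => ?_⟩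
  have hpos : 0 < 1 + |s.im| := by positivity
  calc ‖f s * g s‖ = ‖f s‖ * ‖g s‖ := norm_mul _ _
    _ ≤ (C * (1 + |s.im|) ^ (ε / 2)) * (D * (1 + |s.im|) ^ (ε / 2)) := by
        gcongr
        · exact hC s h1 h2 h3
        · exact hD s h1 h2 h3
    _ = C * D * ((1 + |s.im|) ^ (ε / 2) * (1 + |s.im|) ^ (ε / 2)) := by ring
    _ = C * D * (1 + |s.im|) ^ ε := by rw [← Real.rpow_add hpos, add_halves]

lemma SlowGrowth.of_bound {f : ℂ → ℂ} (B : ℝ) (h : ∀ s : ℂ, 1 < s.re → s.re ≤ 2 → ‖f s‖ ≤ B) :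
    SlowGrowth f := by
  intro ε hε ρ hρ
  refine ⟨max B 0, fun s h1 h2 _ => (h s h1 h2).trans ((le_max_left B 0).trans ?_)⟩
  exact le_mul_of_one_le_right (le_max_right _ _)
    (Real.one_le_rpow (by linarith [abs_nonneg s.im]) hε.le)

lemma SlowGrowth.zero : SlowGrowth (fun _ => 0) :=
  SlowGrowth.of_bound 0 fun _ _ _ => by simp

lemma SlowGrowth.const_mul {f : ℂ → ℂ} (hf : SlowGrowth f) (c : ℂ) :
    SlowGrowth (fun s => c * f s) :=
  (SlowGrowth.of_bound ‖c‖ fun _ _ _ => le_rfl : SlowGrowth fun _ => c).mul hf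

lemma SlowGrowth.sum {ι : Type*} (t : Finset ι) {f : ι → ℂ → ℂ}
    (hf : ∀ i ∈ t, SlowGrowth (f i)) : SlowGrowth (fun s => ∑ i ∈ t, f i s) := by
  classical
  induction t using Finset.induction_on with
  | empty => simpa using SlowGrowth.zero
  | insert a t ha ih =>
    simp only [Finset.sum_insert ha]
    exact (hf a (by simp)).add (ih fun i hi => hf i (by simp [hi]))

lemma DifferentiableOn.contDiffAt_of_one_lt_re {f : ℂ → ℂ}
    (hf : DifferentiableOn ℂ f {s | 1 < s.re}) {s : ℂ} (hs : 1 < s.re) {n : WithTop ℕ∞} :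
    ContDiffAt ℂ n f s :=
  (hf.analyticAt (isOpen_one_lt_re.mem_nhds hs)).contDiffAt

namespace SlowUpTo

variable {n : ℕ} {f g : ℂ → ℂ}

lemma congr (hf : SlowUpTo n f) (h : ∀ s : ℂ, 1 < s.re → f s = g s) : SlowUpTo n g := by
  refine ⟨hf.differentiableOn.congr fun s hs => (h s hs).symm, fun j hj =>
    (hf.slow j hj).congr fun s hs => ?_⟩
  refine Filter.EventuallyEq.iteratedDeriv_eq j ?_
  filter_upwards [isOpen_one_lt_re.mem_nhds hs] with w hw using h w hw

lemma mono {m : ℕ} (hf : SlowUpTo n f) (hmn : m ≤ n) : SlowUpTo m f :=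
  ⟨hf.differentiableOn, fun j hj => hf.slow j (hj.trans hmn)⟩

lemma add (hf : SlowUpTo n f) (hg : SlowUpTo n g) : SlowUpTo n (fun s => f s + g s) := by
  refine ⟨hf.differentiableOn.add hg.differentiableOn, fun j hj =>
    ((hf.slow j hj).add (hg.slow j hj)).congr fun s hs => ?_⟩
  exact (iteratedDeriv_fun_add (hf.differentiableOn.contDiffAt_of_one_lt_re hs)
    (hg.differentiableOn.contDiffAt_of_one_lt_re hs)).symm

lemma mul (hf : SlowUpTo n f) (hg : SlowUpTo n g) : SlowUpTo n (fun s => f s * g s) := by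
  refine ⟨hf.differentiableOn.mul hg.differentiableOn, fun j hj => ?_⟩
  have key : SlowGrowth (fun s => ∑ i ∈ Finset.range (j + 1),
      (j.choose i : ℂ) * iteratedDeriv i f s * iteratedDeriv (j - i) g s) := by
    refine SlowGrowth.sum _ fun i hi => ?_
    have hi' : i ≤ j := by simpa [Nat.lt_succ_iff] using hi
    exact ((hf.slow i (hi'.trans hj)).const_mul _).mul (hg.slow (j - i) (by omega))
  refine key.congr fun s hs => ?_
  exact (iteratedDeriv_fun_mul (hf.differentiableOn.contDiffAt_of_one_lt_re hs)
    (hg.differentiableOn.contDiffAt_of_one_lt_re hs)).symm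

lemma const (c : ℂ) : SlowUpTo n (fun _ => c) := by
  refine ⟨differentiableOn_const c, fun j _ => SlowGrowth.of_bound ‖c‖ fun s _ _ => ?_⟩
  rw [iteratedDeriv_const]
  split_ifs <;> simp

lemma const_mul (hf : SlowUpTo n f) (c : ℂ) : SlowUpTo n (fun s => c * f s) := (const c).mul hf

lemma sum {ι : Type*} (t : Finset ι) {f : ι → ℂ → ℂ} (hf : ∀ i ∈ t, SlowUpTo n (f i)) :
    SlowUpTo n (fun s => ∑ i ∈ t, f i s) := by
  classical
  induction t using Finset.induction_on with
  | empty => simpa using const 0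
  | insert a t ha ih =>
    simp only [Finset.sum_insert ha]
    exact (hf a (by simp)).add (ih fun i hi => hf i (by simp [hi]))

lemma deriv (hf : SlowUpTo (n + 1) f) : SlowUpTo n (deriv f) := by
  refine ⟨hf.differentiableOn.deriv isOpen_one_lt_re, fun j hj => ?_⟩
  rw [← iteratedDeriv_succ']
  exact hf.slow (j + 1) (by omega)

lemma of_deriv (hf : DifferentiableOn ℂ f {s | 1 < s.re}) (h0 : SlowGrowth f)
    (hg : SlowUpTo n g) (h : ∀ s : ℂ, 1 < s.re → _root_.deriv f s = g s) :
    SlowUpTo (n + 1) f := by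
  refine ⟨hf, fun j hj => ?_⟩
  rcases j with _ | j
  · simpa using h0
  · rw [iteratedDeriv_succ']
    exact (hg.congr fun s hs => (h s hs).symm).slow j (by omega)

lemma of_deriv_eq_mul {Φ : ℂ → ℂ} (hf : DifferentiableOn ℂ f {s | 1 < s.re}) (h0 : SlowGrowth f)
    (hΦ : SlowUpTo n Φ) (h : ∀ s : ℂ, 1 < s.re → _root_.deriv f s = f s * Φ s) :
    SlowUpTo n f := by
  induction n with
  | zero => exact ⟨hf, fun j hj => by obtain rfl : j = 0 := by omega
                                      simpa using h0⟩
  | succ n ih => exact of_deriv hf h0 ((ih (hΦ.mono n.le_succ)).mul (hΦ.mono n.le_succ)) h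

lemma inv (hf : SlowUpTo n f) (h0 : ∀ s : ℂ, 1 < s.re → f s ≠ 0)
    (hinv : SlowGrowth fun s => (f s)⁻¹) : SlowUpTo n (fun s => (f s)⁻¹) := by
  have hd : DifferentiableOn ℂ (fun s => (f s)⁻¹) {s | 1 < s.re} :=
    hf.differentiableOn.inv fun s hs => h0 s hs
  induction n with
  | zero => exact ⟨hd, fun j hj => by obtain rfl : j = 0 := by omega
                                      simpa using hinv⟩
  | succ n ih =>
    have ihn := ih (hf.mono n.le_succ)
    refine of_deriv hd hinv ((hf.deriv.mul (ihn.mul ihn)).const_mul (-1)) fun s hs => ?_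
    have hfd : DifferentiableAt ℂ f s :=
      hf.differentiableOn.differentiableAt (isOpen_one_lt_re.mem_nhds hs)
    have := h0 s hs
    have e := (hfd.hasDerivAt.inv this).deriv
    rw [show (fun s => (f s)⁻¹) = f⁻¹ from rfl, e]
    field_simp

end SlowUpTo

lemma isCompact_strip (ρ R : ℝ) :
    IsCompact {s : ℂ | 1 ≤ s.re ∧ s.re ≤ 2 ∧ ρ ≤ |s.im| ∧ |s.im| ≤ R} := by
  refine ((isCompact_Icc (a := (1 : ℝ)) (b := 2)).reProdIm
    (isCompact_Icc (a := -R) (b := R))).of_isClosed_subset ?_ ?_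
  · refine (isClosed_le continuous_const Complex.continuous_re).inter
      ((isClosed_le Complex.continuous_re continuous_const).inter
      ((isClosed_le continuous_const (Complex.continuous_im.abs)).inter
      (isClosed_le (Complex.continuous_im.abs) continuous_const)))
  · rintro s ⟨h1, h2, -, h4⟩
    exact ⟨⟨h1, h2⟩, abs_le.mp h4⟩

lemma exists_norm_le_strip {f : ℂ → ℂ} (hf : ContinuousOn f {1}ᶜ) {ρ : ℝ} (hρ : 0 < ρ) (R : ℝ) :
    ∃ C, 0 < C ∧ ∀ s : ℂ, 1 ≤ s.re → s.re ≤ 2 → ρ ≤ |s.im| → |s.im| ≤ R → ‖f s‖ ≤ C := by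
  obtain ⟨C, hC⟩ := (isCompact_strip ρ R).exists_bound_of_continuousOn (f := f) (hf.mono (by
    rintro s ⟨-, -, h, -⟩ rfl
    simp at h
    linarith))
  exact ⟨max C 1, by positivity, fun s h1 h2 h3 h4 =>
    (hC s ⟨h1, h2, h3, h4⟩).trans (le_max_left _ _)⟩

section

variable {q : ℕ} [NeZero q] (χ : DirichletCharacter ℂ q)

lemma differentiableOn_LFunction_compl_one : DifferentiableOn ℂ χ.LFunction {1}ᶜ :=
  fun s hs => (DirichletCharacter.differentiableAt_LFunction χ s (Or.inl hs)).differentiableWithinAt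

lemma slowUpTo_LFunction (n : ℕ) : SlowUpTo n χ.LFunction := by
  have hd := differentiableOn_LFunction_compl_one χ
  refine ⟨hd.mono fun s hs => ?_, fun j _ ε hε ρ hρ => ?_⟩
  · rintro rfl
    simp at hs
  set δ : ℝ := min (ε / 2) (1 / 4) with hδ
  have hδ0 : 0 < δ := by positivity
  have hδ1 : δ ≤ 1 / 4 := min_le_right _ _
  have hδ2 : 2 * δ ≤ ε := by linarith [min_le_left (ε / 2) (1 / 4 : ℝ)]
  obtain ⟨C, hC0, hC⟩ := exists_norm_LFunction_le_rpow χ hδ0 (by linarith)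
  obtain ⟨D, hD0, hD⟩ := exists_norm_le_strip (f := iteratedDeriv j χ.LFunction)
    (fun s hs => by
      have ha : AnalyticAt ℂ χ.LFunction s := hd.analyticAt (isOpen_compl_singleton.mem_nhds hs)
      rw [iteratedDeriv_eq_iterate]
      exact (AnalyticAt.iterated_deriv ha j).continuousAt.continuousWithinAt) hρ 2
  refine ⟨max (j.factorial * C / δ ^ j) D, fun s h1 h2 h3 => ?_⟩
  have hT : 1 ≤ (1 + |s.im|) ^ ε := Real.one_le_rpow (by linarith [abs_nonneg s.im]) hε.le
  rcases le_total |s.im| 2 with h | h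
  · calc _ ≤ D := hD s h1.le h2 h3 h
      _ ≤ max (j.factorial * C / δ ^ j) D := le_max_right _ _
      _ ≤ _ := le_mul_of_one_le_right (hD0.le.trans (le_max_right _ _)) hT
  · have hball : ∀ w ∈ Metric.closedBall s δ, 1 - δ ≤ w.re ∧ w.re ≤ 4 ∧ 1 ≤ |w.im| ∧
        |w.im| ≤ 1 + |s.im| := by
      intro w hw
      rw [Metric.mem_closedBall, dist_eq_norm] at hw
      have hre := (Complex.abs_re_le_norm (w - s)).trans hw
      have him := (Complex.abs_im_le_norm (w - s)).trans hw
      rw [Complex.sub_re, abs_le] at hre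
      rw [Complex.sub_im] at him
      have h5 := abs_sub_abs_le_abs_sub w.im s.im
      have h6 := abs_sub_abs_le_abs_sub s.im w.im
      rw [abs_sub_comm] at h6
      refine ⟨by linarith, by linarith, by linarith, by linarith⟩
    have hdc : DiffContOnCl ℂ χ.LFunction (Metric.ball s δ) := by
      refine DifferentiableOn.diffContOnCl ?_
      rw [closure_ball _ hδ0.ne']
      refine hd.mono fun w hw => ?_
      rintro rfl
      have := (hball 1 hw).2.2.1
      simp at this
      linarith
    have := Complex.norm_iteratedDeriv_le_of_forall_mem_sphere_norm_le (C := C * (1 + |s.im|) ^ ε)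
      j hδ0 hdc fun w hw => by
        obtain ⟨h5, h6, h7, h8⟩ := hball w (Metric.sphere_subset_closedBall hw)
        refine (hC w h5 h6 h7).trans ?_
        gcongr
        calc |w.im| ^ (2 * δ) ≤ |w.im| ^ ε := Real.rpow_le_rpow_of_exponent_le h7 hδ2
          _ ≤ _ := by gcongr
    calc _ ≤ _ := this
      _ = j.factorial * C / δ ^ j * (1 + |s.im|) ^ ε := by ring
      _ ≤ _ := by
        gcongr
        exact le_max_left _ _

lemma exists_norm_LFunctionTrivChar_le : ∃ C, 0 < C ∧ ∀ x : ℝ, 0 < x → x ≤ 1 →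
    ‖DirichletCharacter.LFunctionTrivChar q (1 + x)‖ ≤ C / x := by
  obtain ⟨C, hC⟩ := (isCompact_Icc (a := (0 : ℝ)) (b := 1)).exists_bound_of_continuousOn
    (f := fun x : ℝ => DirichletCharacter.LFunctionTrivChar₁ q (1 + x))
    ((DirichletCharacter.differentiable_LFunctionTrivChar₁ q).continuous.comp
      (by fun_prop)).continuousOn
  refine ⟨max C 1, by positivity, fun x hx hx1 => ?_⟩
  have h := hC x ⟨hx.le, hx1⟩
  have hx' : (1 : ℂ) + x ≠ 1 := by simp [hx.ne']
  rw [DirichletCharacter.LFunctionTrivChar₁, Function.update_of_ne hx', norm_mul,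
    add_sub_cancel_left, Complex.norm_real, Real.norm_of_nonneg hx.le] at h
  rw [le_div_iff₀ hx, mul_comm]
  exact h.trans (le_max_left _ _)

lemma le_of_one_le_mul {C0 C1 C2 c U x a : ℝ} (hC0 : 0 < C0) (hC1 : 0 < C1) (_ : 0 < C2)
    (hc : 0 < c) (hcle : c * (16 * C2 ^ 4 * C0 ^ 3 * C1) ≤ 1) (hU : 1 ≤ U) (ha : 0 ≤ a)
    (hx : c / U ^ 5 ≤ x) (h : 1 ≤ (C0 / x) ^ 3 * a ^ 4 * (C1 * U)) : 2 * C2 * c / U ^ 4 ≤ a := by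
  have hU0 : 0 < U := by linarith
  have hx0 : 0 < x := lt_of_lt_of_le (by positivity) hx
  have h1 : 1 ≤ (C0 / (c / U ^ 5)) ^ 3 * a ^ 4 * (C1 * U) := h.trans (by gcongr)
  have h2 : c ^ 3 ≤ C0 ^ 3 * C1 * (a * U ^ 4) ^ 4 := by
    have e : (C0 / (c / U ^ 5)) ^ 3 * a ^ 4 * (C1 * U) = C0 ^ 3 * C1 * (a * U ^ 4) ^ 4 / c ^ 3 := by
      field_simp
    rw [e, le_div_iff₀ (by positivity), one_mul] at h1
    exact h1
  rw [div_le_iff₀ (by positivity)]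
  refine le_of_pow_le_pow_left₀ (n := 4) (by norm_num) (by positivity) ?_
  have h3 : C0 ^ 3 * C1 * (2 * C2 * c) ^ 4 ≤ C0 ^ 3 * C1 * (a * U ^ 4) ^ 4 := by
    calc _ = c * (16 * C2 ^ 4 * C0 ^ 3 * C1) * c ^ 3 := by ring
      _ ≤ 1 * c ^ 3 := by gcongr
      _ ≤ _ := by rw [one_mul]; exact h2
  exact le_of_mul_le_mul_left h3 (by positivity)

lemma exists_le_norm_LFunction {ε : ℝ} (hε : 0 < ε) : ∃ c, 0 < c ∧ ∀ s : ℂ, 1 < s.re → s.re ≤ 2 →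
    1 ≤ |s.im| → c / (1 + |s.im|) ^ ε ≤ ‖χ.LFunction s‖ := by
  set δ := ε / 4 with hδ
  have hδ0 : 0 < δ := by positivity
  obtain ⟨C0, hC0, h0⟩ := exists_norm_LFunctionTrivChar_le (q := q)
  obtain ⟨C1, hC1, h1⟩ := ((slowUpTo_LFunction (χ ^ 2) 0).slow 0 le_rfl).exists_pos hδ0 one_pos
  obtain ⟨C2, hC2, h2⟩ := ((slowUpTo_LFunction χ 1).slow 1 le_rfl).exists_pos hδ0 one_pos
  simp only [iteratedDeriv_zero] at h1
  simp only [iteratedDeriv_one] at h2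
  set D1 := C1 * 2 ^ δ with hD1
  have hD10 : 0 < D1 := by positivity
  set c := min 1 (16 * C2 ^ 4 * C0 ^ 3 * D1)⁻¹ with hc
  have hc0 : 0 < c := by positivity
  have hc1 : c ≤ 1 := min_le_left _ _
  have hcle : c * (16 * C2 ^ 4 * C0 ^ 3 * D1) ≤ 1 := by
    rw [← le_div_iff₀ (by positivity), one_div]
    exact min_le_right _ _
  refine ⟨C2 * c, by positivity, fun s hs1 hs2 ht => ?_⟩
  set t := s.im with ht'
  set U := (1 + |t|) ^ δ with hU
  have hTpos : 0 < 1 + |t| := by positivity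
  have hU1 : 1 ≤ U := Real.one_le_rpow (by linarith) hδ0.le
  have hU0 : 0 < U := by linarith
  have hUε : (1 + |t|) ^ ε = U ^ 4 := by
    rw [hU, ← Real.rpow_natCast, ← Real.rpow_mul hTpos.le]
    congr 1
    push_cast
    ring
  have key : ∀ x : ℝ, x ≤ 1 → c / U ^ 5 ≤ x →
      2 * C2 * c / U ^ 4 ≤ ‖χ.LFunction (1 + x + Complex.I * t)‖ := by
    intro x hx1 hx
    have hx0 : 0 < x := lt_of_lt_of_le (by positivity) hx
    refine le_of_one_le_mul hC0 hD10 hC2 hc0 hcle hU1 (norm_nonneg _) hx ?_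
    refine (DirichletCharacter.norm_LFunction_product_ge_one χ hx0 t).le.trans ?_
    rw [norm_mul, norm_mul, norm_pow, norm_pow]
    have hL2 : ‖(χ ^ 2).LFunction (1 + x + 2 * Complex.I * t)‖ ≤ D1 * U := by
      have him : (1 + x + 2 * Complex.I * t : ℂ).im = 2 * t := by simp
      have hre : (1 + x + 2 * Complex.I * t : ℂ).re = 1 + x := by simp
      have habs : |2 * t| = 2 * |t| := by rw [abs_mul, abs_two]
      refine (h1 _ (by rw [hre]; linarith) (by rw [hre]; linarith)
        (by rw [him, habs]; linarith)).trans ?_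
      rw [him, habs, hD1, hU, mul_assoc, ← Real.mul_rpow (by norm_num) hTpos.le]
      gcongr
      linarith
    gcongr
    exact h0 x hx0 hx1
  have hη1 : c / U ^ 5 ≤ 1 := (div_le_one (by positivity)).2 (hc1.trans (one_le_pow₀ hU1))
  rw [hUε]
  have hs : s = 1 + (s.re - 1 : ℝ) + Complex.I * t := by
    apply Complex.ext <;> simp [ht']
  rcases le_total (c / U ^ 5) (s.re - 1) with h | h
  · have := key (s.re - 1) (by linarith) h
    rw [← hs] at this
    refine le_trans ?_ this
    gcongr
    linarith
  · obtain ⟨η, hη⟩ : ∃ η : ℝ, η = c / U ^ 5 := ⟨_, rfl⟩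
    set w : ℂ := 1 + (η : ℝ) + Complex.I * t with hw
    have hwre : w.re = 1 + c / U ^ 5 := by rw [← hη]; simp [hw]
    have hwim : w.im = t := by simp [hw]
    have hk := key _ hη1 le_rfl
    rw [← hη] at hk
    set K : Set ℂ := {v | 1 < v.re ∧ v.re ≤ 2 ∧ v.im = t} with hK
    have hconv : Convex ℝ K :=
      (convex_halfSpace_re_gt 1).inter ((convex_halfSpace_re_le 2).inter
        (convex_hyperplane (𝕜 := ℝ) Complex.imLm.isLinear t))
    have hmv := hconv.norm_image_sub_le_of_norm_deriv_le (𝕜 := ℂ) (f := χ.LFunction)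
      (C := C2 * U) (x := s) (y := w)
      (fun v hv => DirichletCharacter.differentiableAt_LFunction χ v (Or.inl (by
        rintro rfl
        simpa using hv.1)))
      (fun v hv => by
        have := h2 v hv.1 hv.2.1 (by rw [hv.2.2]; exact ht)
        rwa [hv.2.2] at this)
      ⟨hs1, hs2, rfl⟩ ⟨by rw [hwre]; linarith [div_pos hc0 (pow_pos hU0 5)], by
        rw [hwre]; linarith, hwim⟩
    have hdist : ‖w - s‖ ≤ c / U ^ 5 := by
      have : w - s = ((1 + η - s.re : ℝ) : ℂ) := by
        apply Complex.ext <;> simp [hw, ht']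
      rw [this, Complex.norm_real, Real.norm_eq_abs, abs_le, hη]
      constructor <;> linarith
    have h5 : ‖χ.LFunction w - χ.LFunction s‖ ≤ C2 * c / U ^ 4 := by
      refine hmv.trans ?_
      calc C2 * U * ‖w - s‖ ≤ C2 * U * (c / U ^ 5) := by gcongr
        _ = _ := by field_simp
    have h6 := norm_sub_norm_le (χ.LFunction w) (χ.LFunction s)
    have e : 2 * C2 * c / U ^ 4 = C2 * c / U ^ 4 + C2 * c / U ^ 4 := by ring
    linarith

lemma slowGrowth_inv_LFunction : SlowGrowth fun s => (χ.LFunction s)⁻¹ := by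
  intro ε hε ρ hρ
  obtain ⟨c, hc0, hc⟩ := exists_le_norm_LFunction χ hε
  obtain ⟨D, hD⟩ := (isCompact_strip ρ 1).exists_bound_of_continuousOn
    (f := fun s => (χ.LFunction s)⁻¹) (by
      rintro s ⟨h1, -, h, -⟩
      have hs1 : s ≠ 1 := by
        rintro rfl
        simp at h
        linarith
      exact ((DirichletCharacter.differentiableAt_LFunction χ s (Or.inl hs1)).continuousAt.inv₀
        (DirichletCharacter.LFunction_ne_zero_of_one_le_re χ (Or.inr hs1)
          h1)).continuousWithinAt)
  refine ⟨max D (1 / c), fun s h1 h2 h3 => ?_⟩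
  have hTpos : 0 < (1 + |s.im|) ^ ε := by positivity
  have hT : 1 ≤ (1 + |s.im|) ^ ε := Real.one_le_rpow (by linarith [abs_nonneg s.im]) hε.le
  have hm : 0 ≤ max D (1 / c) := le_trans (by positivity) (le_max_right D (1 / c))
  rcases le_total |s.im| 1 with h | h
  · exact ((hD s ⟨h1.le, h2, h3, h⟩).trans (le_max_left _ _)).trans (le_mul_of_one_le_right hm hT)
  · have := hc s h1 h2 h
    rw [norm_inv]
    calc ‖χ.LFunction s‖⁻¹ ≤ (c / (1 + |s.im|) ^ ε)⁻¹ := by gcongr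
      _ = 1 / c * (1 + |s.im|) ^ ε := by field_simp
      _ ≤ _ := by
        gcongr
        exact le_max_right _ _

lemma LFunction_ne_zero_of_one_lt_re {s : ℂ} (hs : 1 < s.re) : χ.LFunction s ≠ 0 :=
  DirichletCharacter.LFunction_ne_zero_of_one_le_re χ (Or.inr (by rintro rfl; simp at hs)) hs.le

lemma slowUpTo_logDeriv_LFunction (n : ℕ) :
    SlowUpTo n fun s => deriv χ.LFunction s / χ.LFunction s := by
  have h := (slowUpTo_LFunction χ (n + 1)).deriv.mul ((slowUpTo_LFunction χ n).inv
    (fun s hs => LFunction_ne_zero_of_one_lt_re χ hs) (slowGrowth_inv_LFunction χ))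
  simpa only [div_eq_mul_inv] using h

end

section Characters

variable {q : ℕ} [Fact q.Prime]

/-- The characters trivial on the `m`-th roots of unity. -/
def TrivialOnRoots (m : ℕ) (χ : DirichletCharacter ℂ q) : Prop :=
  ∀ a : ZMod q, a ^ m = 1 → χ a = 1

open Classical in
lemma sum_trivialOnRoots_eq_zero (m : ℕ) {a : ZMod q} (ha : a ^ m ≠ 1) :
    ∑ χ : DirichletCharacter ℂ q with TrivialOnRoots m χ, χ a = 0 := by
  by_cases ha0 : a = 0
  · subst ha0
    exact Finset.sum_eq_zero fun χ _ => MulChar.map_zero χ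
  obtain ⟨ψ, hψ⟩ := DirichletCharacter.exists_apply_ne_one_of_hasEnoughRootsOfUnity ℂ ha
  have hmem : TrivialOnRoots m (ψ ^ m) := by
    intro b hb
    have hb0 : IsUnit b := by
      rcases Nat.eq_zero_or_pos m with rfl | hm
      · simp at ha
      · exact IsUnit.of_pow_eq_one hb hm.ne'
    obtain ⟨u, rfl⟩ := hb0
    rw [MulChar.pow_apply_coe, ← map_pow, hb, map_one]
  have hval : (ψ ^ m) a = ψ (a ^ m) := by
    have hu : IsUnit a := isUnit_iff_ne_zero.mpr ha0
    obtain ⟨u, rfl⟩ := hu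
    rw [MulChar.pow_apply_coe, map_pow]
  have hbij : ∑ χ : DirichletCharacter ℂ q with TrivialOnRoots m χ, (ψ ^ m * χ) a =
      ∑ χ : DirichletCharacter ℂ q with TrivialOnRoots m χ, χ a := by
    refine Finset.sum_bij (fun χ _ => ψ ^ m * χ) ?_ ?_ ?_ ?_
    · intro χ hχ
      simp only [Finset.mem_filter, Finset.mem_univ, true_and] at hχ ⊢
      intro b hb
      rw [MulChar.mul_apply, hmem b hb, hχ b hb, one_mul]
    · intro χ _ χ' _ h
      exact mul_left_cancel h
    · intro χ hχ
      simp only [Finset.mem_filter, Finset.mem_univ, true_and] at hχ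
      refine ⟨(ψ ^ m)⁻¹ * χ, ?_, by simp⟩
      simp only [Finset.mem_filter, Finset.mem_univ, true_and]
      intro b hb
      have h1 := hmem b hb
      rw [MulChar.mul_apply, MulChar.inv_apply_eq_inv', h1, hχ b hb]
      simp
    · intro χ _
      rfl
  simp only [MulChar.mul_apply, ← Finset.mul_sum, hval] at hbij
  have : (ψ (a ^ m) - 1) * ∑ χ : DirichletCharacter ℂ q with TrivialOnRoots m χ, χ a = 0 := by
    rw [sub_mul, hbij]
    ring
  exact (mul_eq_zero.mp this).resolve_left (sub_ne_zero.mpr hψ)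

lemma card_units_pow_eq_one {m : ℕ} (hm : m ∣ q - 1) (hm0 : m ≠ 0) :
    (Finset.univ.filter fun a : ZMod q => a ^ m = 1).card = m := by
  classical
  have h := IsCyclic.card_powMonoidHom_ker (G := (ZMod q)ˣ) m
  rw [Nat.card_eq_fintype_card (α := (ZMod q)ˣ), ZMod.card_units, Nat.gcd_eq_right hm] at h
  refine Eq.trans ?_ h
  rw [← Fintype.card_subtype, Nat.card_eq_fintype_card]
  refine Fintype.card_congr ⟨fun a => ⟨(IsUnit.of_pow_eq_one a.2 hm0).unit, ?_⟩,
    fun u => ⟨((u : (ZMod q)ˣ) : ZMod q), ?_⟩, fun a => ?_, fun u => ?_⟩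
  · rw [MonoidHom.mem_ker, powMonoidHom_apply]
    ext
    simp [a.2]
  · have := u.2
    rw [MonoidHom.mem_ker, powMonoidHom_apply] at this
    rw [← Units.val_pow_eq_pow_val, this, Units.val_one]
  · simp
  · ext
    simp

open Classical in
lemma card_trivialOnRoots {m : ℕ} (hm : m ∣ q - 1) :
    ((Finset.univ.filter fun χ : DirichletCharacter ℂ q => TrivialOnRoots m χ).card : ℂ) =
      ((q - 1) / m : ℕ) := by
  have hq : 1 < q := (Fact.out : q.Prime).one_lt
  have hm0 : m ≠ 0 := by
    rintro rfl
    have := Nat.eq_zero_of_zero_dvd hm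
    omega
  have h1 : ∑ a : ZMod q, ∑ χ : DirichletCharacter ℂ q with TrivialOnRoots m χ, χ a =
      m * ((Finset.univ.filter fun χ : DirichletCharacter ℂ q => TrivialOnRoots m χ).card : ℂ) := by
    rw [← Finset.sum_filter_add_sum_filter_not Finset.univ (fun a : ZMod q => a ^ m = 1)]
    rw [Finset.sum_eq_zero (s := Finset.univ.filter fun a : ZMod q => ¬ a ^ m = 1)
      (fun a ha => sum_trivialOnRoots_eq_zero m (by simpa using ha)), add_zero]
    rw [Finset.sum_congr rfl (g := fun _ =>
      ((Finset.univ.filter fun χ : DirichletCharacter ℂ q => TrivialOnRoots m χ).card : ℂ))]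
    · rw [Finset.sum_const, card_units_pow_eq_one hm hm0, nsmul_eq_mul]
    · intro a ha
      rw [Finset.sum_congr rfl (g := fun _ => (1 : ℂ))]
      · simp
      · intro χ hχ
        simp only [Finset.mem_filter, Finset.mem_univ, true_and] at ha hχ
        exact hχ a ha
  have h2 : ∑ a : ZMod q, ∑ χ : DirichletCharacter ℂ q with TrivialOnRoots m χ, χ a =
      ((q - 1 : ℕ) : ℂ) := by
    rw [Finset.sum_comm, Finset.sum_eq_single_of_mem 1]
    · rw [MulChar.sum_one_eq_card_units, ZMod.card_units]
    · simp only [Finset.mem_filter, Finset.mem_univ, true_and]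
      intro a ha
      exact MulChar.one_apply (IsUnit.of_pow_eq_one ha hm0)
    · intro χ _ hχ
      exact MulChar.sum_eq_zero_of_ne_one hχ
  have hm' : (m : ℂ) ≠ 0 := by exact_mod_cast hm0
  rw [Nat.cast_div hm hm', ← h2, h1]
  field_simp

open Classical in
lemma sum_trivialOnRoots {m : ℕ} (hm : m ∣ q - 1) (a : ZMod q) :
    ∑ χ : DirichletCharacter ℂ q with TrivialOnRoots m χ, χ a =
      if a ^ m = 1 then (((q - 1) / m : ℕ) : ℂ) else 0 := by
  split_ifs with h
  · rw [← card_trivialOnRoots hm, Finset.sum_congr rfl (g := fun _ => (1 : ℂ))]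
    · simp
    · intro χ hχ
      simp only [Finset.mem_filter, Finset.mem_univ, true_and] at hχ
      exact hχ a h
  · exact sum_trivialOnRoots_eq_zero m h

open Classical in
/-- The exponent with which `L(s, χ)` occurs in the generating Dirichlet series. -/
noncomputable def charExponent (r : ℕ) (χ : DirichletCharacter ℂ q) : ℝ :=
  (if χ = 1 then 1 else 0) - 2 / ((q - 1) / r : ℕ) * (if TrivialOnRoots (2 * r) χ then 1 else 0)
    + 1 / ((q - 1) / r : ℕ) * (if TrivialOnRoots r χ then 1 else 0)

lemma sum_charExponent_mul (r : ℕ) (f : DirichletCharacter ℂ q → ℂ) :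
    ∑ χ, (charExponent r χ : ℂ) * f χ = f 1
      - 2 / ((q - 1) / r : ℕ) * ∑ᶠ χ ∈ {χ | TrivialOnRoots (2 * r) χ}, f χ
      + 1 / ((q - 1) / r : ℕ) * ∑ᶠ χ ∈ {χ | TrivialOnRoots r χ}, f χ := by
  classical
  have e : ∀ m : ℕ, ∑ᶠ χ ∈ {χ : DirichletCharacter ℂ q | TrivialOnRoots m χ}, f χ =
      ∑ χ : DirichletCharacter ℂ q, (if TrivialOnRoots m χ then 1 else 0) * f χ := by
    intro m
    rw [finsum_mem_eq_finite_toFinset_sum _ (Set.toFinite _)]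
    simp only [ite_mul, one_mul, zero_mul]
    rw [← Finset.sum_filter]
    congr 1
    ext
    simp
  rw [e, e, Finset.mul_sum, Finset.mul_sum]
  have : f 1 = ∑ χ : DirichletCharacter ℂ q, (if χ = 1 then 1 else 0) * f χ := by simp
  rw [this, ← Finset.sum_sub_distrib, ← Finset.sum_add_distrib]
  refine Finset.sum_congr rfl fun χ _ => ?_
  rw [charExponent]
  push_cast
  split_ifs <;> push_cast <;> ring

lemma finsum_trivialOnRoots {m : ℕ} (hm : m ∣ q - 1) (a : ZMod q) :
    ∑ᶠ χ ∈ {χ : DirichletCharacter ℂ q | TrivialOnRoots m χ}, χ a =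
      if a ^ m = 1 then (((q - 1) / m : ℕ) : ℂ) else 0 := by
  classical
  rw [← sum_trivialOnRoots hm a, finsum_mem_eq_finite_toFinset_sum _ (Set.toFinite _)]
  congr 1
  ext
  simp

end Characters

/-- The indicator function of `q ∤ σ_k(n)`. -/
noncomputable def sigmaIndicator (q k n : ℕ) : ℂ := if q ∣ sigmak k n then 0 else 1

lemma norm_sigmaIndicator_le (q k n : ℕ) : ‖sigmaIndicator q k n‖ ≤ 1 := by
  rw [sigmaIndicator]
  split_ifs <;> simp

lemma hasSum_not_dvd_succ_mul_pow {g : ℕ} (hg : 2 ≤ g) {X : ℂ} (hX : ‖X‖ < 1) :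
    HasSum (fun e : ℕ => (if g ∣ e + 1 then 0 else 1) * X ^ e)
      ((1 - X ^ (g - 1)) / ((1 - X) * (1 - X ^ g))) := by
  have h1 : HasSum (fun e : ℕ => X ^ e) (1 - X)⁻¹ := hasSum_geometric_of_norm_lt_one hX
  have hXg : ‖X ^ g‖ < 1 := by
    rw [norm_pow]
    exact pow_lt_one₀ (norm_nonneg _) hX (by omega)
  have h2 : HasSum (fun e : ℕ => if g ∣ e + 1 then X ^ e else 0) (X ^ (g - 1) * (1 - X ^ g)⁻¹) := by
    have h3 := (hasSum_geometric_of_norm_lt_one hXg).mul_left (X ^ (g - 1))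
    have hinj : Function.Injective fun j : ℕ => g - 1 + g * j := by
      intro a b hab
      have : g * a = g * b := by simpa using hab
      exact Nat.eq_of_mul_eq_mul_left (by omega) this
    rw [← hinj.hasSum_iff]
    · have e : ((fun e : ℕ => if g ∣ e + 1 then X ^ e else 0) ∘ fun j : ℕ => g - 1 + g * j) =
          fun j => X ^ (g - 1) * (X ^ g) ^ j := by
        ext j
        have : g ∣ g - 1 + g * j + 1 := ⟨j + 1, by
          rw [mul_add, mul_one]
          omega⟩
        simp only [Function.comp_apply, this, if_true]
        rw [pow_add, pow_mul]
      rw [e]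
      exact h3
    · intro e he
      rw [if_neg]
      rintro ⟨c, hc⟩
      rcases c with _ | c
      · omega
      · exact he ⟨c, by
          simp only
          rw [mul_add, mul_one] at hc
          omega⟩
  have hne1 : 1 - X ≠ 0 := by
    intro h
    rw [← sub_eq_zero.mp h] at hX
    simp at hX
  have hne2 : 1 - X ^ g ≠ 0 := by
    intro h
    rw [← sub_eq_zero.mp h] at hXg
    simp at hXg
  have e1 : (fun e : ℕ => (if g ∣ e + 1 then 0 else 1) * X ^ e) =
      fun e => X ^ e - if g ∣ e + 1 then X ^ e else 0 := by
    ext e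
    split_ifs <;> simp
  have e2 : (1 - X ^ (g - 1)) / ((1 - X) * (1 - X ^ g)) =
      (1 - X)⁻¹ - X ^ (g - 1) * (1 - X ^ g)⁻¹ := by
    have : X ^ g = X ^ (g - 1) * X := by
      rw [← pow_succ]
      congr 1
      omega
    field_simp
    rw [this]
    ring
  rw [e1, e2]
  exact h1.sub h2

section Arithmetic

variable {q : ℕ} [Fact q.Prime]

lemma coe_ne_zero_of_prime_ne {p : ℕ} (hp : p.Prime) (hpq : p ≠ q) : (p : ZMod q) ≠ 0 := by
  rw [Ne, ZMod.natCast_eq_zero_iff]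
  exact fun h => hpq ((Nat.prime_dvd_prime_iff_eq Fact.out hp).mp h).symm

lemma gp_gcd_eq_orderOf {k p : ℕ} (hk : k ≠ 0) (hp : (p : ZMod q) ≠ 0) :
    gp q (Nat.gcd k (q - 1)) p = orderOf ((p : ZMod q) ^ k) := by
  have hdvd : orderOf (p : ZMod q) ∣ q - 1 :=
    orderOf_dvd_of_pow_eq_one (ZMod.pow_card_sub_one_eq_one hp)
  have hq : q - 1 ≠ 0 := by have := (Fact.out : q.Prime).one_lt; omega
  rw [gp, orderOf_pow' _ hk, orderOf_pow' _ (Nat.gcd_ne_zero_left hk), Nat.gcd_comm k,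
    ← Nat.gcd_assoc,
    Nat.gcd_eq_left hdvd]

lemma gp_pos {m p : ℕ} (hp : (p : ZMod q) ≠ 0) : 0 < gp q m p := by
  have : IsUnit ((p : ZMod q) ^ m) := (isUnit_iff_ne_zero.mpr hp).pow m
  obtain ⟨u, hu⟩ := this
  rw [gp, ← hu, orderOf_units]
  exact orderOf_pos u

/-- The period in `e` of the condition `q ∣ σ_k(p ^ e)`, expressed through `r = gcd(k, q - 1)`. -/
noncomputable def period (q r p : ℕ) : ℕ := if gp q r p = 1 then q else gp q r p

lemma two_le_period {r p : ℕ} (hp : (p : ZMod q) ≠ 0) : 2 ≤ period q r p := by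
  have := gp_pos (m := r) hp
  rw [period]
  split_ifs with h
  · exact (Fact.out : q.Prime).two_le
  · omega

lemma geom_sum_eq_zero_iff {x : ZMod q} (n : ℕ) :
    ∑ i ∈ Finset.range n, x ^ i = 0 ↔ (if orderOf x = 1 then q else orderOf x) ∣ n := by
  split_ifs with h
  · rw [orderOf_eq_one_iff] at h
    subst h
    simp [ZMod.natCast_eq_zero_iff]
  · rw [orderOf_eq_one_iff] at h
    rw [orderOf_dvd_iff_pow_eq_one, ← sub_eq_zero (a := x ^ n), ← geom_sum_mul, mul_eq_zero,
      or_iff_left (sub_ne_zero.mpr h)]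

lemma dvd_sigmak_prime_pow_iff {k p : ℕ} (hk : k ≠ 0) (hp : p.Prime) (hpq : p ≠ q) (e : ℕ) :
    q ∣ sigmak k (p ^ e) ↔ period q (Nat.gcd k (q - 1)) p ∣ e + 1 := by
  have hp0 := coe_ne_zero_of_prime_ne hp hpq
  rw [period, gp_gcd_eq_orderOf hk hp0, ← geom_sum_eq_zero_iff, ← ZMod.natCast_eq_zero_iff, sigmak,
    Nat.sum_divisors_prime_pow hp]
  push_cast
  simp only [← pow_mul, mul_comm k]

lemma not_dvd_sigmak_self_pow {k : ℕ} (hk : k ≠ 0) (e : ℕ) : ¬ q ∣ sigmak k (q ^ e) := by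
  rw [sigmak, Nat.sum_divisors_prime_pow Fact.out, ← ZMod.natCast_eq_zero_iff,
    Finset.sum_range_succ']
  push_cast
  simp [hk]

lemma sigmak_eq_sigma (k n : ℕ) : sigmak k n = ArithmeticFunction.sigma k n := by
  rw [sigmak, ArithmeticFunction.sigma_apply]

lemma sigmaIndicator_one (k : ℕ) : sigmaIndicator q k 1 = 1 := by
  have := (Fact.out : q.Prime).one_lt.ne'
  simp [sigmaIndicator, sigmak, this]

lemma sigmaIndicator_mul (k : ℕ) {m n : ℕ} (h : m.Coprime n) :
    sigmaIndicator q k (m * n) = sigmaIndicator q k m * sigmaIndicator q k n := by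
  simp only [sigmaIndicator, sigmak_eq_sigma,
    ArithmeticFunction.isMultiplicative_sigma.map_mul_of_coprime h,
    (Fact.out : q.Prime).dvd_mul]
  split_ifs <;> simp_all

end Arithmetic

lemma one_sub_mem_slitPlane {Y : ℂ} (hY : ‖Y‖ < 1) : 1 - Y ∈ Complex.slitPlane := by
  rw [sub_eq_add_neg]
  exact Complex.mem_slitPlane_of_norm_lt_one (by rwa [norm_neg])

lemma norm_log_one_sub_add_le {Y : ℂ} (hY : ‖Y‖ ≤ 2 / 3) :
    ‖Complex.log (1 - Y) + Y‖ ≤ 3 / 2 * ‖Y‖ ^ 2 := by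
  have h := Complex.norm_log_one_add_sub_self_le (z := -Y) (by rw [norm_neg]; linarith)
  rw [norm_neg, sub_neg_eq_add, ← sub_eq_add_neg] at h
  refine h.trans ?_
  have : (1 - ‖Y‖)⁻¹ ≤ 3 := by
    rw [inv_le_comm₀ (by linarith) (by norm_num)]
    linarith
  nlinarith [sq_nonneg ‖Y‖]

lemma norm_char_mul_le {q : ℕ} (χ : DirichletCharacter ℂ q) (a : ZMod q) (X : ℂ) :
    ‖χ a * X‖ ≤ ‖X‖ := by
  rw [norm_mul]
  exact mul_le_of_le_one_left (norm_nonneg _) (χ.norm_le_one _)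

section EulerFactor

variable (q r p : ℕ)

/-- The logarithm of the Euler factor at `p`, as a function of `X = p ^ (-s)`. -/
noncomputable def logEulerFactor (X : ℂ) : ℂ :=
  if p = q then -Complex.log (1 - X) else
    -Complex.log (1 - X) - Complex.log (1 - X ^ period q r p)
      + Complex.log (1 - X ^ (period q r p - 1))

variable [Fact q.Prime]

/-- The logarithm of the quotient of the Euler factor at `p` by the Euler factor of
`∏ L(s, χ) ^ charExponent r χ`, as a function of `X = p ^ (-s)`. -/
noncomputable def logCorrection (X : ℂ) : ℂ :=
  logEulerFactor q r p X +
    ∑ χ : DirichletCharacter ℂ q, (charExponent r χ : ℂ) * Complex.log (1 - χ p * X)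

variable {q r p}

lemma exp_logEulerFactor {k : ℕ} (hk : k ≠ 0) (hp : p.Prime) {X : ℂ} (hX : ‖X‖ < 1) :
    Complex.exp (logEulerFactor q (Nat.gcd k (q - 1)) p X) =
      ∑' e : ℕ, sigmaIndicator q k (p ^ e) * X ^ e := by
  have hne : ∀ n : ℕ, n ≠ 0 → 1 - X ^ n ≠ 0 := by
    intro n hn
    refine Complex.slitPlane_ne_zero (one_sub_mem_slitPlane ?_)
    rw [norm_pow]
    exact pow_lt_one₀ (norm_nonneg _) hX hn
  have hne1 : 1 - X ≠ 0 := by simpa using hne 1 one_ne_zero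
  rw [logEulerFactor]
  split_ifs with h
  · subst h
    rw [Complex.exp_neg, Complex.exp_log hne1, ← tsum_geometric_of_norm_lt_one hX]
    refine tsum_congr fun e => ?_
    rw [sigmaIndicator, if_neg (not_dvd_sigmak_self_pow hk e), one_mul]
  · have hg := two_le_period (r := Nat.gcd k (q - 1)) (coe_ne_zero_of_prime_ne hp h)
    rw [Complex.exp_add, Complex.exp_sub, Complex.exp_neg, Complex.exp_log hne1,
      Complex.exp_log (hne _ (by omega)), Complex.exp_log (hne _ (by omega))]
    have := (hasSum_not_dvd_succ_mul_pow hg hX).tsum_eq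
    rw [← show _ = _ from tsum_congr (f := fun e : ℕ => sigmaIndicator q k (p ^ e) * X ^ e)
      fun e => by rw [sigmaIndicator]; simp only [dvd_sigmak_prime_pow_iff hk hp h]] at this
    rw [this]
    field_simp

lemma sum_charExponent_mul_apply (hr : 2 * r ∣ q - 1) (a : ZMod q) (ha : a ≠ 0) :
    ∑ χ : DirichletCharacter ℂ q, (charExponent r χ : ℂ) * χ a =
      1 - if orderOf (a ^ r) = 2 then 1 else 0 := by
  have hq : 1 < q := (Fact.out : q.Prime).one_lt
  have hr' : r ∣ q - 1 := (Dvd.intro_left 2 rfl).trans hr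
  rw [sum_charExponent_mul r fun χ => χ a, finsum_trivialOnRoots hr, finsum_trivialOnRoots hr',
    MulChar.one_apply (isUnit_iff_ne_zero.mpr ha)]
  obtain ⟨c, hc⟩ := hr
  have hr0 : 0 < r := Nat.pos_of_ne_zero (by rintro rfl; omega)
  have hc0 : c ≠ 0 := by rintro rfl; omega
  have e1 : (q - 1) / r = 2 * c := by
    rw [hc, mul_assoc, mul_left_comm, Nat.mul_div_cancel_left _ hr0]
  have e2 : (q - 1) / (2 * r) = c := by
    rw [hc, Nat.mul_div_cancel_left _ (by omega)]
  rw [e1, e2, mul_comm 2 r, pow_mul]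
  have hc0' : (c : ℂ) ≠ 0 := by exact_mod_cast hc0
  have h2 : orderOf (a ^ r) = 2 ↔ (a ^ r) ^ 2 = 1 ∧ a ^ r ≠ 1 :=
    orderOf_eq_iff (by norm_num) |>.trans (by
      constructor
      · rintro ⟨h1, h2⟩
        exact ⟨h1, by simpa using h2 1 (by norm_num) one_pos⟩
      · rintro ⟨h1, h2⟩
        refine ⟨h1, fun m hm hm0 => ?_⟩
        obtain rfl : m = 1 := by omega
        simpa using h2)
  by_cases h : a ^ r = 1
  · have : ¬ orderOf (a ^ r) = 2 := by rw [h2]; tauto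
    rw [if_neg this]
    simp only [h, one_pow, if_true]
    push_cast
    field_simp
    ring
  · by_cases h' : (a ^ r) ^ 2 = 1
    · have : orderOf (a ^ r) = 2 := by rw [h2]; tauto
      simp only [h, h', this, if_true, if_false]
      push_cast
      field_simp
      ring
    · have : ¬ orderOf (a ^ r) = 2 := by rw [h2]; tauto
      simp only [h, h', this, if_false]
      ring

lemma differentiableAt_logCorrection {X : ℂ} (hX : ‖X‖ < 1) (hp : p.Prime) :
    DifferentiableAt ℂ (logCorrection q r p) X := by
  have h : ∀ n : ℕ, n ≠ 0 → DifferentiableAt ℂ (fun X : ℂ => Complex.log (1 - X ^ n)) X := by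
    intro n hn
    refine DifferentiableAt.clog (by fun_prop) (one_sub_mem_slitPlane ?_)
    rw [norm_pow]
    exact pow_lt_one₀ (norm_nonneg _) hX hn
  have h1 : DifferentiableAt ℂ (fun X : ℂ => Complex.log (1 - X)) X := by
    simpa using h 1 one_ne_zero
  have h2 : DifferentiableAt ℂ (logEulerFactor q r p) X := by
    unfold logEulerFactor
    split_ifs with hpq
    · exact h1.neg
    · have hg := two_le_period (r := r) (coe_ne_zero_of_prime_ne hp hpq)
      exact (h1.neg.sub (h _ (by omega))).add (h _ (by omega))
  unfold logCorrection
  refine h2.add (DifferentiableAt.fun_sum fun χ _ => ?_)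
  have h3 : DifferentiableAt ℂ (fun X : ℂ => Complex.log (1 - χ p * X)) X := by
    refine DifferentiableAt.clog (by fun_prop) (one_sub_mem_slitPlane ?_)
    exact (norm_char_mul_le _ _ _).trans_lt hX
  exact h3.const_mul _

lemma exists_norm_logCorrection_le (hr : 2 * r ∣ q - 1) : ∃ C, 0 < C ∧ ∀ (p : ℕ) (X : ℂ), p.Prime →
    ‖X‖ ≤ 2 / 3 → ‖logCorrection q r p X‖ ≤ C ∧
      (p ≠ q → ‖logCorrection q r p X‖ ≤ C * ‖X‖ ^ 2) := by
  set D := ∑ χ : DirichletCharacter ℂ q, |charExponent r χ| with hD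
  have hD0 : 0 ≤ D := Finset.sum_nonneg fun _ _ => abs_nonneg _
  set R : ℂ → ℂ := fun Y => Complex.log (1 - Y) + Y with hR
  have hlog : ∀ Y, Complex.log (1 - Y) = R Y - Y := fun Y => by simp [hR]
  have hRb : ∀ Y X : ℂ, ‖X‖ ≤ 2 / 3 → ‖Y‖ ≤ ‖X‖ → ‖R Y‖ ≤ 3 / 2 * ‖X‖ ^ 2 := by
    intro Y X hX hY
    refine (norm_log_one_sub_add_le (hY.trans hX)).trans ?_
    gcongr
  have hsum : ∀ (p : ℕ) (X : ℂ), ‖X‖ ≤ 2 / 3 →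
      ‖∑ χ : DirichletCharacter ℂ q, (charExponent r χ : ℂ) * R (χ p * X)‖ ≤
        D * (3 / 2 * ‖X‖ ^ 2) := by
    intro p X hX
    rw [hD, Finset.sum_mul]
    refine (norm_sum_le _ _).trans (Finset.sum_le_sum fun χ _ => ?_)
    rw [norm_mul, Complex.norm_real, Real.norm_eq_abs]
    gcongr
    exact hRb _ _ hX (norm_char_mul_le _ _ _)
  have hne : ∀ (p : ℕ) (X : ℂ), p.Prime → ‖X‖ ≤ 2 / 3 → p ≠ q →
      ‖logCorrection q r p X‖ ≤ (7 + D * (3 / 2)) * ‖X‖ ^ 2 := by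
    intro p X hp hX hpq
    have hp0 := coe_ne_zero_of_prime_ne hp hpq
    have hX1 : ‖X‖ ≤ 1 := by linarith
    have hpow : ∀ n : ℕ, 2 ≤ n → ‖X ^ n‖ ≤ ‖X‖ ^ 2 := fun n hn => by
      rw [norm_pow]
      exact pow_le_pow_of_le_one (norm_nonneg _) hX1 hn
    have hpow1 : ∀ n : ℕ, 1 ≤ n → ‖X ^ n‖ ≤ ‖X‖ := fun n hn => by
      rw [norm_pow]
      simpa using pow_le_pow_of_le_one (norm_nonneg X) hX1 hn
    set g := period q r p with hg
    have hg2 : 2 ≤ g := two_le_period hp0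
    have e : logCorrection q r p X = ((if gp q r p = 2 then X else 0) - X ^ (g - 1)) + X ^ g - R X
        - R (X ^ g) + R (X ^ (g - 1))
        + ∑ χ : DirichletCharacter ℂ q, (charExponent r χ : ℂ) * R (χ p * X) := by
      rw [logCorrection, logEulerFactor, if_neg hpq]
      simp only [hlog, mul_sub, Finset.sum_sub_distrib, ← mul_assoc, ← Finset.sum_mul]
      rw [sum_charExponent_mul_apply hr _ hp0, ← hg, gp]
      split_ifs <;> ring
    have h1 : ‖(if gp q r p = 2 then X else 0) - X ^ (g - 1)‖ ≤ ‖X‖ ^ 2 := by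
      split_ifs with h
      · have : g = 2 := by rw [hg, period, h, if_neg (by norm_num)]
        simp [this]
      · rw [zero_sub, norm_neg]
        refine hpow _ ?_
        have hq3 : 3 ≤ q := by
          have h2 : 1 < q := (Fact.out : q.Prime).one_lt
          rcases Nat.lt_or_ge q 3 with h3 | h3
          · have : q = 2 := by omega
            subst this
            have := Nat.le_of_dvd (by norm_num) hr
            rcases Nat.eq_zero_or_pos r with rfl | hr0
            · simp at hr
            · omega
          · exact h3
        have h0 := gp_pos (m := r) hp0
        have : 3 ≤ g := by
          rw [hg, period]
          split_ifs <;> omega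
        omega
    rw [e]
    have h2 := hpow g hg2
    have h3 := hRb X X hX le_rfl
    have h4 := hRb (X ^ g) X hX (hpow1 _ (by omega))
    have h5 := hRb (X ^ (g - 1)) X hX (hpow1 _ (by omega))
    have h6 := hsum p X hX
    refine (norm_add_le _ _).trans ?_
    refine (add_le_add_left (norm_add_le _ _) _).trans ?_
    refine (add_le_add_left (add_le_add_left (norm_sub_le _ _) _) _).trans ?_
    refine (add_le_add_left (add_le_add_left (add_le_add_left (norm_sub_le _ _) _) _) _).trans ?_
    refine (add_le_add_left (add_le_add_left (add_le_add_left (add_le_add_left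
      (norm_add_le _ _) _) _) _) _).trans ?_
    nlinarith [sq_nonneg ‖X‖]
  refine ⟨7 + D * (3 / 2), by positivity, fun p X hp hX => ⟨?_, hne p X hp hX⟩⟩
  have hX2 : ‖X‖ ^ 2 ≤ 1 := pow_le_one₀ (norm_nonneg _) (by linarith)
  by_cases hpq : p = q
  · rw [logCorrection, logEulerFactor, if_pos hpq]
    subst hpq
    simp only [CharP.cast_eq_zero]
    have : ∀ χ : DirichletCharacter ℂ p, χ (0 : ZMod p) = 0 := fun χ => MulChar.map_zero χ
    simp only [this, zero_mul, sub_zero, Complex.log_one, mul_zero, Finset.sum_const_zero, add_zero,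
      norm_neg, hlog]
    have h3 := hRb X X hX le_rfl
    have h4 := norm_sub_le (R X) X
    nlinarith
  · refine (hne p X hp hX hpq).trans ?_
    exact mul_le_of_le_one_right (by positivity) hX2

end EulerFactor

lemma hasDerivAt_log_one_sub_mul_pow {p n : ℕ} (hp : 2 ≤ p) (hn : n ≠ 0) {a : ℂ} (ha : ‖a‖ ≤ 1) :
    HasDerivAt (fun s : ℂ => Complex.log (1 - a * ((p : ℂ) ^ (-s)) ^ n))
      (n * Real.log p * (a / ((p : ℂ) ^ n - a))) 1 := by
  have hp0 : (p : ℂ) ≠ 0 := by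
    have : p ≠ 0 := by omega
    exact_mod_cast this
  have h1 : HasDerivAt (fun s : ℂ => (p : ℂ) ^ (-s))
      ((p : ℂ) ^ (-1 : ℂ) * Complex.log p * (-1)) 1 :=
    (hasDerivAt_neg (1 : ℂ)).const_cpow (Or.inl hp0)
  have h2 : (p : ℂ) ^ (-1 : ℂ) = (p : ℂ)⁻¹ := Complex.cpow_neg_one _
  rw [h2] at h1
  have hpn : 1 < (p : ℝ) ^ n := one_lt_pow₀ (by exact_mod_cast hp) hn
  have hna : ‖a‖ < ‖(p : ℂ) ^ n‖ := by
    rw [norm_pow, Complex.norm_natCast]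
    linarith
  have hne : (p : ℂ) ^ n - a ≠ 0 := fun h => by
    rw [sub_eq_zero.mp h] at hna
    exact lt_irrefl _ hna
  have hslit : 1 - a * ((p : ℂ) ^ (-1 : ℂ)) ^ n ∈ Complex.slitPlane := by
    refine one_sub_mem_slitPlane ?_
    rw [h2, norm_mul, norm_pow, norm_inv, Complex.norm_natCast]
    have : ((p : ℝ)⁻¹) ^ n < 1 := by
      rw [inv_pow]
      exact inv_lt_one_of_one_lt₀ hpn
    have h0 : 0 ≤ ((p : ℝ)⁻¹) ^ n := by positivity
    nlinarith [norm_nonneg a]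
  have h3 := (((h1.fun_pow n).const_mul a).const_sub 1).clog hslit
  convert h3 using 1
  rw [h2]
  have hne' : (1 : ℂ) - a * (p : ℂ)⁻¹ ^ n ≠ 0 := by
    rw [← h2]
    exact Complex.slitPlane_ne_zero hslit
  have hpn0 : (p : ℂ) ^ n ≠ 0 := pow_ne_zero _ hp0
  obtain ⟨k, rfl⟩ := Nat.exists_eq_succ_of_ne_zero hn
  rw [← Complex.natCast_log, Nat.succ_sub_one, Nat.succ_eq_add_one] at *
  have e : (1 : ℂ) - a * (p : ℂ)⁻¹ ^ (k + 1) = ((p : ℂ) ^ (k + 1) - a) / (p : ℂ) ^ (k + 1) := by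
    rw [inv_pow]
    field_simp
  rw [e, inv_pow]
  field_simp
  ring

section

variable {q r p : ℕ} [Fact q.Prime]

lemma finsum_trivialOnRoots_div {m : ℕ} (hm : m ∣ q - 1) {a : ZMod q} (ha : a ≠ 0) {P : ℂ}
    (hP : 1 < ‖P‖) :
    ∑ᶠ χ ∈ {χ : DirichletCharacter ℂ q | TrivialOnRoots m χ}, χ a / (P - χ a) =
      ((q - 1) / m : ℕ) / (P ^ orderOf (a ^ m) - 1) := by
  classical
  set g := orderOf (a ^ m) with hg
  have hg0 : 0 < g := by
    obtain ⟨u, hu⟩ := (isUnit_iff_ne_zero.mpr ha).pow m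
    rw [hg, ← hu, orderOf_units]
    exact orderOf_pos u
  have hPg : P ^ g - 1 ≠ 0 := fun h => by
    have h1 : 1 < ‖P ^ g‖ := by
      rw [norm_pow]
      exact one_lt_pow₀ hP hg0.ne'
    rw [sub_eq_zero.mp h] at h1
    simp at h1
  have key : ∀ χ ∈ {χ : DirichletCharacter ℂ q | TrivialOnRoots m χ},
      χ a / (P - χ a) =
        (∑ j ∈ Finset.range g, χ (a ^ (j + 1)) * P ^ (g - 1 - j)) / (P ^ g - 1) := by
    intro χ hχ
    have hω : χ a ^ g = 1 := by
      rw [← map_pow]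
      refine hχ _ ?_
      rw [← pow_mul, mul_comm, pow_mul, hg, pow_orderOf_eq_one]
    have hne : P - χ a ≠ 0 := fun h => by
      rw [sub_eq_zero.mp h] at hP
      linarith [χ.norm_le_one a]
    rw [div_eq_div_iff hne hPg]
    have h := (Commute.all (χ a) P).geom_sum₂_mul g
    rw [hω] at h
    have h2 : ∑ j ∈ Finset.range g, χ (a ^ (j + 1)) * P ^ (g - 1 - j) =
        χ a * ∑ j ∈ Finset.range g, χ a ^ j * P ^ (g - 1 - j) := by
      rw [Finset.mul_sum]
      refine Finset.sum_congr rfl fun j _ => ?_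
      rw [map_pow, pow_succ]
      ring
    rw [h2]
    linear_combination (χ a) * h
  rw [finsum_mem_congr (g := fun χ : DirichletCharacter ℂ q =>
      (∑ j ∈ Finset.range g, χ (a ^ (j + 1)) * P ^ (g - 1 - j)) / (P ^ g - 1)) rfl key,
    finsum_mem_eq_finite_toFinset_sum _ (Set.toFinite _),
    ← Finset.sum_div, Finset.sum_comm]
  congr 1
  have h3 : ∀ j ∈ Finset.range g, ∑ χ ∈ (Set.toFinite
      {χ : DirichletCharacter ℂ q | TrivialOnRoots m χ}).toFinset,
        χ (a ^ (j + 1)) * P ^ (g - 1 - j) =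
      (if (a ^ m) ^ (j + 1) = 1 then (((q - 1) / m : ℕ) : ℂ) else 0) * P ^ (g - 1 - j) := by
    intro j _
    rw [← Finset.sum_mul, ← finsum_mem_eq_finite_toFinset_sum, finsum_trivialOnRoots hm, ← pow_mul,
      ← pow_mul, mul_comm m]
  rw [Finset.sum_congr rfl h3, Finset.sum_eq_single_of_mem (g - 1) (by simpa using hg0)]
  · rw [Nat.sub_add_cancel hg0, hg, pow_orderOf_eq_one]
    simp
  · intro j hj hj'
    rw [if_neg, zero_mul]
    rw [← orderOf_dvd_iff_pow_eq_one]
    intro h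
    have := Nat.le_of_dvd (by omega) h
    have := Finset.mem_range.mp hj
    omega

lemma sum_charExponent_mul_div (hr : 2 * r ∣ q - 1) {a : ZMod q} (ha : a ≠ 0) {P : ℂ}
    (hP : 1 < ‖P‖) :
    ∑ χ : DirichletCharacter ℂ q, (charExponent r χ : ℂ) * (χ a / (P - χ a)) =
      1 / (P - 1) - 1 / (P ^ orderOf (a ^ (2 * r)) - 1) + 1 / (P ^ orderOf (a ^ r) - 1) := by
  have hq : 1 < q := (Fact.out : q.Prime).one_lt
  have hr' : r ∣ q - 1 := (Dvd.intro_left 2 rfl).trans hr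
  rw [sum_charExponent_mul r fun χ => χ a / (P - χ a), finsum_trivialOnRoots_div hr ha hP,
    finsum_trivialOnRoots_div hr' ha hP, MulChar.one_apply (isUnit_iff_ne_zero.mpr ha)]
  obtain ⟨c, hc⟩ := hr
  have hr0 : 0 < r := Nat.pos_of_ne_zero (by rintro rfl; omega)
  have hc0 : c ≠ 0 := by rintro rfl; omega
  have e1 : (q - 1) / r = 2 * c := by
    rw [hc, mul_assoc, mul_left_comm, Nat.mul_div_cancel_left _ hr0]
  have e2 : (q - 1) / (2 * r) = c := by
    rw [hc, Nat.mul_div_cancel_left _ (by omega)]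
  rw [e1, e2]
  have hc0' : (c : ℂ) ≠ 0 := by exact_mod_cast hc0
  have h2c : (2 : ℂ) * c ≠ 0 := mul_ne_zero two_ne_zero hc0'
  have e3 : ∀ Y : ℂ, 2 / ((2 * c : ℕ) : ℂ) * (c / Y) = 1 / Y := fun Y => by
    push_cast
    calc 2 / (2 * (c : ℂ)) * (c / Y) = (2 * c) / (2 * c) * (1 / Y) := by ring
      _ = _ := by rw [div_self h2c, one_mul]
  have e4 : ∀ Y : ℂ, 1 / ((2 * c : ℕ) : ℂ) * (((2 * c : ℕ) : ℂ) / Y) = 1 / Y := fun Y => by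
    push_cast
    calc 1 / (2 * (c : ℂ)) * (2 * c / Y) = (2 * c) / (2 * c) * (1 / Y) := by ring
      _ = _ := by rw [div_self h2c, one_mul]
  rw [e3, e4]

lemma orderOf_pow_two_mul (a : ZMod q) :
    orderOf (a ^ (2 * r)) =
      if 2 ∣ orderOf (a ^ r) then orderOf (a ^ r) / 2 else orderOf (a ^ r) := by
  rw [mul_comm, pow_mul, orderOf_pow' _ two_ne_zero]
  split_ifs with h
  · rw [Nat.gcd_eq_right h]
  · rw [Nat.Coprime.gcd_eq_one, Nat.div_one]
    exact ((Nat.prime_two.coprime_iff_not_dvd).mpr h).symm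

/-- The value at `s = 1` of the derivative of `logCorrection q r p (p ^ (-s))`. -/
noncomputable def derivLogCorrection (q r p : ℕ) : ℝ :=
  if p = q then -(Real.log q / (q - 1)) else -Sterm q r p

lemma hasDerivAt_logCorrection (hr : 2 * r ∣ q - 1) (hp : p.Prime) :
    HasDerivAt (fun s : ℂ => logCorrection q r p ((p : ℂ) ^ (-s)))
      (derivLogCorrection q r p : ℂ) 1 := by
  have hlog : ∀ n : ℕ, n ≠ 0 → HasDerivAt (fun s : ℂ => Complex.log (1 - ((p : ℂ) ^ (-s)) ^ n))
      (n * Real.log p * (1 / ((p : ℂ) ^ n - 1))) 1 := fun n hn => by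
    simpa using hasDerivAt_log_one_sub_mul_pow hp.two_le hn (a := 1) (by simp)
  have hlog1 : HasDerivAt (fun s : ℂ => Complex.log (1 - (p : ℂ) ^ (-s)))
      (Real.log p * (1 / ((p : ℂ) - 1))) 1 := by simpa using hlog 1 one_ne_zero
  have hχ : HasDerivAt (fun s : ℂ => ∑ χ : DirichletCharacter ℂ q, (charExponent r χ : ℂ) *
      Complex.log (1 - χ p * (p : ℂ) ^ (-s)))
      (∑ χ : DirichletCharacter ℂ q, (charExponent r χ : ℂ) *
        (Real.log p * (χ p / ((p : ℂ) - χ p)))) 1 := by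
    refine HasDerivAt.fun_sum fun χ _ => HasDerivAt.const_mul _ ?_
    simpa using hasDerivAt_log_one_sub_mul_pow hp.two_le one_ne_zero (a := χ p) (χ.norm_le_one _)
  have hp1 : (1 : ℝ) < p := by exact_mod_cast hp.one_lt
  unfold logCorrection logEulerFactor derivLogCorrection
  split_ifs with hpq
  · subst hpq
    refine (hlog1.fun_neg.fun_add hχ).congr_deriv ?_
    rw [Finset.sum_eq_zero]
    · push_cast
      ring
    · intro χ _
      rw [ZMod.natCast_self, MulChar.map_nonunit χ not_isUnit_zero]
      simp
  · have hp0 := coe_ne_zero_of_prime_ne hp hpq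
    have hg := two_le_period (r := r) hp0
    refine (((hlog1.fun_neg.fun_sub (hlog (period q r p) (by omega))).fun_add
      (hlog (period q r p - 1) (by omega))).fun_add hχ).congr_deriv ?_
    have e : ∑ χ : DirichletCharacter ℂ q, (charExponent r χ : ℂ) *
        (Real.log p * (χ p / ((p : ℂ) - χ p))) = Real.log p *
        ∑ χ : DirichletCharacter ℂ q, (charExponent r χ : ℂ) * (χ p / ((p : ℂ) - χ p)) := by
      rw [Finset.mul_sum]
      exact Finset.sum_congr rfl fun χ _ => by ring
    rw [e, sum_charExponent_mul_div hr hp0 (by simpa using hp.one_lt), orderOf_pow_two_mul]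
    change _ + Real.log p * (1 / ((p : ℂ) - 1) - 1 / ((p : ℂ) ^
      (if 2 ∣ gp q r p then gp q r p / 2 else gp q r p) - 1) + 1 / ((p : ℂ) ^ gp q r p - 1)) = _
    have hcast : ((period q r p - 1 : ℕ) : ℂ) = (period q r p : ℂ) - 1 := by
      rw [Nat.cast_sub (by omega)]
      simp
    rw [hcast]
    have hg0 := gp_pos (m := r) hp0
    rw [Sterm, if_neg hpq, period]
    set g := gp q r p with hgdef
    rcases Nat.lt_or_ge g 3 with h3 | h3
    · have : g = 1 ∨ g = 2 := by omega
      rcases this with h | h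
      · simp only [h]
        norm_num
        ring
      · simp only [h]
        have h1 : (p : ℂ) - 1 ≠ 0 := by
          rw [sub_ne_zero]
          exact_mod_cast hp.one_lt.ne'
        have h2 : (p : ℂ) ^ 2 - 1 ≠ 0 := by
          rw [sub_ne_zero]
          exact_mod_cast (one_lt_pow₀ hp.one_lt two_ne_zero).ne'
        norm_num
        field_simp
        ring
    · have h1 : g ≠ 1 := by omega
      have h2 : g ≠ 2 := by omega
      simp only [h1, h2, h3, if_true, if_false]
      by_cases hdvd : 2 ∣ g
      · obtain ⟨c, hc⟩ := hdvd
        have h4 : 4 ≤ g := by omega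
        have hd : 2 ∣ g := ⟨c, hc⟩
        have hc2 : g / 2 = c := by omega
        simp only [h4, hd, hc2, and_self, if_true]
        have hc0 : c ≠ 0 := by omega
        have hy : (p : ℂ) ^ g = ((p : ℂ) ^ c) ^ 2 := by rw [← pow_mul, hc, mul_comm]
        have hy1 : (p : ℂ) ^ c - 1 ≠ 0 := by
          rw [sub_ne_zero]
          exact_mod_cast (one_lt_pow₀ hp.one_lt hc0).ne'
        have hy0 : (p : ℂ) ^ c ≠ 0 := pow_ne_zero _ (by exact_mod_cast hp.ne_zero)
        have hy2 : ((p : ℂ) ^ c) ^ 2 - 1 ≠ 0 := by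
          rw [← hy, sub_ne_zero]
          exact_mod_cast (one_lt_pow₀ hp.one_lt (by omega)).ne'
        have key : 1 / ((p : ℂ) ^ c - ((p : ℂ) ^ c)⁻¹) =
            1 / ((p : ℂ) ^ c - 1) - 1 / ((p : ℂ) ^ g - 1) := by
          have : (p : ℂ) ^ c - ((p : ℂ) ^ c)⁻¹ = (((p : ℂ) ^ c) ^ 2 - 1) / (p : ℂ) ^ c := by
            field_simp
          rw [this, hy]
          field_simp
          ring
        push_cast
        rw [div_eq_mul_one_div _ ((p : ℂ) ^ c - ((p : ℂ) ^ c)⁻¹), key]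
        ring
      · simp only [hdvd, and_false, if_false]
        push_cast
        ring

end

section Correction

variable {q r : ℕ} [Fact q.Prime]

variable (q r) in
/-- The logarithm of the quotient of the generating Dirichlet series by
`∏ L(s, χ) ^ charExponent r χ`. -/
noncomputable def correction (s : ℂ) : ℂ :=
  ∑' p : Nat.Primes, logCorrection q r p (((p : ℕ) : ℂ) ^ (-s))

lemma norm_prime_cpow_neg (p : Nat.Primes) (s : ℂ) :
    ‖((p : ℕ) : ℂ) ^ (-s)‖ = ((p : ℕ) : ℝ) ^ (-s.re) := by
  rw [Complex.norm_natCast_cpow_of_pos p.2.pos, Complex.neg_re]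

lemma norm_prime_cpow_neg_le (p : Nat.Primes) {s : ℂ} (hs : 3 / 4 ≤ s.re) :
    ‖((p : ℕ) : ℂ) ^ (-s)‖ ≤ 2 / 3 := by
  have hp : (2 : ℝ) ≤ (p : ℕ) := by exact_mod_cast p.2.two_le
  rw [norm_prime_cpow_neg]
  have h1 : ((p : ℕ) : ℝ) ^ (-s.re) ≤ ((p : ℕ) : ℝ) ^ (-(3 / 4) : ℝ) :=
    Real.rpow_le_rpow_of_exponent_le (by linarith) (by linarith)
  have h2 : ((p : ℕ) : ℝ) ^ (-(3 / 4) : ℝ) ≤ 2 ^ (-(3 / 4) : ℝ) :=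
    Real.rpow_le_rpow_of_nonpos (by norm_num) hp (by norm_num)
  refine h1.trans (h2.trans ?_)
  rw [← pow_le_pow_iff_left₀ (by positivity) (by norm_num) (n := 4) (by norm_num),
    ← Real.rpow_mul_natCast (by norm_num)]
  norm_num

lemma exists_summable_logCorrection_bound (hr : 2 * r ∣ q - 1) : ∃ u : Nat.Primes → ℝ, Summable u ∧
    ∀ (p : Nat.Primes) (s : ℂ), 3 / 4 ≤ s.re →
      ‖logCorrection q r p (((p : ℕ) : ℂ) ^ (-s))‖ ≤ u p := by
  obtain ⟨C, hC0, hC⟩ := exists_norm_logCorrection_le hr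
  have hq1 : (1 : ℝ) ≤ q := by exact_mod_cast (Fact.out : q.Prime).one_le
  refine ⟨fun p => C * (q : ℝ) ^ (3 / 2 : ℝ) * ((p : ℕ) : ℝ) ^ (-(3 / 2) : ℝ),
    (Nat.Primes.summable_rpow.mpr (by norm_num)).mul_left _, fun p s hs => ?_⟩
  have hp : (1 : ℝ) ≤ (p : ℕ) := by exact_mod_cast p.2.one_le
  obtain ⟨h1, h2⟩ := hC p _ p.2 (norm_prime_cpow_neg_le p hs)
  by_cases hpq : (p : ℕ) = q
  · refine h1.trans (le_of_eq ?_)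
    change C = C * (q : ℝ) ^ (3 / 2 : ℝ) * ((p : ℕ) : ℝ) ^ (-(3 / 2) : ℝ)
    rw [hpq, mul_assoc, ← Real.rpow_add (by linarith)]
    norm_num
  · refine (h2 hpq).trans ?_
    have h3 : ‖((p : ℕ) : ℂ) ^ (-s)‖ ^ 2 ≤ ((p : ℕ) : ℝ) ^ (-(3 / 2) : ℝ) := by
      rw [norm_prime_cpow_neg, ← Real.rpow_mul_natCast (by linarith)]
      exact Real.rpow_le_rpow_of_exponent_le hp (by push_cast; linarith)
    have h4 : 1 ≤ (q : ℝ) ^ (3 / 2 : ℝ) := Real.one_le_rpow hq1 (by norm_num)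
    have h5 : 0 ≤ ((p : ℕ) : ℝ) ^ (-(3 / 2) : ℝ) := by positivity
    calc C * ‖((p : ℕ) : ℂ) ^ (-s)‖ ^ 2 ≤ C * ((p : ℕ) : ℝ) ^ (-(3 / 2) : ℝ) := by gcongr
      _ ≤ C * (q : ℝ) ^ (3 / 2 : ℝ) * ((p : ℕ) : ℝ) ^ (-(3 / 2) : ℝ) := by
          gcongr
          nlinarith

lemma differentiableOn_logCorrection_cpow (p : Nat.Primes) :
    DifferentiableOn ℂ (fun s : ℂ => logCorrection q r p (((p : ℕ) : ℂ) ^ (-s)))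
      {s | 3 / 4 < s.re} := by
  intro s hs
  have hs' : (3 : ℝ) / 4 < s.re := hs
  have h1 : DifferentiableAt ℂ (logCorrection q r p) (((p : ℕ) : ℂ) ^ (-s)) :=
    differentiableAt_logCorrection
      ((norm_prime_cpow_neg_le p hs'.le).trans_lt (by norm_num)) p.2
  have h2 : DifferentiableAt ℂ (fun s : ℂ => ((p : ℕ) : ℂ) ^ (-s)) s :=
    (differentiableAt_id.neg).const_cpow (Or.inl (by exact_mod_cast p.2.ne_zero))
  exact (h1.comp s h2).differentiableWithinAt

lemma isOpen_lt_re (a : ℝ) : IsOpen {s : ℂ | a < s.re} :=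
  isOpen_lt continuous_const Complex.continuous_re

lemma differentiableOn_correction (hr : 2 * r ∣ q - 1) :
    DifferentiableOn ℂ (correction q r) {s | 3 / 4 < s.re} := by
  obtain ⟨u, hu, hb⟩ := exists_summable_logCorrection_bound hr
  exact Complex.differentiableOn_tsum_of_summable_norm hu differentiableOn_logCorrection_cpow
    (isOpen_lt_re _) fun p s (hs : 3 / 4 < s.re) => hb p s hs.le

lemma hasSum_derivLogCorrection (hr : 2 * r ∣ q - 1) :
    HasSum (fun p : Nat.Primes => (derivLogCorrection q r p : ℂ)) (deriv (correction q r) 1) := by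
  obtain ⟨u, hu, hb⟩ := exists_summable_logCorrection_bound hr
  have h := Complex.hasSum_deriv_of_summable_norm hu
    (differentiableOn_logCorrection_cpow (q := q) (r := r))
    (isOpen_lt_re _) (fun p s (hs : 3 / 4 < s.re) => hb p s hs.le)
    (show (1 : ℂ) ∈ {s : ℂ | 3 / 4 < s.re} by norm_num)
  have e : (fun p : Nat.Primes => (derivLogCorrection q r p : ℂ)) = fun p : Nat.Primes =>
      deriv (fun s : ℂ => logCorrection q r p (((p : ℕ) : ℂ) ^ (-s))) 1 :=
    funext fun p => (hasDerivAt_logCorrection hr p.2).deriv.symm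
  rw [e]
  exact h

lemma deriv_correction_one (hr : 2 * r ∣ q - 1) :
    deriv (correction q r) 1 = ((-(Real.log q / (q - 1)) - Smq q r : ℝ) : ℂ) := by
  classical
  have hq : q.Prime := Fact.out
  have hs := hasSum_derivLogCorrection hr
  have hsre : HasSum (fun p : Nat.Primes => derivLogCorrection q r p)
      (deriv (correction q r) 1).re := by simpa using Complex.hasSum_re hs
  have hsim : (deriv (correction q r) 1).im = 0 := by
    have := Complex.hasSum_im hs
    simp only [Complex.ofReal_im] at this
    exact this.unique hasSum_zero
  have h1 : HasSum (fun p : Nat.Primes => if p = ⟨q, hq⟩ then Real.log q / (q - 1) else (0 : ℝ))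
      (Real.log q / (q - 1)) := hasSum_ite_eq _ _
  have h2 : HasSum (fun p : Nat.Primes => Sterm q r p)
      (-(deriv (correction q r) 1).re - Real.log q / (q - 1)) := by
    have e : (fun p : Nat.Primes => Sterm q r p) = fun p : Nat.Primes => -derivLogCorrection q r p -
        if p = ⟨q, hq⟩ then Real.log q / (q - 1) else 0 := by
      funext p
      by_cases hpq : (p : ℕ) = q
      · have hpq' : p = ⟨q, hq⟩ := Subtype.ext hpq
        rw [if_pos hpq', derivLogCorrection, if_pos hpq, Sterm, if_pos hpq]
        ring
      · have hpq' : p ≠ ⟨q, hq⟩ := fun h => hpq (congrArg Subtype.val h)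
        rw [if_neg hpq', derivLogCorrection, if_neg hpq]
        ring
    rw [e]
    exact hsre.neg.sub h1
  have h3 : Smq q r = -(deriv (correction q r) 1).re - Real.log q / (q - 1) := h2.tsum_eq
  refine Complex.ext ?_ ?_
  · rw [Complex.ofReal_re, h3]
    ring
  · rw [hsim, Complex.ofReal_im]

lemma slowUpTo_correction (hr : 2 * r ∣ q - 1) (n : ℕ) : SlowUpTo n (correction q r) := by
  obtain ⟨u, hu, hb⟩ := exists_summable_logCorrection_bound hr
  have hbound : ∀ s : ℂ, 3 / 4 ≤ s.re → ‖correction q r s‖ ≤ ∑' p, u p := fun s hs =>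
    tsum_of_norm_bounded hu.hasSum fun p => hb p s hs
  refine ⟨(differentiableOn_correction hr).mono fun s (hs : 1 < s.re) => ?_, fun j _ => ?_⟩
  · change 3 / 4 < s.re
    linarith
  · refine SlowGrowth.of_bound (j.factorial * (∑' p, u p) / (1 / 8) ^ j) fun s hs _ => ?_
    have hball : Metric.closedBall s (1 / 8) ⊆ {s : ℂ | 3 / 4 < s.re} := by
      intro w hw
      have h1 : |(w - s).re| ≤ 1 / 8 :=
        (Complex.abs_re_le_norm _).trans (by simpa [dist_eq_norm] using hw)
      have := (abs_le.mp h1).1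
      rw [Complex.sub_re] at this
      change 3 / 4 < w.re
      linarith
    refine Complex.norm_iteratedDeriv_le_of_forall_mem_sphere_norm_le j (by norm_num) ?_ ?_
    · refine DifferentiableOn.diffContOnCl ?_
      rw [closure_ball _ (by norm_num)]
      exact (differentiableOn_correction hr).mono hball
    · intro w hw
      exact hbound w (le_of_lt (hball (Metric.sphere_subset_closedBall hw)))

end Correction

section LogL

variable {q : ℕ} (χ : DirichletCharacter ℂ q)

/-- The logarithm of `L(s, χ)` given by the Euler product. -/
noncomputable def logL (s : ℂ) : ℂ :=
  ∑' p : Nat.Primes, -Complex.log (1 - χ p * ((p : ℕ) : ℂ) ^ (-s))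

lemma norm_prime_cpow_neg_lt (p : Nat.Primes) {s : ℂ} (hs : 1 < s.re) :
    ‖((p : ℕ) : ℂ) ^ (-s)‖ ≤ 1 / 2 := by
  have hp : (2 : ℝ) ≤ (p : ℕ) := by exact_mod_cast p.2.two_le
  rw [norm_prime_cpow_neg]
  have h1 : ((p : ℕ) : ℝ) ^ (-s.re) ≤ ((p : ℕ) : ℝ) ^ (-1 : ℝ) :=
    Real.rpow_le_rpow_of_exponent_le (by linarith) (by linarith)
  refine h1.trans ?_
  rw [Real.rpow_neg_one, ← one_div]
  exact one_div_le_one_div_of_le (by norm_num) hp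

lemma differentiableAt_logL {s : ℂ} (hs : 1 < s.re) : DifferentiableAt ℂ (logL χ) s := by
  obtain ⟨σ, h1, h2⟩ := exists_between hs
  have hpX : ∀ (p : Nat.Primes) (w : ℂ), σ < w.re →
      ‖χ p * ((p : ℕ) : ℂ) ^ (-w)‖ ≤ 1 / 2 := fun p w hw =>
    (norm_char_mul_le _ _ _).trans (norm_prime_cpow_neg_lt p (h1.trans hw))
  have h : DifferentiableOn ℂ (logL χ) {w | σ < w.re} := by
    refine Complex.differentiableOn_tsum_of_summable_norm
      (u := fun p : Nat.Primes => 3 / 2 * ((p : ℕ) : ℝ) ^ (-σ))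
      ((Nat.Primes.summable_rpow.mpr (by linarith)).mul_left _) (fun p w hw => ?_)
      (isOpen_lt_re _) (fun p w hw => ?_)
    · have hX : DifferentiableAt ℂ (fun s : ℂ => ((p : ℕ) : ℂ) ^ (-s)) w :=
        (differentiableAt_id.neg).const_cpow (Or.inl (by exact_mod_cast p.2.ne_zero))
      refine (DifferentiableAt.clog (((hX.const_mul _).const_sub 1)) ?_).neg.differentiableWithinAt
      exact one_sub_mem_slitPlane ((hpX p w hw).trans_lt (by norm_num))
    · rw [norm_neg, sub_eq_add_neg]
      refine (Complex.norm_log_one_add_half_le_self ?_).trans ?_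
      · rw [norm_neg]
        exact hpX p w hw
      · rw [norm_neg]
        gcongr
        refine (norm_char_mul_le _ _ _).trans ?_
        rw [norm_prime_cpow_neg]
        have hw' : σ < w.re := hw
        exact Real.rpow_le_rpow_of_exponent_le (by exact_mod_cast p.2.one_le) (by linarith)
  exact (h s h2).differentiableAt ((isOpen_lt_re σ).mem_nhds h2)

variable [NeZero q]

lemma exp_logL {s : ℂ} (hs : 1 < s.re) : Complex.exp (logL χ s) = χ.LFunction s := by
  rw [DirichletCharacter.LFunction_eq_LSeries χ hs]
  exact DirichletCharacter.LSeries_eulerProduct_exp_log χ hs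

lemma deriv_logL {s : ℂ} (hs : 1 < s.re) :
    deriv (logL χ) s = deriv χ.LFunction s / χ.LFunction s := by
  have h1 : (fun w => Complex.exp (logL χ w)) =ᶠ[𝓝 s] χ.LFunction :=
    Filter.eventuallyEq_of_mem ((isOpen_lt_re 1).mem_nhds hs) fun w hw => exp_logL χ hw
  rw [← h1.deriv_eq, ((differentiableAt_logL χ hs).hasDerivAt.cexp).deriv, exp_logL χ hs,
    mul_div_cancel_left₀ _ (LFunction_ne_zero_of_one_lt_re χ hs)]

lemma slowGrowth_exp_mul_logL (c : ℝ) : SlowGrowth fun s => Complex.exp (c * logL χ s) := by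
  have key : ∀ (f : ℂ → ℂ) (c : ℝ), 0 ≤ c → SlowGrowth f →
      SlowGrowth fun s => ((‖f s‖ ^ c : ℝ) : ℂ) := by
    intro f c hc hf ε hε ρ hρ
    obtain ⟨C, hC0, hC⟩ := hf.exists_pos (ε := ε / (c + 1)) (by positivity) hρ
    refine ⟨C ^ c, fun s h1 h2 h3 => ?_⟩
    have h4 : 0 ≤ 1 + |s.im| := by positivity
    rw [Complex.norm_real, Real.norm_of_nonneg (by positivity)]
    calc ‖f s‖ ^ c ≤ (C * (1 + |s.im|) ^ (ε / (c + 1))) ^ c := by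
          gcongr
          exact hC s h1 h2 h3
      _ = C ^ c * (1 + |s.im|) ^ (ε / (c + 1) * c) := by
          rw [Real.mul_rpow hC0.le (by positivity), Real.rpow_mul h4]
      _ ≤ C ^ c * (1 + |s.im|) ^ ε := by
          gcongr
          · linarith [abs_nonneg s.im]
          · rw [div_mul_eq_mul_div, div_le_iff₀ (by positivity)]
            nlinarith
  have hn : ∀ s : ℂ, 1 < s.re → ‖Complex.exp (c * logL χ s)‖ = ‖χ.LFunction s‖ ^ c := by
    intro s hs
    rw [← exp_logL χ hs, Complex.norm_exp, Complex.norm_exp, ← Real.exp_mul, Complex.re_ofReal_mul,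
      mul_comm]
  have hL : SlowGrowth χ.LFunction := by
    simpa using (slowUpTo_LFunction χ 0).slow 0 le_rfl
  rcases le_total 0 c with hc | hc
  · intro ε hε ρ hρ
    obtain ⟨C, hC⟩ := key _ c hc hL ε hε ρ hρ
    refine ⟨C, fun s h1 h2 h3 => ?_⟩
    have := hC s h1 h2 h3
    rwa [Complex.norm_real, Real.norm_of_nonneg (by positivity), ← hn s h1] at this
  · intro ε hε ρ hρ
    obtain ⟨C, hC⟩ := key _ (-c) (by linarith) (slowGrowth_inv_LFunction χ) ε hε ρ hρ
    refine ⟨C, fun s h1 h2 h3 => ?_⟩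
    have := hC s h1 h2 h3
    rwa [Complex.norm_real, Real.norm_of_nonneg (by positivity), norm_inv,
      Real.inv_rpow (norm_nonneg _), Real.rpow_neg (norm_nonneg _), inv_inv, ← hn s h1] at this

end LogL

lemma LSeriesSummable_sigmaIndicator {q k : ℕ} {s : ℂ} (hs : 1 < s.re) :
    LSeriesSummable (sigmaIndicator q k) s :=
  LSeriesSummable_of_bounded_of_one_lt_re (fun n _ => norm_sigmaIndicator_le q k n) hs

section

variable {q k : ℕ} [Fact q.Prime]

variable (q k) in
/-- The logarithm of the Dirichlet series `∑ n ^ (-s)` over the `n` with `q ∤ σ_k(n)`. -/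
noncomputable def logSeries (s : ℂ) : ℂ :=
  ∑ χ : DirichletCharacter ℂ q, (charExponent (k.gcd (q - 1)) χ : ℂ) * logL χ s +
    correction q (k.gcd (q - 1)) s

lemma LSeries_sigmaIndicator_eq_exp (hk : k ≠ 0) (hr : 2 * k.gcd (q - 1) ∣ q - 1) {s : ℂ}
    (hs : 1 < s.re) : LSeries (sigmaIndicator q k) s = Complex.exp (logSeries q k s) := by
  set f : ℕ → ℂ := LSeries.term (sigmaIndicator q k) s with hf
  have hf1 : f 1 = 1 := by
    rw [hf, LSeries.term_of_ne_zero one_ne_zero, sigmaIndicator_one]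
    simp
  have hf0 : f 0 = 0 := LSeries.term_zero _ _
  have hmul : ∀ {m n : ℕ}, m.Coprime n → f (m * n) = f m * f n := by
    intro m n hmn
    rcases eq_or_ne m 0 with rfl | hm
    · simp [hf0]
    rcases eq_or_ne n 0 with rfl | hn
    · simp [hf0]
    rw [hf, LSeries.term_of_ne_zero hm, LSeries.term_of_ne_zero hn,
      LSeries.term_of_ne_zero (mul_ne_zero hm hn), sigmaIndicator_mul k hmn, Nat.cast_mul,
      Complex.natCast_mul_natCast_cpow, mul_div_mul_comm]
  have h1 := EulerProduct.eulerProduct_hasProd hf1 hmul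
    (LSeriesSummable_sigmaIndicator (k := k) hs).norm hf0
  have hloc : (fun p : Nat.Primes => ∑' e : ℕ, f ((p : ℕ) ^ e)) = fun p : Nat.Primes =>
      Complex.exp (logEulerFactor q (k.gcd (q - 1)) p (((p : ℕ) : ℂ) ^ (-s))) := by
    funext p
    have hX : ‖((p : ℕ) : ℂ) ^ (-s)‖ < 1 :=
      (norm_prime_cpow_neg_lt p hs).trans_lt (by norm_num)
    rw [exp_logEulerFactor hk p.2 hX]
    refine tsum_congr fun e => ?_
    rw [hf, LSeries.term_of_ne_zero (pow_ne_zero _ p.2.ne_zero), div_eq_mul_inv, ← Complex.cpow_neg,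
      Nat.cast_pow, ← Complex.natCast_cpow_natCast_mul, mul_comm (e : ℂ), Complex.cpow_mul_nat]
  have hsum : HasSum (fun p : Nat.Primes =>
      logEulerFactor q (k.gcd (q - 1)) p (((p : ℕ) : ℂ) ^ (-s))) (logSeries q k s) := by
    obtain ⟨u, hu, hb⟩ := exists_summable_logCorrection_bound hr
    have hc : Summable fun p : Nat.Primes =>
        logCorrection q (k.gcd (q - 1)) p (((p : ℕ) : ℂ) ^ (-s)) :=
      Summable.of_norm_bounded hu fun p => hb p s (by linarith)
    have hL : HasSum (fun p : Nat.Primes => ∑ χ : DirichletCharacter ℂ q,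
        (charExponent (k.gcd (q - 1)) χ : ℂ) * -Complex.log (1 - χ p * ((p : ℕ) : ℂ) ^ (-s)))
        (∑ χ : DirichletCharacter ℂ q, (charExponent (k.gcd (q - 1)) χ : ℂ) * logL χ s) :=
      hasSum_sum fun χ _ =>
        (DirichletCharacter.summable_neg_log_one_sub_mul_prime_cpow χ hs).hasSum.mul_left _
    have h := hL.add hc.hasSum
    have e : (fun p : Nat.Primes => logEulerFactor q (k.gcd (q - 1)) p (((p : ℕ) : ℂ) ^ (-s))) =
        fun p : Nat.Primes => ∑ χ : DirichletCharacter ℂ q, (charExponent (k.gcd (q - 1)) χ : ℂ) *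
          -Complex.log (1 - χ p * ((p : ℕ) : ℂ) ^ (-s)) +
          logCorrection q (k.gcd (q - 1)) p (((p : ℕ) : ℂ) ^ (-s)) := by
      funext p
      rw [logCorrection]
      simp only [mul_neg, Finset.sum_neg_distrib]
      ring
    rw [e]
    exact h
  rw [hloc] at h1
  exact h1.unique hsum.cexp

lemma differentiableAt_logSeries (hr : 2 * k.gcd (q - 1) ∣ q - 1) {s : ℂ} (hs : 1 < s.re) :
    DifferentiableAt ℂ (logSeries q k) s := by
  have h : DifferentiableAt ℂ (correction q (k.gcd (q - 1))) s :=
    ((differentiableOn_correction hr) s (by change 3 / 4 < s.re; linarith)).differentiableAt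
      ((isOpen_lt_re _).mem_nhds (by change 3 / 4 < s.re; linarith))
  exact (DifferentiableAt.fun_sum fun χ _ => (differentiableAt_logL χ hs).const_mul _).fun_add h

lemma deriv_logSeries (hr : 2 * k.gcd (q - 1) ∣ q - 1) {s : ℂ} (hs : 1 < s.re) :
    deriv (logSeries q k) s = ∑ χ : DirichletCharacter ℂ q,
      (charExponent (k.gcd (q - 1)) χ : ℂ) * (deriv χ.LFunction s / χ.LFunction s) +
        deriv (correction q (k.gcd (q - 1))) s := by
  have h : DifferentiableAt ℂ (correction q (k.gcd (q - 1))) s :=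
    ((differentiableOn_correction hr) s (by change 3 / 4 < s.re; linarith)).differentiableAt
      ((isOpen_lt_re _).mem_nhds (by change 3 / 4 < s.re; linarith))
  have h1 := (HasDerivAt.fun_sum fun (χ : DirichletCharacter ℂ q)
      (_ : χ ∈ Finset.univ) =>
    ((differentiableAt_logL χ hs).hasDerivAt.const_mul
      (charExponent (k.gcd (q - 1)) χ : ℂ))).fun_add h.hasDerivAt
  simp only [deriv_logL _ hs] at h1
  exact h1.deriv

lemma hasDerivAt_LSeries_sigmaIndicator (hk : k ≠ 0) (hr : 2 * k.gcd (q - 1) ∣ q - 1) {s : ℂ}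
    (hs : 1 < s.re) : HasDerivAt (LSeries (sigmaIndicator q k))
      (LSeries (sigmaIndicator q k) s * deriv (logSeries q k) s) s := by
  have h1 : LSeries (sigmaIndicator q k) =ᶠ[𝓝 s] fun w => Complex.exp (logSeries q k w) :=
    Filter.eventuallyEq_of_mem ((isOpen_lt_re 1).mem_nhds hs) fun w hw =>
      LSeries_sigmaIndicator_eq_exp hk hr hw
  rw [LSeries_sigmaIndicator_eq_exp hk hr hs]
  exact ((differentiableAt_logSeries hr hs).hasDerivAt.cexp).congr_of_eventuallyEq h1

lemma slowUpTo_LSeries_sigmaIndicator (hk : k ≠ 0) (hr : 2 * k.gcd (q - 1) ∣ q - 1) (n : ℕ) :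
    SlowUpTo n (LSeries (sigmaIndicator q k)) := by
  have hF : SlowGrowth (LSeries (sigmaIndicator q k)) := by
    have hprod : ∀ t : Finset (DirichletCharacter ℂ q), SlowGrowth fun s =>
        ∏ χ ∈ t, Complex.exp ((charExponent (k.gcd (q - 1)) χ : ℝ) * logL χ s) := by
      classical
      intro t
      induction t using Finset.induction_on with
      | empty => exact SlowGrowth.of_bound 1 fun s _ _ => by simp
      | insert χ t hχ ih =>
        simp only [Finset.prod_insert hχ]
        exact (slowGrowth_exp_mul_logL χ _).mul ih
    have hexp : SlowGrowth fun s => Complex.exp (correction q (k.gcd (q - 1)) s) := by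
      obtain ⟨u, hu, hb⟩ := exists_summable_logCorrection_bound hr
      refine SlowGrowth.of_bound (Real.exp (∑' p, u p)) fun s h1 _ => ?_
      rw [Complex.norm_exp]
      gcongr
      refine (Complex.re_le_norm _).trans ?_
      exact tsum_of_norm_bounded hu.hasSum fun p => hb p s (by linarith)
    refine ((hprod Finset.univ).mul hexp).congr fun s hs => ?_
    rw [LSeries_sigmaIndicator_eq_exp hk hr hs, logSeries, Complex.exp_add, Complex.exp_sum]
  have hd : DifferentiableOn ℂ (LSeries (sigmaIndicator q k)) {s | 1 < s.re} := fun s hs =>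
    (hasDerivAt_LSeries_sigmaIndicator hk hr hs).differentiableAt.differentiableWithinAt
  have hΦ : SlowUpTo n (deriv (logSeries q k)) := by
    refine ((SlowUpTo.sum Finset.univ fun (χ : DirichletCharacter ℂ q) _ =>
      (slowUpTo_logDeriv_LFunction χ n).const_mul (charExponent (k.gcd (q - 1)) χ : ℂ)).add
        (slowUpTo_correction hr (n + 1)).deriv).congr fun s hs => ?_
    exact (deriv_logSeries hr hs).symm
  exact SlowUpTo.of_deriv_eq_mul hd hF hΦ fun s hs =>
    (hasDerivAt_LSeries_sigmaIndicator hk hr hs).deriv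

end

section

variable {q k : ℕ} [Fact q.Prime]

open Classical in
/-- The entire function `(s - 1) * L(s, χ)` for the principal character, `L(s, χ)` otherwise. -/
noncomputable def entireL (χ : DirichletCharacter ℂ q) : ℂ → ℂ :=
  if χ = 1 then DirichletCharacter.LFunctionTrivChar₁ q else χ.LFunction

lemma differentiable_entireL (χ : DirichletCharacter ℂ q) : Differentiable ℂ (entireL χ) := by
  unfold entireL
  split_ifs with h
  · exact DirichletCharacter.differentiable_LFunctionTrivChar₁ q
  · exact DirichletCharacter.differentiable_LFunction h

lemma entireL_one_ne_zero (χ : DirichletCharacter ℂ q) : entireL χ 1 ≠ 0 := by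
  unfold entireL
  split_ifs with h
  · exact DirichletCharacter.LFunctionTrivChar₁_apply_one_ne_zero q
  · exact DirichletCharacter.LFunction_apply_one_ne_zero h

open Classical in
lemma logDeriv_LFunction_eq (χ : DirichletCharacter ℂ q) {s : ℂ} (hs : 1 < s.re) :
    deriv χ.LFunction s / χ.LFunction s =
      deriv (entireL χ) s / entireL χ s - if χ = 1 then (s - 1)⁻¹ else 0 := by
  unfold entireL
  have hL := LFunction_ne_zero_of_one_lt_re χ hs
  split_ifs with h
  · subst h
    have hs1 : s ≠ 1 := by
      rintro rfl
      simp at hs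
    have hs1' : s - 1 ≠ 0 := sub_ne_zero.mpr hs1
    rw [DirichletCharacter.deriv_LFunctionTrivChar₁_apply_of_ne_one q hs1,
      DirichletCharacter.LFunctionTrivChar₁, Function.update_of_ne hs1]
    change DirichletCharacter.LFunctionTrivChar q s ≠ 0 at hL
    change deriv (DirichletCharacter.LFunctionTrivChar q) s /
      DirichletCharacter.LFunctionTrivChar q s = _
    field_simp
    ring
  · rw [sub_zero]

lemma LFunctionTrivChar₁_eq (s : ℂ) : DirichletCharacter.LFunctionTrivChar₁ q s =
    (1 - (q : ℂ) ^ (-s)) * riemannZeta₁ s := by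
  have hq : q.Prime := Fact.out
  rcases eq_or_ne s 1 with rfl | hs
  · rw [DirichletCharacter.LFunctionTrivChar₁, Function.update_self, hq.primeFactors,
      Finset.prod_singleton, riemannZeta₁_one, mul_one, Complex.cpow_neg_one]
  · rw [DirichletCharacter.LFunctionTrivChar₁, Function.update_of_ne hs,
      DirichletCharacter.LFunctionTrivChar_eq_mul_riemannZeta hs, hq.primeFactors,
      Finset.prod_singleton, riemannZeta_eq_inv_sub_mul hs]
    have hs1' : s - 1 ≠ 0 := sub_ne_zero.mpr hs
    field_simp

lemma logDeriv_entireL_one_one : deriv (entireL (1 : DirichletCharacter ℂ q)) 1 /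
    entireL (1 : DirichletCharacter ℂ q) 1 =
      ((Real.eulerMascheroniConstant + Real.log q / (q - 1) : ℝ) : ℂ) := by
  have hq : q.Prime := Fact.out
  have hq0 : (q : ℂ) ≠ 0 := by exact_mod_cast hq.ne_zero
  have hq1 : (q : ℂ) - 1 ≠ 0 := by
    rw [sub_ne_zero]
    exact_mod_cast hq.one_lt.ne'
  have e : entireL (1 : DirichletCharacter ℂ q) =
      fun s => (1 - (q : ℂ) ^ (-s)) * riemannZeta₁ s := by
    funext s
    rw [entireL, if_pos rfl, LFunctionTrivChar₁_eq]
  have h1 : HasDerivAt (fun s : ℂ => 1 - (q : ℂ) ^ (-s))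
      (-((q : ℂ) ^ (-1 : ℂ) * Complex.log q * (-1))) 1 :=
    ((hasDerivAt_neg (1 : ℂ)).const_cpow (Or.inl hq0)).const_sub 1
  have h2 := h1.mul (differentiable_riemannZeta₁ 1).hasDerivAt
  have h3 : deriv (fun s : ℂ => (1 - (q : ℂ) ^ (-s)) * riemannZeta₁ s) 1 = _ := h2.deriv
  rw [e, h3]
  simp only [riemannZeta₁_one, deriv_riemannZeta₁_one, Complex.cpow_neg_one]
  push_cast
  field_simp
  ring

variable (q k) in
/-- The regular part of the logarithmic derivative of the generating series. -/
noncomputable def regularPart (s : ℂ) : ℂ :=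
  ∑ χ : DirichletCharacter ℂ q,
    (charExponent (k.gcd (q - 1)) χ : ℂ) * (deriv (entireL χ) s / entireL χ s) +
      deriv (correction q (k.gcd (q - 1))) s

lemma charExponent_one {r : ℕ} (hr : r ≠ 0) :
    charExponent r (1 : DirichletCharacter ℂ q) = 1 - 1 / ((q - 1) / r : ℕ) := by
  have h : ∀ m : ℕ, m ≠ 0 → TrivialOnRoots m (1 : DirichletCharacter ℂ q) := by
    intro m hm a ha
    exact MulChar.one_apply (IsUnit.of_pow_eq_one ha hm)
  rw [charExponent, if_pos rfl, if_pos (h _ (by omega)), if_pos (h _ hr)]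
  ring

lemma deriv_logSeries_eq_regularPart (hr : 2 * k.gcd (q - 1) ∣ q - 1) {s : ℂ} (hs : 1 < s.re) :
    deriv (logSeries q k) s =
      regularPart q k s -
        charExponent (k.gcd (q - 1)) (1 : DirichletCharacter ℂ q) * (s - 1)⁻¹ := by
  classical
  rw [deriv_logSeries hr hs, regularPart]
  simp only [logDeriv_LFunction_eq _ hs, mul_sub, Finset.sum_sub_distrib, mul_ite, mul_zero,
    Finset.sum_ite_eq', Finset.mem_univ, if_true]
  ring

lemma exists_differentiableOn_regularPart (hr : 2 * k.gcd (q - 1) ∣ q - 1) : ∃ ρ : ℝ, 0 < ρ ∧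
    DifferentiableOn ℂ (regularPart q k) (Metric.ball 1 ρ) := by
  have h1 : ∀ᶠ s in 𝓝 (1 : ℂ), ∀ χ : DirichletCharacter ℂ q, entireL χ s ≠ 0 := by
    rw [eventually_all]
    intro χ
    exact (differentiable_entireL χ).continuous.continuousAt.eventually_ne (entireL_one_ne_zero χ)
  have h2 : ∀ᶠ s in 𝓝 (1 : ℂ), 3 / 4 < s.re :=
    (isOpen_lt_re _).mem_nhds (by norm_num : (3 : ℝ) / 4 < (1 : ℂ).re)
  obtain ⟨ρ, hρ, hball⟩ := Metric.eventually_nhds_iff_ball.mp (h1.and h2)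
  refine ⟨ρ, hρ, fun s hs => ?_⟩
  obtain ⟨h3, h4⟩ := hball s hs
  have h5 : DifferentiableAt ℂ (deriv (correction q (k.gcd (q - 1)))) s :=
    (((differentiableOn_correction hr).deriv (isOpen_lt_re _)) s h4).differentiableAt
      ((isOpen_lt_re _).mem_nhds h4)
  refine DifferentiableAt.differentiableWithinAt ?_
  refine (DifferentiableAt.fun_sum fun χ _ => DifferentiableAt.const_mul ?_ _).fun_add h5
  have h6 : Differentiable ℂ (deriv (entireL χ)) := (differentiable_entireL χ).deriv
  exact (h6 s).fun_div (differentiable_entireL χ s) (h3 χ)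

lemma re_regularPart_one (hk : k ≠ 0) (hr : 2 * k.gcd (q - 1) ∣ q - 1) :
    (regularPart q k 1).re = gammakq q k := by
  set r := k.gcd (q - 1) with hrdef
  have hr0 : r ≠ 0 := by
    rw [hrdef]
    exact Nat.gcd_ne_zero_left hk
  set g : DirichletCharacter ℂ q → ℂ := fun χ => deriv (entireL χ) 1 / entireL χ 1 with hg
  have hq0 : q ≠ 0 := (Fact.out : q.Prime).ne_zero
  have hsum : ∀ m : ℕ, m ≠ 0 →
      (∑ᶠ χ ∈ {χ : DirichletCharacter ℂ q | TrivialOnRoots m χ}, g χ).re =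
        Real.log q / (q - 1) + gammaK q m := by
    intro m hm
    have hset : {χ : DirichletCharacter ℂ q | TrivialOnRoots m χ} =
        insert 1 {χ : DirichletCharacter ℂ q | χ ≠ 1 ∧ ∀ a : ZMod q, a ^ m = 1 → χ a = 1} := by
      ext χ
      simp only [Set.mem_ofPred_eq, Set.mem_insert_iff, TrivialOnRoots]
      constructor
      · intro h
        by_cases h1 : χ = 1
        · exact Or.inl h1
        · exact Or.inr ⟨h1, h⟩
      · rintro (rfl | h)
        · intro a ha
          exact MulChar.one_apply (IsUnit.of_pow_eq_one ha hm)
        · exact h.2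
    have hmem : ∀ χ ∈ {χ : DirichletCharacter ℂ q | χ ≠ 1 ∧ ∀ a : ZMod q, a ^ m = 1 → χ a = 1},
        g χ = deriv (Lfun χ) 1 / Lfun χ 1 := by
      intro χ hχ
      have e : Lfun χ = entireL χ := by
        funext s
        rw [Lfun, dif_neg hq0, entireL, if_neg hχ.1]
      rw [hg, e]
    have hg1 : (g 1).re = Real.eulerMascheroniConstant + Real.log q / (q - 1) := by
      rw [hg]
      simp only [logDeriv_entireL_one_one, Complex.ofReal_re]
    rw [hset, finsum_mem_insert _ (fun h => h.1 rfl) (Set.toFinite _), finsum_mem_congr rfl hmem,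
      Complex.add_re, gammaK, hg1]
    ring
  rw [regularPart, ← hrdef, deriv_correction_one hr, sum_charExponent_mul r g, gammakq, ← hrdef]
  have h1 := hsum (2 * r) (by omega)
  have h2 := hsum r hr0
  have e1 : (2 : ℂ) / ((q - 1) / r : ℕ) = ((2 / ((q - 1) / r : ℕ) : ℝ) : ℂ) := by push_cast; rfl
  have e2 : (1 : ℂ) / ((q - 1) / r : ℕ) = ((1 / ((q - 1) / r : ℕ) : ℝ) : ℂ) := by push_cast; rfl
  rw [e1, e2, Complex.add_re, Complex.add_re, Complex.sub_re, Complex.re_ofReal_mul,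
    Complex.re_ofReal_mul, h1, h2, Complex.ofReal_re]
  simp only [hg]
  rw [logDeriv_entireL_one_one, Complex.ofReal_re]
  simp only [div_eq_mul_inv, mul_inv]
  ring

end

lemma exists_LSeries_sigmaIndicator_eq_ofReal (q k : ℕ) (s : ℝ) :
    ∃ y : ℝ, 0 ≤ y ∧ LSeries (sigmaIndicator q k) s = y := by
  have hterm : ∀ n, ∃ y : ℝ, 0 ≤ y ∧ LSeries.term (sigmaIndicator q k) s n = y := by
    intro n
    rcases eq_or_ne n 0 with rfl | hn
    · exact ⟨0, le_rfl, by simp⟩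
    · rw [LSeries.term_of_ne_zero hn, sigmaIndicator]
      split_ifs with h
      · exact ⟨0, le_rfl, by simp⟩
      · refine ⟨1 / (n : ℝ) ^ s, by positivity, ?_⟩
        push_cast
        rw [Complex.ofReal_cpow (by positivity)]
        simp
  choose y hy0 hy using hterm
  refine ⟨∑' n, y n, tsum_nonneg hy0, ?_⟩
  rw [Complex.ofReal_tsum]
  exact tsum_congr hy

section

variable {q k : ℕ} [Fact q.Prime]

lemma exists_local_factorization (hk : k ≠ 0) (hr : 2 * k.gcd (q - 1) ∣ q - 1) :
    ∃ (ρ : ℝ) (K : ℂ → ℂ) (κ : ℝ), 0 < ρ ∧ DifferentiableOn ℂ K (Metric.ball 0 ρ) ∧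
      (∀ w ∈ Metric.ball (0 : ℂ) ρ, 0 < w.re → LSeries (sigmaIndicator q k) (1 + w) =
        w ^ (-(charExponent (k.gcd (q - 1)) (1 : DirichletCharacter ℂ q) : ℂ)) * K w) ∧
      0 < κ ∧ K 0 = κ ∧ deriv K 0 = κ * regularPart q k 1 := by
  obtain ⟨ρ, hρ, hΘ⟩ := exists_differentiableOn_regularPart hr
  set z := charExponent (k.gcd (q - 1)) (1 : DirichletCharacter ℂ q) with hz
  obtain ⟨T, hT⟩ := hΘ.isExactOn_ball
  set s : Set ℂ := Metric.ball 0 ρ ∩ {w | 0 < w.re} with hs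
  have hso : IsOpen s := Metric.isOpen_ball.inter (isOpen_lt_re 0)
  have hsc : Convex ℝ s := (convex_ball _ _).inter (convex_halfSpace_re_gt 0)
  have hT' : ∀ w ∈ Metric.ball (0 : ℂ) ρ,
      HasDerivAt (fun w => T (1 + w)) (regularPart q k (1 + w)) w := by
    intro w hw
    have h1 : (1 + w) ∈ Metric.ball (1 : ℂ) ρ := by
      rw [mem_ball_iff_norm] at hw ⊢
      simpa using hw
    exact (hT _ h1).comp_const_add 1 w
  set D : ℂ → ℂ := fun w => logSeries q k (1 + w) + z * Complex.log w - T (1 + w) with hD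
  have hDd : ∀ w ∈ s, HasDerivAt D 0 w := by
    rintro w ⟨hw, hw0⟩
    have hw0' : 0 < w.re := hw0
    have hre : 1 < (1 + w).re := by simpa using hw0'
    have h1 : HasDerivAt (fun w => logSeries q k (1 + w)) (deriv (logSeries q k) (1 + w)) w :=
      (differentiableAt_logSeries hr hre).hasDerivAt.comp_const_add 1 w
    have h2 := (Complex.hasDerivAt_log (Or.inl hw0' : w ∈ Complex.slitPlane)).const_mul (z : ℂ)
    refine ((h1.fun_add h2).fun_sub (hT' w hw)).congr_deriv ?_
    rw [deriv_logSeries_eq_regularPart hr hre, ← hz]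
    simp
  have hw₀ : ((ρ / 2 : ℝ) : ℂ) ∈ s := by
    refine ⟨?_, ?_⟩
    · rw [mem_ball_iff_norm, sub_zero, Complex.norm_real, Real.norm_of_nonneg (by positivity)]
      linarith
    · change 0 < ((ρ / 2 : ℝ) : ℂ).re
      rw [Complex.ofReal_re]
      positivity
  set d := D ((ρ / 2 : ℝ) : ℂ) with hd
  have hconst : ∀ w ∈ s, D w = d := fun w hw =>
    hso.is_const_of_deriv_eq_zero hsc.isPreconnected
      (fun w hw => (hDd w hw).differentiableAt.differentiableWithinAt)
      (fun w hw => (hDd w hw).deriv) hw hw₀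
  set K : ℂ → ℂ := fun w => Complex.exp (d + T (1 + w)) with hK
  have hKd : ∀ w ∈ Metric.ball (0 : ℂ) ρ, HasDerivAt K (K w * regularPart q k (1 + w)) w :=
    fun w hw => ((hT' w hw).const_add d).cexp
  have hKF : ∀ w ∈ Metric.ball (0 : ℂ) ρ, 0 < w.re → LSeries (sigmaIndicator q k) (1 + w) =
        w ^ (-(z : ℂ)) * K w := by
    intro w hw hw0
    have hw' : w ≠ 0 := by
      rintro rfl
      simp at hw0
    rw [LSeries_sigmaIndicator_eq_exp hk hr (by simpa using hw0), Complex.cpow_def_of_ne_zero hw',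
      hK, ← Complex.exp_add, ← hconst w ⟨hw, hw0⟩, hD]
    congr 1
    ring
  have hreal : ∃ κ : ℝ, 0 ≤ κ ∧ K 0 = κ := by
    have h0 : (0 : ℂ) ∈ Metric.ball (0 : ℂ) ρ := Metric.mem_ball_self hρ
    have hclosed : IsClosed ((fun x : ℝ => (x : ℂ)) '' Set.Ici 0) :=
      Complex.isometry_ofReal.isClosedEmbedding.isClosedMap _ isClosed_Ici
    have htend : Tendsto (fun w : ℝ => K w) (𝓝[>] 0) (𝓝 (K 0)) := by
      have h1 : Tendsto K (𝓝 ((0 : ℝ) : ℂ)) (𝓝 (K 0)) := by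
        simpa using (hKd 0 h0).continuousAt.tendsto
      exact h1.comp (Complex.continuous_ofReal.continuousAt.tendsto.mono_left nhdsWithin_le_nhds)
    have hev : ∀ᶠ w : ℝ in 𝓝[>] 0, K w ∈ (fun x : ℝ => (x : ℂ)) '' Set.Ici 0 := by
      filter_upwards [Ioo_mem_nhdsGT hρ] with w hw
      have hwb : (w : ℂ) ∈ Metric.ball (0 : ℂ) ρ := by
        rw [mem_ball_iff_norm, sub_zero, Complex.norm_real, Real.norm_of_nonneg hw.1.le]
        exact hw.2
      have h1 := hKF w hwb (by simpa using hw.1)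
      obtain ⟨y, hy0, hy⟩ := exists_LSeries_sigmaIndicator_eq_ofReal q k (1 + w)
      have h2 : (w : ℂ) ^ (-(z : ℂ)) = ((w ^ (-z) : ℝ) : ℂ) := by
        rw [Complex.ofReal_cpow hw.1.le]
        simp
      have hwz : 0 < w ^ (-z) := Real.rpow_pos_of_pos hw.1 _
      push_cast at hy
      rw [hy, h2] at h1
      refine ⟨y / w ^ (-z), div_nonneg hy0 hwz.le, ?_⟩
      have : ((w ^ (-z) : ℝ) : ℂ) ≠ 0 := by exact_mod_cast hwz.ne'
      change ((y / w ^ (-z) : ℝ) : ℂ) = K w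
      rw [Complex.ofReal_div, h1, mul_div_cancel_left₀ _ this]
    obtain ⟨κ, hκ0, hκ⟩ := hclosed.mem_of_tendsto htend hev
    exact ⟨κ, hκ0, hκ.symm⟩
  obtain ⟨κ, hκ0, hκ⟩ := hreal
  refine ⟨ρ, K, κ, hρ, fun w hw => (hKd w hw).differentiableAt.differentiableWithinAt, hKF,
    lt_of_le_of_ne hκ0 ?_, hκ, ?_⟩
  · rintro rfl
    rw [Complex.ofReal_zero] at hκ
    exact Complex.exp_ne_zero _ hκ
  · rw [(hKd 0 (Metric.mem_ball_self hρ)).deriv, hκ, add_zero]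

end

section Tauberian

open MeasureTheory Asymptotics
open scoped Real FourierTransform

/-- Functions on `(0, ∞)` whose Laplace integral converges absolutely on the right half plane. -/
noncomputable def LaplaceAdmissible (g : ℝ → ℂ) : Prop :=
  ∀ σ : ℝ, 0 < σ → Integrable (fun u : ℝ => g u * Complex.exp (-(σ * u : ℝ)))
    (volume.restrict (Set.Ioi 0))

/-- The Laplace transform of a function on `(0, ∞)`. -/
noncomputable def laplace (g : ℝ → ℂ) (w : ℂ) : ℂ :=
  ∫ u : ℝ in Set.Ioi 0, g u * Complex.exp (-(w * u))

namespace LaplaceAdmissible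

variable {f g : ℝ → ℂ}

lemma aestronglyMeasurable (hg : LaplaceAdmissible g) :
    AEStronglyMeasurable g (volume.restrict (Set.Ioi 0)) := by
  have h1 := (hg 1 one_pos).aestronglyMeasurable
  have h2 : AEStronglyMeasurable (fun u : ℝ => Complex.exp (u : ℂ))
      (volume.restrict (Set.Ioi 0)) := by
    apply Continuous.aestronglyMeasurable
    fun_prop
  refine (h1.mul h2).congr (ae_of_all _ fun u => ?_)
  simp only [Pi.mul_apply]
  rw [mul_assoc, ← Complex.exp_add]
  simp

lemma integrable (hg : LaplaceAdmissible g) {w : ℂ} (hw : 0 < w.re) :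
    Integrable (fun u : ℝ => g u * Complex.exp (-(w * u))) (volume.restrict (Set.Ioi 0)) := by
  refine (hg w.re hw).mono (hg.aestronglyMeasurable.mul ?_) (ae_of_all _ fun u => ?_)
  · apply Continuous.aestronglyMeasurable
    fun_prop
  · rw [norm_mul, norm_mul, Complex.norm_exp, Complex.norm_exp]
    simp

lemma sub (hf : LaplaceAdmissible f) (hg : LaplaceAdmissible g) :
    LaplaceAdmissible (fun u => f u - g u) := fun σ hσ => by
  simpa only [sub_mul, Pi.sub_def] using (hf σ hσ).sub (hg σ hσ)

lemma const_mul (hg : LaplaceAdmissible g) (c : ℂ) :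
    LaplaceAdmissible (fun u => c * g u) := fun σ hσ => by
  simpa only [mul_assoc] using (hg σ hσ).const_mul c

lemma finset_sum {ι : Type*} (s : Finset ι) {g : ι → ℝ → ℂ}
    (hg : ∀ i ∈ s, LaplaceAdmissible (g i)) :
    LaplaceAdmissible (fun u => ∑ i ∈ s, g i u) := by
  intro σ hσ
  simpa only [Finset.sum_mul] using integrable_finsetSum s fun i hi => hg i hi σ hσ

lemma mul_id (hg : LaplaceAdmissible g) : LaplaceAdmissible (fun u => u * g u) := by
  intro σ hσ
  refine ((hg (σ / 2) (half_pos hσ)).const_mul (2 / σ : ℂ)).mono ?_ ?_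
  · refine (AEStronglyMeasurable.mul ?_ hg.aestronglyMeasurable).mul ?_ <;>
    · apply Continuous.aestronglyMeasurable
      fun_prop
  · rw [ae_restrict_iff' measurableSet_Ioi]
    refine ae_of_all _ fun u (hu : 0 < u) => ?_
    simp only [norm_mul, norm_div, Complex.norm_exp, Complex.norm_real, Real.norm_of_nonneg hu.le,
      Real.norm_of_nonneg hσ.le, Complex.neg_re, Complex.ofReal_re, Complex.norm_ofNat]
    have h1 : u ≤ 2 / σ * Real.exp (σ / 2 * u) := by
      have := Real.add_one_le_exp (σ / 2 * u)
      calc u = 2 / σ * (σ / 2 * u) := by field_simp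
        _ ≤ _ := by gcongr; linarith
    have h2 : Real.exp (-(σ / 2 * u)) = Real.exp (σ / 2 * u) * Real.exp (-(σ * u)) := by
      rw [← Real.exp_add]
      ring_nf
    rw [h2]
    calc u * ‖g u‖ * Real.exp (-(σ * u))
        ≤ (2 / σ * Real.exp (σ / 2 * u)) * ‖g u‖ * Real.exp (-(σ * u)) := by gcongr
      _ = _ := by ring

lemma pow_mul (hg : LaplaceAdmissible g) (n : ℕ) :
    LaplaceAdmissible (fun u => (u : ℂ) ^ n * g u) := by
  induction n with
  | zero => simpa using hg
  | succ n ih =>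
    refine (funext fun u => ?_ : _ = fun u : ℝ => (u : ℂ) ^ (n + 1) * g u) ▸ ih.mul_id
    ring

lemma hasDerivAt_laplace (hg : LaplaceAdmissible g) {w : ℂ} (hw : 0 < w.re) :
    HasDerivAt (laplace g) (-laplace (fun u => u * g u) w) w := by
  have hs : {s : ℂ | w.re / 2 < s.re} ∈ 𝓝 w :=
    (isOpen_lt_re _).mem_nhds (half_lt_self hw)
  have hg' := hg.mul_id
  have key := hasDerivAt_integral_of_dominated_loc_of_deriv_le
    (μ := volume.restrict (Set.Ioi (0 : ℝ))) (x₀ := w)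
    (F := fun (s : ℂ) (u : ℝ) => g u * Complex.exp (-(s * u)))
    (F' := fun (s : ℂ) (u : ℝ) => -((u * g u) * Complex.exp (-(s * u))))
    (bound := fun u : ℝ => ‖u * g u * Complex.exp (-(w.re / 2 * u : ℝ))‖)
    hs ?_ (hg.integrable hw) ?_ ?_ (hg' _ (half_pos hw)).norm ?_
  · have h2 := key.2
    rw [integral_neg] at h2
    exact h2
  · filter_upwards [hs] with s hs
    exact (hg.integrable ((half_pos hw).trans hs)).aestronglyMeasurable
  · exact (hg'.integrable hw).aestronglyMeasurable.neg
  · rw [ae_restrict_iff' measurableSet_Ioi]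
    refine ae_of_all _ fun u (hu : 0 < u) s (hs : w.re / 2 < s.re) => ?_
    rw [norm_neg, norm_mul, norm_mul _ (Complex.exp _), Complex.norm_exp, Complex.norm_exp]
    refine mul_le_mul_of_nonneg_left (Real.exp_le_exp.mpr ?_) (norm_nonneg _)
    simp only [Complex.neg_re, Complex.mul_re, Complex.ofReal_re, Complex.ofReal_im, mul_zero,
      sub_zero]
    nlinarith
  · refine ae_of_all _ fun u s _ => ?_
    have h1 : HasDerivAt (fun s : ℂ => Complex.exp (-(s * u)))
        (Complex.exp (-(s * u)) * (-(1 * u))) s :=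
      (((hasDerivAt_id s).mul_const (u : ℂ)).neg).cexp
    exact (h1.const_mul (g u)).congr_deriv (by ring)

lemma differentiableOn_laplace (hg : LaplaceAdmissible g) :
    DifferentiableOn ℂ (laplace g) {w | 0 < w.re} := fun _ hw =>
  (hg.hasDerivAt_laplace hw).differentiableAt.differentiableWithinAt

lemma iteratedDeriv_laplace (hg : LaplaceAdmissible g) (n : ℕ) {w : ℂ} (hw : 0 < w.re) :
    iteratedDeriv n (laplace g) w = (-1) ^ n * laplace (fun u => (u : ℂ) ^ n * g u) w := by
  induction n generalizing w with
  | zero => simp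
  | succ n ih =>
    have hev : iteratedDeriv n (laplace g) =ᶠ[𝓝 w]
        fun w => (-1) ^ n * laplace (fun u => (u : ℂ) ^ n * g u) w := by
      filter_upwards [(isOpen_lt_re 0).mem_nhds hw] with s hs using ih hs
    rw [iteratedDeriv_succ, hev.deriv_eq,
      (((hg.pow_mul n).hasDerivAt_laplace hw).const_mul ((-1) ^ n)).deriv]
    have : (fun u : ℝ => (u : ℂ) * ((u : ℂ) ^ n * g u)) = fun u : ℝ => (u : ℂ) ^ (n + 1) * g u := by
      funext u
      ring
    rw [this]
    ring

end LaplaceAdmissible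

lemma laplaceAdmissible_cpow {s : ℝ} (hs : 0 < s) :
    LaplaceAdmissible (fun u => (u : ℂ) ^ ((s - 1 : ℝ) : ℂ)) := by
  intro σ hσ
  have h := integrableOn_rpow_mul_exp_neg_mul_rpow (s := s - 1) (p := 1) (b := σ) (by linarith)
    one_pos hσ
  refine (h.ofReal (𝕜 := ℂ)).congr ?_
  rw [EventuallyEq, ae_restrict_iff' measurableSet_Ioi]
  refine ae_of_all _ fun u (hu : 0 < u) => ?_
  change ((u ^ (s - 1) * Real.exp (-σ * u ^ (1 : ℝ)) : ℝ) : ℂ) = _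
  beta_reduce
  rw [← Complex.ofReal_cpow hu.le, Real.rpow_one, neg_mul]
  push_cast
  rfl

lemma laplace_cpow {s : ℝ} (hs : 0 < s) {w : ℂ} (hw : 0 < w.re) :
    laplace (fun u => (u : ℂ) ^ ((s - 1 : ℝ) : ℂ)) w = Real.Gamma s * w ^ (-(s : ℂ)) := by
  have hreal : ∀ r : ℝ, 0 < r → laplace (fun u => (u : ℂ) ^ ((s - 1 : ℝ) : ℂ)) r =
      Real.Gamma s * (r : ℂ) ^ (-(s : ℂ)) := by
    intro r hr
    have := Complex.integral_cpow_mul_exp_neg_mul_Ioi (a := s) (by simpa using hs) hr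
    rw [laplace]
    push_cast
    rw [this, Complex.Gamma_ofReal, mul_comm, Complex.cpow_neg, one_div, Complex.inv_cpow]
    rw [Complex.arg_ofReal_of_nonneg hr.le]
    exact Real.pi_pos.ne
  have hopen : IsOpen {w : ℂ | 0 < w.re} := isOpen_lt_re 0
  have h1 := (laplaceAdmissible_cpow hs).differentiableOn_laplace.analyticOnNhd hopen
  have h2 : AnalyticOnNhd ℂ (fun w : ℂ => (Real.Gamma s : ℂ) * w ^ (-(s : ℂ))) {w | 0 < w.re} := by
    refine DifferentiableOn.analyticOnNhd (fun w hw => ?_) hopen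
    exact ((differentiableAt_id.cpow_const (Or.inl hw)).const_mul _).differentiableWithinAt
  refine h1.eqOn_of_preconnected_of_frequently_eq h2 (convex_halfSpace_re_gt 0).isPreconnected
    (z₀ := 1) (by simp) ?_ hw
  have ht : Tendsto (fun r : ℝ => (r : ℂ)) (𝓝[≠] 1) (𝓝[≠] 1) := by
    refine tendsto_nhdsWithin_iff.mpr ⟨?_, ?_⟩
    · have := Complex.continuous_ofReal.continuousAt (x := 1)
      simpa using this.tendsto.mono_left nhdsWithin_le_nhds
    · filter_upwards [self_mem_nhdsWithin] with r hr
      simpa using hr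
  have hev : ∀ᶠ r : ℝ in 𝓝[≠] 1, laplace (fun u => (u : ℂ) ^ ((s - 1 : ℝ) : ℂ)) r =
      Real.Gamma s * (r : ℂ) ^ (-(s : ℂ)) :=
    nhdsWithin_le_nhds ((lt_mem_nhds one_pos).mono fun r hr => hreal r hr)
  exact ht.frequently hev.frequently

lemma iteratedDeriv_cpow_const (s : ℂ) (n : ℕ) {w : ℂ} (hw : w ∈ Complex.slitPlane) :
    iteratedDeriv n (fun w : ℂ => w ^ s) w = (∏ i ∈ Finset.range n, (s - i)) * w ^ (s - n) := by
  induction n generalizing w with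
  | zero => simp
  | succ n ih =>
    have hev : iteratedDeriv n (fun w : ℂ => w ^ s) =ᶠ[𝓝 w]
        fun w => (∏ i ∈ Finset.range n, (s - i)) * w ^ (s - n) := by
      filter_upwards [Complex.isOpen_slitPlane.mem_nhds hw] with v hv using ih hv
    have h1 : HasDerivAt (fun w : ℂ => (∏ i ∈ Finset.range n, (s - i)) * w ^ (s - n))
        ((∏ i ∈ Finset.range n, (s - i)) * ((s - n) * w ^ (s - n - 1) * 1)) w :=
      ((hasDerivAt_id w).cpow_const (c := s - n) hw).const_mul
        (∏ i ∈ Finset.range n, (s - (i : ℂ)))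
    rw [iteratedDeriv_succ, hev.deriv_eq, h1.deriv, Finset.prod_range_succ]
    push_cast
    rw [show s - ((n : ℂ) + 1) = s - n - 1 by ring]
    ring

/-- A function whose Laplace transform is dominated, uniformly on vertical lines approaching the
imaginary axis, by an integrable function of the ordinate is bounded. -/
theorem LaplaceAdmissible.exists_norm_le {B : ℝ → ℂ} (hB : LaplaceAdmissible B)
    (hc : ContinuousOn B (Set.Ioi 0)) {G : ℝ → ℝ} (hG : Integrable G) {σ₀ : ℝ} (hσ₀ : 0 < σ₀)
    (h : ∀ σ t : ℝ, 0 < σ → σ < σ₀ → t ≠ 0 → ‖laplace B (σ + t * Complex.I)‖ ≤ G t) :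
    ∃ M, ∀ u : ℝ, 0 < u → ‖B u‖ ≤ M := by
  have hG' : Integrable fun y : ℝ => G (2 * π * y) := hG.comp_mul_left' (by positivity)
  refine ⟨∫ y : ℝ, G (2 * π * y), fun u hu => ?_⟩
  have key : ∀ σ : ℝ, 0 < σ → σ < σ₀ →
      ‖B u‖ * Real.exp (-(σ * u)) ≤ ∫ y : ℝ, G (2 * π * y) := by
    intro σ hσ hσ'
    set f : ℝ → ℂ := (Set.Ioi 0).indicator fun u : ℝ => B u * Complex.exp (-(σ * u : ℝ)) with hf
    have hfi : Integrable f := (integrable_indicator_iff measurableSet_Ioi).mpr (hB σ hσ)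
    have hF : ∀ y : ℝ, 𝓕 f y = laplace B (σ + (2 * π * y : ℝ) * Complex.I) := by
      intro y
      rw [Real.fourier_real_eq_integral_exp_smul, laplace, ← integral_indicator measurableSet_Ioi]
      refine integral_congr_ae (ae_of_all _ fun v => ?_)
      by_cases hv : v ∈ Set.Ioi (0 : ℝ)
      · simp only [hf, Set.indicator_of_mem hv, smul_eq_mul]
        rw [mul_left_comm, ← Complex.exp_add]
        congr 2
        push_cast
        ring
      · simp only [hf, Set.indicator_of_notMem hv, smul_zero]
    have hbound : ∀ᵐ y : ℝ, ‖𝓕 f y‖ ≤ G (2 * π * y) := by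
      filter_upwards [Measure.ae_ne volume (0 : ℝ)] with y hy
      rw [hF]
      exact h σ _ hσ hσ' (by positivity)
    have hFc : Continuous (𝓕 f) :=
      VectorFourier.fourierIntegral_continuous Real.continuous_fourierChar
        (by exact continuous_inner) hfi
    have hFi : Integrable (𝓕 f) := hG'.mono' hFc.aestronglyMeasurable hbound
    have hfc : ContinuousAt f u := by
      have h1 : ContinuousAt (fun u : ℝ => B u * Complex.exp (-(σ * u : ℝ))) u :=
        (hc.continuousAt (Ioi_mem_nhds hu)).mul (by fun_prop)
      refine h1.congr ?_
      filter_upwards [Ioi_mem_nhds hu] with v hv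
      rw [hf, Set.indicator_of_mem hv]
    have hinv := hfi.fourierInv_fourier_eq hFi hfc
    have hfu : ‖f u‖ = ‖B u‖ * Real.exp (-(σ * u)) := by
      rw [hf, Set.indicator_of_mem (Set.mem_Ioi.mpr hu), norm_mul, Complex.norm_exp]
      simp
    rw [← hfu, ← hinv, Real.fourierInv_eq']
    refine norm_integral_le_of_norm_le hG' ?_
    filter_upwards [hbound] with y hy
    rwa [norm_smul, Complex.norm_exp_ofReal_mul_I, one_mul]
  have ht : Tendsto (fun σ : ℝ => ‖B u‖ * Real.exp (-(σ * u))) (𝓝[>] 0) (𝓝 ‖B u‖) := by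
    have h1 : Continuous fun σ : ℝ => ‖B u‖ * Real.exp (-(σ * u)) := by fun_prop
    have h2 := h1.tendsto 0
    simp only [zero_mul, neg_zero, Real.exp_zero, mul_one] at h2
    exact h2.mono_left nhdsWithin_le_nhds
  refine le_of_tendsto ht ?_
  filter_upwards [Ioo_mem_nhdsGT hσ₀] with σ hσ using key σ hσ.1 hσ.2

/-- A holomorphic function on a disc equals its Taylor polynomial plus a holomorphic multiple of
the next power. -/
lemma exists_taylor_eq {f : ℂ → ℂ} {ρ : ℝ} (hρ : 0 < ρ)
    (hf : DifferentiableOn ℂ f (Metric.ball 0 ρ)) :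
    ∃ (c : ℕ → ℂ) (E : ℕ → ℂ → ℂ), c 0 = f 0 ∧ c 1 = deriv f 0 ∧
      ∀ n, DifferentiableOn ℂ (E n) (Metric.ball 0 ρ) ∧
        ∀ w, f w = ∑ j ∈ Finset.range n, c j * w ^ j + w ^ n * E n w := by
  set E : ℕ → ℂ → ℂ := fun n => (fun g : ℂ → ℂ => dslope g 0)^[n] f with hE
  have hsucc : ∀ n, E (n + 1) = dslope (E n) 0 := fun n => Function.iterate_succ_apply' _ _ _
  have h0 : E 0 = f := rfl
  refine ⟨fun j => E j 0, E, rfl, ?_, fun n => ⟨?_, fun w => ?_⟩⟩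
  · change E 1 0 = _
    rw [hsucc 0, dslope_same, h0]
  · induction n with
    | zero => exact hf
    | succ n ih =>
      rw [hsucc]
      exact (Complex.differentiableOn_dslope (Metric.ball_mem_nhds 0 hρ)).mpr ih
  · induction n with
    | zero => simp [h0]
    | succ n ih =>
      have h1 := sub_smul_dslope (E n) 0 w
      rw [sub_zero, smul_eq_mul, ← hsucc] at h1
      rw [Finset.sum_range_succ, ih]
      linear_combination (-w ^ n) * h1

/-- The ball of radius `‖w‖ / 2` about a point of the right half plane avoids the negative axis. -/
lemma mem_slitPlane_of_norm_sub_le {v w : ℂ} (hw : 0 < w.re) (h : ‖v - w‖ ≤ ‖w‖ / 2) :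
    v ∈ Complex.slitPlane := by
  have hw0 : 0 < ‖w‖ := norm_pos_iff.mpr fun h0 => by simp [h0] at hw
  by_contra hv
  rw [Complex.mem_slitPlane_iff, not_or, not_lt, not_not] at hv
  have h1 : ‖w‖ ≤ ‖v - w‖ := by
    rw [← sq_le_sq₀ (norm_nonneg _) (norm_nonneg _), Complex.sq_norm, Complex.sq_norm,
      Complex.normSq_apply, Complex.normSq_apply, Complex.sub_re, Complex.sub_im, hv.2]
    nlinarith
  linarith

lemma exists_norm_iteratedDeriv_cpow_mul_le {E : ℂ → ℂ} {ρ s : ℝ} (hs : 0 ≤ s) (hρ : 0 < ρ)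
    (hE : DifferentiableOn ℂ E (Metric.ball 0 ρ)) (n : ℕ) :
    ∃ C : ℝ, 0 ≤ C ∧ ∀ w : ℂ, 0 < w.re → ‖w‖ ≤ ρ / 4 →
      ‖iteratedDeriv n (fun w => w ^ (s : ℂ) * E w) w‖ ≤ C * ‖w‖ ^ (s - n) := by
  obtain ⟨M, hM⟩ := (isCompact_closedBall (0 : ℂ) (ρ / 2)).exists_bound_of_continuousOn
    (hE.continuousOn.mono (Metric.closedBall_subset_ball (half_lt_self hρ)))
  have hM0 : 0 ≤ M := (norm_nonneg _).trans (hM 0 (Metric.mem_closedBall_self (by positivity)))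
  refine ⟨n.factorial * 2 ^ n * 2 ^ s * M, by positivity, fun w hw hwρ => ?_⟩
  have hw0 : 0 < ‖w‖ := norm_pos_iff.mpr fun h0 => by simp [h0] at hw
  have hnorm : ∀ v, ‖v - w‖ ≤ ‖w‖ / 2 → ‖v‖ ≤ 2 * ‖w‖ := fun v hv => by
    have := norm_add_le (v - w) w
    rw [sub_add_cancel] at this
    linarith
  have hdiff : DifferentiableOn ℂ (fun w => w ^ (s : ℂ) * E w) (Metric.closedBall w (‖w‖ / 2)) := by
    intro v hv
    rw [mem_closedBall_iff_norm] at hv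
    have h1 : v ∈ Metric.ball (0 : ℂ) ρ := by
      rw [mem_ball_zero_iff]
      linarith [hnorm v hv]
    refine DifferentiableAt.differentiableWithinAt ?_
    exact (differentiableAt_id.cpow_const (mem_slitPlane_of_norm_sub_le hw hv)).mul
      (hE.differentiableAt (Metric.isOpen_ball.mem_nhds h1))
  have hdc : DiffContOnCl ℂ (fun w => w ^ (s : ℂ) * E w) (Metric.ball w (‖w‖ / 2)) :=
    DifferentiableOn.diffContOnCl (hdiff.mono Metric.closure_ball_subset_closedBall)
  have key := Complex.norm_iteratedDeriv_le_of_forall_mem_sphere_norm_le n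
    (C := (2 * ‖w‖) ^ s * M) (half_pos hw0) hdc fun v hv => by
      rw [mem_sphere_iff_norm] at hv
      rw [norm_mul, Complex.norm_cpow_real]
      gcongr
      · exact hnorm v hv.le
      · refine hM v ?_
        rw [mem_closedBall_zero_iff]
        linarith [hnorm v hv.le]
  refine key.trans_eq ?_
  rw [div_pow, Real.mul_rpow two_pos.le hw0.le, Real.rpow_sub hw0, Real.rpow_natCast]
  field_simp

/-- `(1 + w)⁻¹ (2 + w)⁻¹`, the Laplace transform of the kernel `e^{-u} - e^{-2u}`. -/
noncomputable def rieszFactor (w : ℂ) : ℂ := ((1 + w) * (2 + w))⁻¹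

lemma norm_rieszFactor_le {v w : ℂ} (hw : 0 < w.re) (hv : ‖v - w‖ ≤ 1 / 2) :
    ‖rieszFactor v‖ ≤ 16 * (1 + |w.im|) ^ (-2 : ℝ) := by
  have hre : |v.re - w.re| ≤ 1 / 2 := by
    simpa using (Complex.abs_re_le_norm (v - w)).trans hv
  have him : |v.im - w.im| ≤ 1 / 2 := by
    simpa using (Complex.abs_im_le_norm (v - w)).trans hv
  have key : ∀ a : ℝ, 1 ≤ a → (1 + |w.im|) / 4 ≤ ‖(a : ℂ) + v‖ := by
    intro a ha
    have h1 := Complex.abs_re_le_norm ((a : ℂ) + v)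
    have h2 := Complex.abs_im_le_norm ((a : ℂ) + v)
    simp only [Complex.add_re, Complex.ofReal_re, Complex.add_im, Complex.ofReal_im,
      zero_add] at h1 h2
    have h3 := le_abs_self (a + v.re)
    have h4 := (abs_le.mp hre).1
    have h5 := abs_sub_abs_le_abs_sub w.im v.im
    rw [abs_sub_comm] at h5
    rcases le_total |w.im| 1 with h | h <;> linarith
  have h1 := key 1 le_rfl
  have h2 := key 2 one_le_two
  push_cast at h1 h2
  have hpos : 0 < 1 + |w.im| := by positivity
  rw [rieszFactor, norm_inv, norm_mul, Real.rpow_neg hpos.le, Real.rpow_two]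
  have h3 : ((1 + |w.im|) / 4) * ((1 + |w.im|) / 4) ≤ ‖1 + v‖ * ‖2 + v‖ := by gcongr
  calc (‖1 + v‖ * ‖2 + v‖)⁻¹ ≤ (((1 + |w.im|) / 4) * ((1 + |w.im|) / 4))⁻¹ := by gcongr
    _ = _ := by field_simp; norm_num

lemma differentiableAt_rieszFactor {v : ℂ} (hv : -1 < v.re) : DifferentiableAt ℂ rieszFactor v := by
  have h : ∀ a : ℝ, 1 ≤ a → (a : ℂ) + v ≠ 0 := fun a ha h0 => by
    have := congrArg Complex.re h0
    simp only [Complex.add_re, Complex.ofReal_re, Complex.zero_re] at this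
    linarith
  have h1 := h 1 le_rfl
  have h2 := h 2 one_le_two
  push_cast at h1 h2
  unfold rieszFactor
  exact DifferentiableAt.inv (by fun_prop) (mul_ne_zero h1 h2)

lemma norm_iteratedDeriv_rieszFactor_le (n : ℕ) {w : ℂ} (hw : 0 < w.re) :
    ‖iteratedDeriv n rieszFactor w‖ ≤ n.factorial * 2 ^ n * 16 * (1 + |w.im|) ^ (-2 : ℝ) := by
  have hdiff : DifferentiableOn ℂ rieszFactor (Metric.closedBall w (1 / 2)) := by
    intro v hv
    rw [mem_closedBall_iff_norm] at hv
    have := (abs_le.mp ((Complex.abs_re_le_norm (v - w)).trans hv)).1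
    rw [Complex.sub_re] at this
    exact (differentiableAt_rieszFactor (by linarith)).differentiableWithinAt
  have key := Complex.norm_iteratedDeriv_le_of_forall_mem_sphere_norm_le n (half_pos one_pos)
    (DifferentiableOn.diffContOnCl (hdiff.mono Metric.closure_ball_subset_closedBall))
    fun v hv => norm_rieszFactor_le hw (mem_sphere_iff_norm.mp hv).le
  refine key.trans_eq ?_
  rw [div_pow, one_pow]
  field_simp

lemma contDiffAt_rieszFactor (n : ℕ) {w : ℂ} (hw : 0 < w.re) : ContDiffAt ℂ n rieszFactor w := by
  have h : DifferentiableOn ℂ rieszFactor {w | 0 < w.re} := fun v (hv : 0 < v.re) =>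
    (differentiableAt_rieszFactor (by linarith)).differentiableWithinAt
  exact (h.contDiffOn (isOpen_lt_re 0)).contDiffAt ((isOpen_lt_re 0).mem_nhds hw)

lemma SlowUpTo.exists_norm_iteratedDeriv_le {F : ℂ → ℂ} {n : ℕ} (hF : SlowUpTo n F) {ρ : ℝ}
    (hρ : 0 < ρ) : ∃ C : ℝ, 0 ≤ C ∧ ∀ w : ℂ, 0 < w.re → w.re ≤ 1 → ρ ≤ |w.im| →
      ‖iteratedDeriv n (fun w => F (1 + w) * rieszFactor w) w‖ ≤
        C * (1 + |w.im|) ^ (-(3 / 2) : ℝ) := by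
  have h1 : ∀ j : ℕ, ∃ C : ℝ, 0 ≤ C ∧ (j ≤ n → ∀ s : ℂ, 1 < s.re → s.re ≤ 2 → ρ ≤ |s.im| →
      ‖iteratedDeriv j F s‖ ≤ C * (1 + |s.im|) ^ (1 / 2 : ℝ)) := by
    intro j
    by_cases hj : j ≤ n
    · obtain ⟨C, hC, h⟩ := (hF.slow j hj).exists_pos (half_pos one_pos) hρ
      exact ⟨C, hC.le, fun _ => h⟩
    · exact ⟨0, le_rfl, fun h => absurd h hj⟩
  choose C hC0 hC using h1
  refine ⟨∑ i ∈ Finset.range (n + 1),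
    n.choose i * (C i * ((n - i).factorial * 2 ^ (n - i) * 16)),
    Finset.sum_nonneg fun i _ => by have := hC0 i; positivity, fun w hw hw1 hwρ => ?_⟩
  have hs : 1 < (1 + w).re := by simpa using hw
  have hFc : ContDiffAt ℂ n (fun w => F (1 + w)) w :=
    (hF.differentiableOn.contDiffAt_of_one_lt_re hs).comp w (by fun_prop)
  have hpos : 0 < 1 + |w.im| := by positivity
  rw [iteratedDeriv_fun_mul hFc (contDiffAt_rieszFactor n hw), Finset.sum_mul]
  refine (norm_sum_le _ _).trans (Finset.sum_le_sum fun i hi => ?_)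
  have hi' : i ≤ n := by simpa [Nat.lt_succ_iff] using hi
  rw [norm_mul, norm_mul, Complex.norm_natCast, iteratedDeriv_comp_const_add]
  have e1 := hC i hi' (1 + w) hs (by simp; linarith) (by simpa using hwρ)
  have e2 := norm_iteratedDeriv_rieszFactor_le (n - i) hw
  rw [Complex.add_im, Complex.one_im, zero_add] at e1
  have hCi := hC0 i
  calc _ ≤ n.choose i * (C i * (1 + |w.im|) ^ (1 / 2 : ℝ)) *
        ((n - i).factorial * 2 ^ (n - i) * 16 * (1 + |w.im|) ^ (-2 : ℝ)) := by gcongr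
    _ = n.choose i * (C i * ((n - i).factorial * 2 ^ (n - i) * 16)) *
        ((1 + |w.im|) ^ (1 / 2 : ℝ) * (1 + |w.im|) ^ (-2 : ℝ)) := by ring
    _ = _ := by
      rw [← Real.rpow_add hpos]
      norm_num

lemma exists_norm_iteratedDeriv_cpow_le (s : ℝ) (n : ℕ) {ρ : ℝ} (hρ : 0 < ρ) (hsn : s ≤ n) :
    ∃ C : ℝ, 0 ≤ C ∧ ∀ w : ℂ, 0 < w.re → ρ ≤ |w.im| →
      ‖iteratedDeriv n (fun w : ℂ => w ^ (s : ℂ)) w‖ ≤ C * (1 + |w.im|) ^ (s - n) := by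
  refine ⟨‖∏ i ∈ Finset.range n, ((s : ℂ) - i)‖ * (ρ / (1 + ρ)) ^ (s - n), by positivity,
    fun w hw hwρ => ?_⟩
  have hle : ρ / (1 + ρ) * (1 + |w.im|) ≤ ‖w‖ := by
    refine le_trans ?_ (Complex.abs_im_le_norm w)
    rw [div_mul_eq_mul_div, div_le_iff₀ (by positivity)]
    nlinarith
  have hcast : (s : ℂ) - n = ((s - n : ℝ) : ℂ) := by push_cast; rfl
  rw [iteratedDeriv_cpow_const _ _ (Or.inl hw), norm_mul, hcast, Complex.norm_cpow_real, mul_assoc,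
    ← Real.mul_rpow (by positivity) (by positivity)]
  refine mul_le_mul_of_nonneg_left ?_ (norm_nonneg _)
  exact Real.rpow_le_rpow_of_nonpos (by positivity) hle (by linarith)

lemma Gamma_add_natCast_eq_prod {z : ℝ} (hz : 0 < z) (n : ℕ) :
    Real.Gamma (z + n) = (∏ i ∈ Finset.range n, (z + i)) * Real.Gamma z := by
  induction n with
  | zero => simp
  | succ n ih =>
    push_cast
    rw [← add_assoc, Real.Gamma_add_one (by positivity), ih, Finset.prod_range_succ]
    ring

/-- The coefficient with which `c w^(j - z)` in a Laplace transform contributes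
`u ^ (z - j - 1)` to the original function; `J` is any integer `> j`. -/
noncomputable def singularCoeff (z : ℝ) (J j : ℕ) : ℝ :=
  (∏ i ∈ Finset.range J, (z - j + i)) / Real.Gamma (z - j + J)

lemma singularCoeff_zero {z : ℝ} (hz : 0 < z) (J : ℕ) :
    singularCoeff z J 0 = (Real.Gamma z)⁻¹ := by
  have h1 : ∏ i ∈ Finset.range J, (z + (i : ℝ)) ≠ 0 :=
    Finset.prod_ne_zero_iff.mpr fun i _ => by positivity
  have h2 := (Real.Gamma_pos_of_pos hz).ne'
  rw [singularCoeff, Nat.cast_zero, sub_zero, Gamma_add_natCast_eq_prod hz]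
  field_simp

lemma singularCoeff_one {z : ℝ} (hz : 0 < z) (J : ℕ) :
    singularCoeff z (J + 1) 1 = (z - 1) * (Real.Gamma z)⁻¹ := by
  have h1 : ∏ i ∈ Finset.range J, (z + (i : ℝ)) ≠ 0 :=
    Finset.prod_ne_zero_iff.mpr fun i _ => by positivity
  have h2 := (Real.Gamma_pos_of_pos hz).ne'
  have h3 : ∏ i ∈ Finset.range (J + 1), (z - (1 : ℕ) + (i : ℝ)) =
      (∏ i ∈ Finset.range J, (z + (i : ℝ))) * (z - 1) := by
    rw [Finset.prod_range_succ']
    congr 1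
    · exact Finset.prod_congr rfl fun i _ => by push_cast; ring
    · push_cast; ring
  have h4 : z - (1 : ℕ) + ((J + 1 : ℕ) : ℝ) = z + J := by push_cast; ring
  rw [singularCoeff, h3, h4, Gamma_add_natCast_eq_prod hz]
  field_simp

lemma singularCoeff_mul_laplace {z : ℝ} {J j : ℕ} (hj : 0 < z - j + J) {w : ℂ} (hw : 0 < w.re) :
    singularCoeff z J j * laplace (fun u => (u : ℂ) ^ ((z - j + J - 1 : ℝ) : ℂ)) w =
      (-1) ^ J * iteratedDeriv J (fun w : ℂ => w ^ ((j - z : ℝ) : ℂ)) w := by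
  have hΓ : (Real.Gamma (z - j + J) : ℂ) ≠ 0 := by
    exact_mod_cast (Real.Gamma_pos_of_pos hj).ne'
  rw [laplace_cpow hj hw, iteratedDeriv_cpow_const _ _ (Or.inl hw), singularCoeff,
    Complex.ofReal_div, ← mul_assoc, div_mul_cancel₀ _ hΓ, ← mul_assoc]
  congr 1
  · push_cast
    rw [show (-1 : ℂ) ^ J = ∏ _i ∈ Finset.range J, (-1) by simp, ← Finset.prod_mul_distrib]
    exact Finset.prod_congr rfl fun i _ => by ring
  · congr 1
    push_cast
    ring

lemma contDiffAt_cpow_const (s : ℂ) (n : ℕ) {w : ℂ} (hw : 0 < w.re) :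
    ContDiffAt ℂ n (fun w : ℂ => w ^ s) w := by
  have h : DifferentiableOn ℂ (fun w : ℂ => w ^ s) {w | 0 < w.re} := fun v (hv : 0 < v.re) =>
    (differentiableAt_id.cpow_const (Or.inl hv)).differentiableWithinAt
  exact (h.contDiffOn (isOpen_lt_re 0)).contDiffAt ((isOpen_lt_re 0).mem_nhds hw)

/-- Removing the singular terms at the origin from the `J`-th derivative of a Laplace transform
leaves a function with an integrable majorant on vertical lines. -/
lemma exists_integrable_majorant {F : ℂ → ℂ} {J : ℕ} (hF : SlowUpTo J F) {z ρ : ℝ}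
    (hz : 0 < z) (hz1 : z < 1) (hJ : 1 ≤ J) (hρ : 0 < ρ) {K : ℂ → ℂ}
    (hK : DifferentiableOn ℂ K (Metric.ball 0 ρ))
    (hFK : ∀ w ∈ Metric.ball (0 : ℂ) ρ, 0 < w.re → F (1 + w) = w ^ (-(z : ℂ)) * K w) :
    ∃ (c : ℕ → ℂ) (G : ℝ → ℝ) (σ₀ : ℝ), c 0 = K 0 / 2 ∧ c 1 = deriv K 0 / 2 - 3 / 4 * K 0 ∧
      Integrable G ∧ 0 < σ₀ ∧ ∀ w : ℂ, 0 < w.re → w.re < σ₀ → w.im ≠ 0 →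
      ‖iteratedDeriv J (fun w => F (1 + w) * rieszFactor w) w - ∑ j ∈ Finset.range J,
        c j * iteratedDeriv J (fun w : ℂ => w ^ ((j - z : ℝ) : ℂ)) w‖ ≤ G w.im := by
  set R := min ρ 1 with hR
  have hR0 : 0 < R := lt_min hρ one_pos
  have hball : ∀ w ∈ Metric.ball (0 : ℂ) R, -1 < w.re := fun w hw => by
    rw [mem_ball_zero_iff] at hw
    have := (abs_le.mp (Complex.abs_re_le_norm w)).1
    linarith [min_le_right ρ 1]
  have hKR : DifferentiableOn ℂ (fun w => K w * rieszFactor w) (Metric.ball 0 R) :=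
    (hK.mono (Metric.ball_subset_ball (min_le_left _ _))).mul fun w hw =>
      (differentiableAt_rieszFactor (hball w hw)).differentiableWithinAt
  obtain ⟨c, E, hc0, hc1, hE⟩ := exists_taylor_eq hR0 hKR
  obtain ⟨hEd, hEeq⟩ := hE J
  have hJ1 : (1 : ℝ) ≤ J := by exact_mod_cast hJ
  obtain ⟨C₁, hC₁, h₁⟩ := exists_norm_iteratedDeriv_cpow_mul_le (s := J - z) (by linarith) hR0 hEd J
  obtain ⟨C₂, hC₂, h₂⟩ := hF.exists_norm_iteratedDeriv_le (ρ := R / 8) (by positivity)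
  have h3 : ∀ j : ℕ, ∃ C : ℝ, 0 ≤ C ∧ (j < J → ∀ w : ℂ, 0 < w.re → R / 8 ≤ |w.im| →
      ‖iteratedDeriv J (fun w : ℂ => w ^ ((j - z : ℝ) : ℂ)) w‖ ≤
        C * (1 + |w.im|) ^ (-(1 + z) : ℝ)) := by
    intro j
    by_cases hj : j < J
    · have hj' : (j : ℝ) + 1 ≤ J := by exact_mod_cast hj
      obtain ⟨C, hC, h⟩ := exists_norm_iteratedDeriv_cpow_le (j - z) J (ρ := R / 8)
        (by positivity) (by linarith)
      refine ⟨C, hC, fun _ w hw hw' => (h w hw hw').trans ?_⟩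
      gcongr
      · linarith [abs_nonneg w.im]
      · linarith
    · exact ⟨0, le_rfl, fun h => absurd h hj⟩
  choose C₃ hC₃ h₃ using h3
  set D := ∑ j ∈ Finset.range J, ‖c j‖ * C₃ j with hD
  have hD0 : 0 ≤ D := Finset.sum_nonneg fun j _ => mul_nonneg (norm_nonneg _) (hC₃ j)
  set G₁ : ℝ → ℝ := (Set.Icc (-1) 1).indicator fun t => C₁ * |t| ^ (-z)
  set G₂ : ℝ → ℝ := fun t => C₂ * (1 + |t|) ^ (-(3 / 2) : ℝ) + D * (1 + |t|) ^ (-(1 + z) : ℝ)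
  have hG₁ : Integrable G₁ := by
    rw [integrable_indicator_iff measurableSet_Icc]
    refine Integrable.const_mul ?_ _
    have h : IntervalIntegrable (fun t : ℝ => |t| ^ (-z)) volume (-1) 1 := by
      have h01 : IntervalIntegrable (fun t : ℝ => |t| ^ (-z)) volume 0 1 := by
        refine (intervalIntegral.intervalIntegrable_rpow' (r := -z) (by linarith)).congr
          fun t ht => ?_
        rw [Set.uIoc_of_le zero_le_one] at ht
        rw [abs_of_pos ht.1]
      have h10 := h01.comp_mul_left (c := -1)
      simp only [neg_mul, one_mul, abs_neg] at h10
      norm_num at h10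
      exact h10.symm.trans h01
    rwa [intervalIntegrable_iff_integrableOn_Icc_of_le (by norm_num)] at h
  have hG₂ : Integrable G₂ := by
    have h1 := integrable_one_add_norm (E := ℝ) (μ := volume) (r := 3 / 2) (by norm_num)
    have h2 := integrable_one_add_norm (E := ℝ) (μ := volume) (r := 1 + z) (by simpa using hz)
    exact (h1.const_mul C₂).add (h2.const_mul D)
  have hG₁0 : ∀ t, 0 ≤ G₁ t := fun t => Set.indicator_nonneg (fun t _ => by positivity) t
  have hG₂0 : ∀ t, 0 ≤ G₂ t := fun t => by positivity
  refine ⟨c, fun t => G₁ t + G₂ t, R / 8, ?_, ?_, hG₁.add hG₂, by positivity, ?_⟩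
  · rw [hc0]
    norm_num [rieszFactor]
    ring
  · have hKd : HasDerivAt K (deriv K 0) 0 :=
      (hK.differentiableAt (Metric.ball_mem_nhds 0 hρ)).hasDerivAt
    have hrf : HasDerivAt rieszFactor (-(3 / 4)) 0 := by
      have h1 : HasDerivAt (fun w : ℂ => (1 + w) * (2 + w)) (1 * (2 + 0) + (1 + 0) * 1) 0 :=
        ((hasDerivAt_id 0).const_add 1).mul ((hasDerivAt_id 0).const_add 2)
      exact (h1.fun_inv (by norm_num)).congr_deriv (by norm_num)
    rw [hc1, (hKd.fun_mul hrf).deriv]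
    norm_num [rieszFactor]
    ring
  intro w hw hwσ hwim
  rcases lt_or_ge |w.im| (R / 8) with hsmall | hbig
  · have hwn : ‖w‖ < R / 4 := by
      have := Complex.norm_le_abs_re_add_abs_im w
      rw [abs_of_pos hw] at this
      linarith
    have hev : (fun w => F (1 + w) * rieszFactor w) =ᶠ[𝓝 w] fun w =>
        ∑ j ∈ Finset.range J, c j * w ^ ((j - z : ℝ) : ℂ) + w ^ ((J - z : ℝ) : ℂ) * E J w := by
      have hm : w ∈ Metric.ball (0 : ℂ) R := by
        rw [mem_ball_zero_iff]
        linarith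
      filter_upwards [(isOpen_lt_re 0).mem_nhds hw, Metric.isOpen_ball.mem_nhds hm] with v hv hvR
      have hv0 : v ≠ 0 := fun h0 => by simp [h0] at hv
      have hcp : ∀ j : ℕ, v ^ ((j - z : ℝ) : ℂ) = v ^ (-(z : ℂ)) * v ^ j := fun j => by
        rw [← Complex.cpow_natCast, ← Complex.cpow_add _ _ hv0]
        congr 1
        push_cast
        ring
      have hKv := hEeq v
      beta_reduce at hKv
      rw [hFK v (Metric.ball_subset_ball (min_le_left _ _) hvR) hv, mul_assoc, hKv, mul_add,
        Finset.mul_sum, hcp]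
      congr 1
      · exact Finset.sum_congr rfl fun j _ => by rw [hcp]; ring
      · ring
    have hEc : ContDiffAt ℂ J (E J) w := by
      refine (hEd.contDiffOn Metric.isOpen_ball).contDiffAt (Metric.isOpen_ball.mem_nhds ?_)
      rw [mem_ball_zero_iff]
      linarith
    have hterm : ∀ j ∈ Finset.range J,
        ContDiffAt ℂ J (fun w : ℂ => c j * w ^ ((j - z : ℝ) : ℂ)) w := fun j _ =>
      contDiffAt_const.mul (contDiffAt_cpow_const _ _ hw)
    rw [hev.iteratedDeriv_eq J, iteratedDeriv_fun_add (ContDiffAt.sum hterm)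
      ((contDiffAt_cpow_const _ _ hw).mul hEc), iteratedDeriv_fun_sum hterm]
    simp only [iteratedDeriv_const_mul_field]
    rw [add_sub_cancel_left]
    refine (h₁ w hw hwn.le).trans ?_
    have him : w.im ∈ Set.Icc (-1 : ℝ) 1 := abs_le.mp (by linarith [min_le_right ρ 1])
    refine le_trans ?_ (le_add_of_nonneg_right (hG₂0 _))
    simp only [G₁, Set.indicator_of_mem him]
    rw [show (J : ℝ) - z - J = -z by ring]
    refine mul_le_mul_of_nonneg_left ?_ hC₁
    exact Real.rpow_le_rpow_of_nonpos (abs_pos.mpr hwim) (Complex.abs_im_le_norm w) (by linarith)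
  · refine le_trans ?_ (le_add_of_nonneg_left (hG₁0 _))
    refine (norm_sub_le _ _).trans (add_le_add (h₂ w hw ?_ hbig) ?_)
    · linarith [min_le_right ρ 1]
    · rw [hD, Finset.sum_mul]
      refine (norm_sum_le _ _).trans (Finset.sum_le_sum fun j hj => ?_)
      rw [norm_mul, mul_assoc]
      exact mul_le_mul_of_nonneg_left (h₃ j (Finset.mem_range.mp hj) w hw hbig) (norm_nonneg _)

/-- Asymptotic expansion of a function whose Laplace transform has an algebraic singularity at the
origin and slowly growing derivatives on the rest of the imaginary axis. -/
theorem exists_norm_pow_mul_sub_sum_le {F : ℂ → ℂ} {J : ℕ} (hF : SlowUpTo J F) {z ρ : ℝ}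
    (hz : 0 < z) (hz1 : z < 1) (hJ : 1 ≤ J) (hρ : 0 < ρ) {K : ℂ → ℂ}
    (hK : DifferentiableOn ℂ K (Metric.ball 0 ρ))
    (hFK : ∀ w ∈ Metric.ball (0 : ℂ) ρ, 0 < w.re → F (1 + w) = w ^ (-(z : ℂ)) * K w)
    {A : ℝ → ℂ} (hA : LaplaceAdmissible A) (hAc : ContinuousOn A (Set.Ioi 0))
    (hAF : ∀ w : ℂ, 0 < w.re → laplace A w = F (1 + w) * rieszFactor w) :
    ∃ (c : ℕ → ℂ) (M : ℝ), c 0 = K 0 / 2 ∧ c 1 = deriv K 0 / 2 - 3 / 4 * K 0 ∧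
      ∀ u : ℝ, 0 < u → ‖(u : ℂ) ^ J * A u - ∑ j ∈ Finset.range J,
        c j * singularCoeff z J j * (u : ℂ) ^ ((z - j + J - 1 : ℝ) : ℂ)‖ ≤ M := by
  obtain ⟨c, G, σ₀, hc0, hc1, hG, hσ₀, h⟩ :=
    exists_integrable_majorant hF hz hz1 hJ hρ hK hFK
  have hpos : ∀ j ∈ Finset.range J, 0 < z - j + J := fun j hj => by
    have : (j : ℝ) + 1 ≤ J := by exact_mod_cast Finset.mem_range.mp hj
    linarith
  have hterm : ∀ j ∈ Finset.range J, LaplaceAdmissible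
      (fun u => c j * singularCoeff z J j * (u : ℂ) ^ ((z - j + J - 1 : ℝ) : ℂ)) := fun j hj =>
    (laplaceAdmissible_cpow (hpos j hj)).const_mul _
  have hB := (hA.pow_mul J).sub (LaplaceAdmissible.finset_sum _ hterm)
  suffices ∃ M, ∀ u : ℝ, 0 < u → ‖(u : ℂ) ^ J * A u - ∑ j ∈ Finset.range J,
      c j * singularCoeff z J j * (u : ℂ) ^ ((z - j + J - 1 : ℝ) : ℂ)‖ ≤ M by
    obtain ⟨M, hM⟩ := this
    exact ⟨c, M, hc0, hc1, hM⟩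
  refine hB.exists_norm_le ?_ hG hσ₀ fun σ t hσ hσ' ht => ?_
  · refine ContinuousOn.sub (ContinuousOn.mul (by fun_prop) hAc)
      (continuousOn_finsetSum _ fun j _ => ContinuousOn.mul (by fun_prop) ?_)
    intro u hu
    exact (Complex.continuousAt_ofReal_cpow_const _ _
      (Or.inr (ne_of_gt hu))).continuousWithinAt
  · set w : ℂ := σ + t * Complex.I with hw
    have hre : w.re = σ := by simp [hw]
    have him : w.im = t := by simp [hw]
    have hw0 : 0 < w.re := hre ▸ hσ
    have hL : laplace (fun u : ℝ => (u : ℂ) ^ J * A u - ∑ j ∈ Finset.range J,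
        c j * singularCoeff z J j * (u : ℂ) ^ ((z - j + J - 1 : ℝ) : ℂ)) w =
        (-1) ^ J * (iteratedDeriv J (fun w => F (1 + w) * rieszFactor w) w -
          ∑ j ∈ Finset.range J,
            c j * iteratedDeriv J (fun w : ℂ => w ^ ((j - z : ℝ) : ℂ)) w) := by
      have h1 : laplace (fun u : ℝ => (u : ℂ) ^ J * A u) w =
          (-1) ^ J * iteratedDeriv J (fun w => F (1 + w) * rieszFactor w) w := by
        have hev : laplace A =ᶠ[𝓝 w] fun w => F (1 + w) * rieszFactor w := by
          filter_upwards [(isOpen_lt_re 0).mem_nhds hw0] with v hv using hAF v hv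
        rw [← hev.iteratedDeriv_eq J, hA.iteratedDeriv_laplace J hw0, ← mul_assoc, ← mul_pow]
        simp
      have h2 : laplace (fun u : ℝ => ∑ j ∈ Finset.range J,
          c j * singularCoeff z J j * (u : ℂ) ^ ((z - j + J - 1 : ℝ) : ℂ)) w =
          ∑ j ∈ Finset.range J, c j * ((-1) ^ J *
            iteratedDeriv J (fun w : ℂ => w ^ ((j - z : ℝ) : ℂ)) w) := by
        rw [laplace]
        simp only [Finset.sum_mul]
        rw [integral_finsetSum _ fun j hj => (hterm j hj).integrable hw0]
        refine Finset.sum_congr rfl fun j hj => ?_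
        rw [← singularCoeff_mul_laplace (hpos j hj) hw0, laplace, ← mul_assoc,
          ← integral_const_mul]
        simp only [mul_assoc]
      rw [mul_sub, ← h1, Finset.mul_sum]
      have h3 : laplace (fun u : ℝ => (u : ℂ) ^ J * A u - ∑ j ∈ Finset.range J,
          c j * singularCoeff z J j * (u : ℂ) ^ ((z - j + J - 1 : ℝ) : ℂ)) w =
          laplace (fun u : ℝ => (u : ℂ) ^ J * A u) w - laplace (fun u : ℝ => ∑ j ∈ Finset.range J,
          c j * singularCoeff z J j * (u : ℂ) ^ ((z - j + J - 1 : ℝ) : ℂ)) w := by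
        rw [laplace, laplace, laplace, ← integral_sub ((hA.pow_mul J).integrable hw0)
          ((LaplaceAdmissible.finset_sum _ hterm).integrable hw0)]
        simp only [sub_mul]
      rw [h3, h2]
      congr 1
      exact Finset.sum_congr rfl fun j _ => by ring
    rw [hL, norm_mul, norm_pow, norm_neg, norm_one, one_pow, one_mul]
    have := h w hw0 (hre ▸ hσ') (him ▸ ht)
    rwa [him] at this

/-- The first Riesz sum `∑_{n ≤ x} a(n) (x - n)`. -/
noncomputable def rieszSum (a : ℕ → ℝ) (x : ℝ) : ℝ := ∑ n ∈ Finset.range (⌊x⌋₊ + 1), a n * (x - n)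

lemma rieszSum_eq_sum_max (a : ℕ → ℝ) {x : ℝ} (hx : 0 ≤ x) {N : ℕ} (hN : x < N) :
    rieszSum a x = ∑ n ∈ Finset.range N, a n * max (x - n) 0 := by
  have hN' : ⌊x⌋₊ + 1 ≤ N := (Nat.floor_lt hx).mpr hN
  rw [rieszSum, ← Finset.sum_subset (Finset.range_subset_range.mpr hN')]
  · refine Finset.sum_congr rfl fun n hn => ?_
    have : (n : ℝ) ≤ x := (Nat.le_floor_iff hx).mp (Nat.lt_succ_iff.mp (Finset.mem_range.mp hn))
    rw [max_eq_left (by linarith)]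
  · intro n _ hn
    have : x < n := (Nat.floor_lt hx).mp (by simpa using hn)
    rw [max_eq_right (by linarith), mul_zero]

lemma continuousOn_rieszSum (a : ℕ → ℝ) : ContinuousOn (rieszSum a) (Set.Ioi 0) := by
  intro x hx
  obtain ⟨N, hN⟩ := exists_nat_gt x
  have h1 : ContinuousAt (fun x : ℝ => ∑ n ∈ Finset.range N, a n * max (x - n) 0) x := by
    fun_prop
  refine (h1.congr ?_).continuousWithinAt
  filter_upwards [Ioo_mem_nhds hx hN] with y hy
  exact (rieszSum_eq_sum_max a hy.1.le hy.2).symm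

lemma rieszSum_mem_Icc {a : ℕ → ℝ} (ha0 : a 0 = 0) (ha : ∀ n, a n ∈ Set.Icc (0 : ℝ) 1) {x : ℝ}
    (hx : 0 ≤ x) : rieszSum a x ∈ Set.Icc 0 (x ^ 2) := by
  have hle : ∀ n ∈ Finset.range (⌊x⌋₊ + 1), 0 ≤ x - n := fun n hn => by
    have := (Nat.le_floor_iff hx).mp (Nat.lt_succ_iff.mp (Finset.mem_range.mp hn))
    linarith
  refine ⟨Finset.sum_nonneg fun n hn => mul_nonneg (ha n).1 (hle n hn), ?_⟩
  rw [rieszSum, Finset.sum_range_succ']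
  simp only [ha0, zero_mul, add_zero]
  calc _ ≤ ∑ n ∈ Finset.range ⌊x⌋₊, x := by
        refine Finset.sum_le_sum fun n hn => ?_
        have h1 := hle (n + 1) (by simpa using hn)
        have h2 : (0 : ℝ) ≤ ((n + 1 : ℕ) : ℝ) := Nat.cast_nonneg _
        calc a (n + 1) * (x - (n + 1 : ℕ)) ≤ 1 * (x - (n + 1 : ℕ)) := by
              gcongr
              exact (ha _).2
          _ ≤ x := by linarith
    _ ≤ x ^ 2 := by
        rw [Finset.sum_const, Finset.card_range, nsmul_eq_mul, sq]
        gcongr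
        exact Nat.floor_le hx

/-- The normalised first Riesz sum in the logarithmic variable. -/
noncomputable def rieszLog (a : ℕ → ℝ) (u : ℝ) : ℂ :=
  (Real.exp (-(2 * u)) * rieszSum a (Real.exp u) : ℝ)

lemma continuousOn_rieszLog (a : ℕ → ℝ) : ContinuousOn (rieszLog a) (Set.Ioi 0) := by
  refine Complex.continuous_ofReal.comp_continuousOn (ContinuousOn.mul (by fun_prop) ?_)
  exact (continuousOn_rieszSum a).comp (by fun_prop) fun u _ => Real.exp_pos u

lemma norm_rieszLog_le {a : ℕ → ℝ} (ha0 : a 0 = 0) (ha : ∀ n, a n ∈ Set.Icc (0 : ℝ) 1) (u : ℝ) :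
    ‖rieszLog a u‖ ≤ 1 := by
  obtain ⟨h0, h1⟩ := rieszSum_mem_Icc ha0 ha (Real.exp_pos u).le
  rw [rieszLog, Complex.norm_real, Real.norm_of_nonneg (by positivity)]
  calc _ ≤ Real.exp (-(2 * u)) * Real.exp u ^ 2 := by gcongr
    _ = 1 := by
      rw [← Real.exp_nat_mul, ← Real.exp_add]
      simp

lemma laplaceAdmissible_rieszLog {a : ℕ → ℝ} (ha0 : a 0 = 0)
    (ha : ∀ n, a n ∈ Set.Icc (0 : ℝ) 1) : LaplaceAdmissible (rieszLog a) := by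
  intro σ hσ
  have h1 := integrableOn_exp_mul_Ioi (a := -σ) (by linarith) 0
  refine Integrable.mono' h1 ?_ (ae_of_all _ fun u => ?_)
  · refine ((continuousOn_rieszLog a).mul ?_).aestronglyMeasurable measurableSet_Ioi
    fun_prop
  · rw [norm_mul, Complex.norm_exp]
    have := norm_rieszLog_le ha0 ha u
    calc _ ≤ 1 * Real.exp (-((σ * u : ℝ) : ℂ)).re := by gcongr
      _ = _ := by simp

lemma integrableOn_rieszKernel (n : ℕ) {w : ℂ} (hw : 0 < w.re) :
    IntegrableOn (fun u : ℝ => (Complex.exp (-u) - n * Complex.exp (-(2 * u))) *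
      Complex.exp (-(w * u))) (Set.Ioi (Real.log n)) := by
  have h1 := integrableOn_exp_mul_complex_Ioi (a := -(1 + w)) (by simp; linarith) (Real.log n)
  have h2 := integrableOn_exp_mul_complex_Ioi (a := -(2 + w)) (by simp; linarith) (Real.log n)
  refine (h1.sub (h2.const_mul (n : ℂ))).congr (ae_of_all _ fun u => ?_)
  simp only [Pi.sub_apply, sub_mul, mul_assoc, ← Complex.exp_add]
  ring_nf

lemma integral_rieszKernel {n : ℕ} (hn : n ≠ 0) {w : ℂ} (hw : 0 < w.re) :
    ∫ u : ℝ in Set.Ioi (Real.log n), (Complex.exp (-u) - n * Complex.exp (-(2 * u))) *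
      Complex.exp (-(w * u)) = ((n : ℂ) ^ (1 + w))⁻¹ * rieszFactor w := by
  have h1 := integrableOn_exp_mul_complex_Ioi (a := -(1 + w)) (by simp; linarith) (Real.log n)
  have h2 := integrableOn_exp_mul_complex_Ioi (a := -(2 + w)) (by simp; linarith) (Real.log n)
  have hn' : (n : ℂ) ≠ 0 := by exact_mod_cast hn
  have hw1 : 1 + w ≠ 0 := fun h => by
    have := congrArg Complex.re h
    simp at this
    linarith
  have hw2 : 2 + w ≠ 0 := fun h => by
    have := congrArg Complex.re h
    simp at this
    linarith
  have heq : ∀ u : ℝ, (Complex.exp (-u) - n * Complex.exp (-(2 * u))) * Complex.exp (-(w * u)) =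
      Complex.exp (-(1 + w) * u) - n * Complex.exp (-(2 + w) * u) := fun u => by
    simp only [sub_mul, mul_assoc, ← Complex.exp_add]
    ring_nf
  simp only [heq]
  have hlog : ((Real.log n : ℝ) : ℂ) = Complex.log n := by
    rw [Complex.natCast_log]
  have e1 : Complex.exp (-(1 + w) * Complex.log n) = ((n : ℂ) ^ (1 + w))⁻¹ := by
    rw [← Complex.cpow_neg, Complex.cpow_def_of_ne_zero hn']
    ring_nf
  have e2 : (n : ℂ) * Complex.exp (-(2 + w) * Complex.log n) = ((n : ℂ) ^ (1 + w))⁻¹ := by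
    rw [← e1, show -(1 + w) * Complex.log n = Complex.log n + -(2 + w) * Complex.log n by ring,
      Complex.exp_add, Complex.exp_log hn']
  rw [integral_sub h1 (h2.const_mul (n : ℂ)), integral_const_mul,
    integral_exp_mul_complex_Ioi (by simp; linarith),
    integral_exp_mul_complex_Ioi (by simp; linarith), hlog, mul_div_assoc', mul_neg, e1, e2,
    rieszFactor]
  field_simp
  ring

lemma laplace_rieszLog {a : ℕ → ℝ} (ha0 : a 0 = 0) (ha : ∀ n, a n ∈ Set.Icc (0 : ℝ) 1) {w : ℂ}
    (hw : 0 < w.re) :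
    laplace (rieszLog a) w = LSeries (fun n => (a n : ℂ)) (1 + w) * rieszFactor w := by
  set f : ℂ → ℕ → ℝ → ℂ := fun w n => (Set.Ioi (Real.log n)).indicator fun u : ℝ =>
    a n * ((Complex.exp (-u) - n * Complex.exp (-(2 * u))) * Complex.exp (-(w * u))) with hf
  have hsub : ∀ n : ℕ, Set.Ioi (Real.log n) ⊆ Set.Ioi 0 := fun n =>
    Set.Ioi_subset_Ioi (Real.log_natCast_nonneg n)
  have hterm : ∀ w : ℂ, 0 < w.re → ∀ n, ∫ u in Set.Ioi 0, f w n u =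
      LSeries.term (fun n => (a n : ℂ)) (1 + w) n * rieszFactor w := by
    intro w hw n
    rw [setIntegral_indicator measurableSet_Ioi, Set.inter_eq_right.mpr (hsub n),
      integral_const_mul]
    rcases eq_or_ne n 0 with rfl | hn
    · simp [ha0]
    · rw [integral_rieszKernel hn hw, LSeries.term_of_ne_zero hn]
      ring
  have hfint : ∀ n, Integrable (f w n) (volume.restrict (Set.Ioi 0)) := fun n =>
    ((integrable_indicator_iff measurableSet_Ioi).mpr
      ((integrableOn_rieszKernel n hw).const_mul (a n : ℂ))).integrableOn
  have hnorm : ∀ n u, (‖f w n u‖ : ℂ) = f (w.re : ℂ) n u := by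
    intro n u
    by_cases hu : u ∈ Set.Ioi (Real.log n)
    · simp only [hf, Set.indicator_of_mem hu]
      have hk : 0 ≤ Real.exp (-u) - n * Real.exp (-(2 * u)) := by
        have h1 : (n : ℝ) ≤ Real.exp u := by
          rcases eq_or_ne n 0 with rfl | hn
          · simpa using (Real.exp_pos u).le
          · rw [← Real.exp_log (Nat.cast_pos.mpr (Nat.pos_of_ne_zero hn))]
            exact Real.exp_le_exp.mpr (le_of_lt hu)
        have h2 : Real.exp (-u) = Real.exp u * Real.exp (-(2 * u)) := by
          rw [← Real.exp_add]
          ring_nf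
        rw [h2, ← sub_mul]
        exact mul_nonneg (sub_nonneg.mpr h1) (Real.exp_pos _).le
      have h3 : Complex.exp (-u) - n * Complex.exp (-(2 * u)) =
          ((Real.exp (-u) - n * Real.exp (-(2 * u)) : ℝ) : ℂ) := by
        push_cast
        rfl
      rw [h3, norm_mul, norm_mul, Complex.norm_real, Complex.norm_real, Complex.norm_exp,
        Real.norm_of_nonneg hk, Real.norm_of_nonneg (ha n).1]
      push_cast
      simp
    · simp [hf, Set.indicator_of_notMem hu]
  have hsum : ∀ s : ℂ, 1 < s.re → LSeriesSummable (fun n => (a n : ℂ)) s := fun s hs =>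
    LSeriesSummable_of_bounded_of_one_lt_re (m := 1) (fun n _ => by
      rw [Complex.norm_real, Real.norm_of_nonneg (ha n).1]
      exact (ha n).2) hs
  have hσ : 0 < ((w.re : ℝ) : ℂ).re := by simpa using hw
  have hsum' : Summable fun n => ∫ u in Set.Ioi 0, ‖f w n u‖ := by
    rw [← Complex.summable_ofReal]
    have h1 : ∀ n, ((∫ u in Set.Ioi 0, ‖f w n u‖ : ℝ) : ℂ) =
        LSeries.term (fun n => (a n : ℂ)) (1 + (w.re : ℂ)) n * rieszFactor (w.re : ℂ) := fun n => by
      rw [← integral_complex_ofReal, ← hterm _ hσ n]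
      simp only [hnorm]
    simp only [h1]
    exact (hsum _ (by simpa using hw)).mul_right _
  have key := hasSum_integral_of_summable_integral_norm hfint hsum'
  simp only [hterm w hw] at key
  have h2 := ((hsum (1 + w) (by simpa using hw)).hasSum.mul_right (rieszFactor w))
  rw [LSeries, ← key.unique h2, laplace]
  refine setIntegral_congr_fun measurableSet_Ioi fun u (hu : 0 < u) => ?_
  obtain ⟨N, hN⟩ := exists_nat_gt (Real.exp u)
  have hlogiff : ∀ n : ℕ, n ≠ 0 → (u ∈ Set.Ioi (Real.log n) ↔ (n : ℝ) < Real.exp u) := fun n hn =>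
    Real.log_lt_iff_lt_exp (Nat.cast_pos.mpr (Nat.pos_of_ne_zero hn))
  rw [tsum_eq_sum (s := Finset.range N), rieszLog, rieszSum_eq_sum_max a (Real.exp_pos u).le hN,
    Finset.mul_sum, Complex.ofReal_sum, Finset.sum_mul]
  · refine Finset.sum_congr rfl fun n _ => ?_
    rcases eq_or_ne n 0 with rfl | hn
    · simp [hf, ha0]
    by_cases h : (n : ℝ) < Real.exp u
    · simp only [hf, Set.indicator_of_mem ((hlogiff n hn).mpr h)]
      rw [max_eq_left (by linarith)]
      push_cast
      have h2 : Complex.exp (-u) = Complex.exp u * Complex.exp (-(2 * u)) := by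
        rw [← Complex.exp_add]
        ring_nf
      rw [h2]
      ring
    · simp only [hf, Set.indicator_of_notMem (mt (hlogiff n hn).mp h)]
      rw [max_eq_right (by linarith)]
      simp
  · intro n hn
    have h1 : (N : ℝ) ≤ n := by simpa using hn
    rcases eq_or_ne n 0 with rfl | hn0
    · simp [hf, ha0]
    simp only [hf]
    rw [Set.indicator_of_notMem]
    exact mt (hlogiff n hn0).mp (by linarith)

/-- The summatory function `∑_{n ≤ x} a(n)`. -/
noncomputable def summatory (a : ℕ → ℝ) (x : ℝ) : ℝ := ∑ n ∈ Finset.range (⌊x⌋₊ + 1), a n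

lemma summatory_eq_sum_ite (a : ℕ → ℝ) {x : ℝ} (hx : 0 ≤ x) {N : ℕ} (hN : x < N) :
    summatory a x = ∑ n ∈ Finset.range N, if (n : ℝ) ≤ x then a n else 0 := by
  have hN' : ⌊x⌋₊ + 1 ≤ N := (Nat.floor_lt hx).mpr hN
  rw [summatory, ← Finset.sum_subset (Finset.range_subset_range.mpr hN')]
  · refine Finset.sum_congr rfl fun n hn => ?_
    rw [if_pos ((Nat.le_floor_iff hx).mp (Nat.lt_succ_iff.mp (Finset.mem_range.mp hn)))]
  · intro n _ hn
    rw [if_neg (not_le.mpr ((Nat.floor_lt hx).mp (by simpa using hn)))]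

lemma mul_summatory_le {a : ℕ → ℝ} (ha : ∀ n, 0 ≤ a n) {x h : ℝ} (hx : 0 ≤ x) (hh : 0 ≤ h) :
    h * summatory a x ≤ rieszSum a (x + h) - rieszSum a x := by
  obtain ⟨N, hN⟩ := exists_nat_gt (x + h)
  rw [summatory_eq_sum_ite a hx (by linarith), rieszSum_eq_sum_max a (by linarith) hN,
    rieszSum_eq_sum_max a hx (by linarith), ← Finset.sum_sub_distrib, Finset.mul_sum]
  refine Finset.sum_le_sum fun n _ => ?_
  rw [← mul_sub]
  split_ifs with hn
  · rw [mul_comm, max_eq_left (by linarith), max_eq_left (by linarith)]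
    exact mul_le_mul_of_nonneg_left (by linarith) (ha n)
  · rw [mul_zero]
    exact mul_nonneg (ha n) (sub_nonneg.mpr (max_le_max (by linarith) le_rfl))

lemma le_mul_summatory {a : ℕ → ℝ} (ha : ∀ n, 0 ≤ a n) {x h : ℝ} (hh : 0 ≤ h) (hhx : h ≤ x) :
    rieszSum a x - rieszSum a (x - h) ≤ h * summatory a x := by
  obtain ⟨N, hN⟩ := exists_nat_gt x
  have hx : 0 ≤ x := hh.trans hhx
  rw [summatory_eq_sum_ite a hx hN, rieszSum_eq_sum_max a hx hN,
    rieszSum_eq_sum_max a (by linarith) (N := N) (by linarith), ← Finset.sum_sub_distrib,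
    Finset.mul_sum]
  refine Finset.sum_le_sum fun n _ => ?_
  rw [← mul_sub]
  split_ifs with hn
  · rw [mul_comm h, max_eq_left (by linarith)]
    refine mul_le_mul_of_nonneg_left ?_ (ha n)
    linarith [le_max_left (x - h - n) 0]
  · rw [max_eq_right (by linarith), max_eq_right (by linarith)]
    simp

/-- The model function `x² (log x)^s`. -/
noncomputable def sqLogPow (s x : ℝ) : ℝ := x ^ 2 * Real.log x ^ s

/-- The derivative of `x² (log x)^s`. -/
noncomputable def sqLogPowDeriv (s x : ℝ) : ℝ :=
  2 * (x * Real.log x ^ s) + s * (x * Real.log x ^ (s - 1))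

lemma hasDerivAt_log_rpow (s : ℝ) {x : ℝ} (hx : 1 < x) :
    HasDerivAt (fun x => Real.log x ^ s) (s * Real.log x ^ (s - 1) / x) x := by
  have h := (Real.hasDerivAt_log (by linarith : x ≠ 0)).rpow_const (p := s)
    (Or.inl (Real.log_pos hx).ne')
  exact h.congr_deriv (by field_simp)

lemma hasDerivAt_sqLogPow (s : ℝ) {x : ℝ} (hx : 1 < x) :
    HasDerivAt (sqLogPow s) (sqLogPowDeriv s x) x := by
  have h : HasDerivAt (sqLogPow s) _ x := (hasDerivAt_pow 2 x).mul (hasDerivAt_log_rpow s hx)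
  refine h.congr_deriv ?_
  rw [sqLogPowDeriv]
  field_simp
  norm_num
  ring

lemma hasDerivAt_sqLogPowDeriv (s : ℝ) {x : ℝ} (hx : 1 < x) :
    HasDerivAt (sqLogPowDeriv s) (2 * Real.log x ^ s + 3 * s * Real.log x ^ (s - 1) +
      s * (s - 1) * Real.log x ^ (s - 1 - 1)) x := by
  have h1 := ((hasDerivAt_id x).mul (hasDerivAt_log_rpow s hx)).const_mul 2
  have h2 := ((hasDerivAt_id x).mul (hasDerivAt_log_rpow (s - 1) hx)).const_mul s
  have h : HasDerivAt (sqLogPowDeriv s) _ x := h1.add h2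
  refine h.congr_deriv ?_
  simp only [id]
  field_simp
  ring

lemma log_rpow_le_of_half_le {s r x y : ℝ} (hsr : s ≤ r) (hr : r ≤ 0) (hx : 4 ≤ x)
    (hy : x / 2 ≤ y) : Real.log y ^ s ≤ 2 ^ (-s) * Real.log x ^ r := by
  have h4 : 2 * Real.log 2 ≤ Real.log x := by
    have := Real.log_le_log (by norm_num) hx
    rwa [show (4 : ℝ) = 2 ^ 2 by norm_num, Real.log_pow, Nat.cast_ofNat] at this
  have hL1 : 1 ≤ Real.log x := by
    have := Real.log_two_gt_d9
    linarith
  have hle : Real.log x / 2 ≤ Real.log y := by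
    have := Real.log_le_log (by linarith) hy
    rw [Real.log_div (by linarith) two_ne_zero] at this
    linarith
  calc Real.log y ^ s ≤ (Real.log x / 2) ^ s :=
        Real.rpow_le_rpow_of_nonpos (by linarith) hle (by linarith)
    _ = 2 ^ (-s) * Real.log x ^ s := by
        rw [Real.div_rpow (by linarith) two_pos.le, Real.rpow_neg two_pos.le]
        field_simp
    _ ≤ _ := by gcongr

lemma exists_abs_sqLogPow_taylor_le {s r : ℝ} (hsr : s ≤ r) (hr : r ≤ 0) :
    ∃ C : ℝ, 0 ≤ C ∧ ∀ x h : ℝ, 4 ≤ x → |h| ≤ x / 2 →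
      |sqLogPow s (x + h) - sqLogPow s x - h * sqLogPowDeriv s x| ≤
        C * h ^ 2 * Real.log x ^ r := by
  set C := 2 * 2 ^ (-s) + |3 * s| * 2 ^ (-(s - 1)) + |s * (s - 1)| * 2 ^ (-(s - 1 - 1)) with hC
  refine ⟨C, by positivity, fun x h hx hh => ?_⟩
  set I := Set.Icc (x - |h|) (x + |h|) with hI
  have hIc : Convex ℝ I := convex_Icc _ _
  have hxI : x ∈ I := ⟨by linarith [abs_nonneg h], by linarith [abs_nonneg h]⟩
  have hxhI : x + h ∈ I := ⟨by linarith [neg_abs_le h], by linarith [le_abs_self h]⟩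
  have hhalf : ∀ y ∈ I, x / 2 ≤ y := fun y hy => by linarith [hy.1]
  have hone : ∀ y ∈ I, 1 < y := fun y hy => by linarith [hhalf y hy]
  have hd2 : ∀ y ∈ I, ‖2 * Real.log y ^ s + 3 * s * Real.log y ^ (s - 1) +
      s * (s - 1) * Real.log y ^ (s - 1 - 1)‖ ≤ C * Real.log x ^ r := by
    intro y hy
    have hly : 0 < Real.log y := Real.log_pos (hone y hy)
    have e1 := log_rpow_le_of_half_le hsr hr hx (hhalf y hy)
    have e2 := log_rpow_le_of_half_le (s := s - 1) (by linarith) hr hx (hhalf y hy)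
    have e3 := log_rpow_le_of_half_le (s := s - 1 - 1) (by linarith) hr hx (hhalf y hy)
    refine (norm_add₃_le).trans ?_
    rw [norm_mul, norm_mul (3 * s), norm_mul (s * (s - 1)), Real.norm_of_nonneg two_pos.le,
      Real.norm_of_nonneg (Real.rpow_nonneg hly.le s),
      Real.norm_of_nonneg (Real.rpow_nonneg hly.le (s - 1)),
      Real.norm_of_nonneg (Real.rpow_nonneg hly.le (s - 1 - 1)), Real.norm_eq_abs,
      Real.norm_eq_abs]
    calc _ ≤ 2 * (2 ^ (-s) * Real.log x ^ r) + |3 * s| * (2 ^ (-(s - 1)) * Real.log x ^ r) +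
          |s * (s - 1)| * (2 ^ (-(s - 1 - 1)) * Real.log x ^ r) := by gcongr
      _ = _ := by rw [hC]; ring
  have hd1 : ∀ y ∈ I, ‖sqLogPowDeriv s y - sqLogPowDeriv s x‖ ≤ C * Real.log x ^ r * |h| := by
    intro y hy
    refine (hIc.norm_image_sub_le_of_norm_hasDerivWithin_le
      (fun y hy => (hasDerivAt_sqLogPowDeriv s (hone y hy)).hasDerivWithinAt) hd2 hxI hy).trans ?_
    refine mul_le_mul_of_nonneg_left ?_ ((norm_nonneg _).trans (hd2 x hxI))
    rw [Real.norm_eq_abs, abs_le]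
    constructor <;> linarith [hy.1, hy.2]
  have hd0 := hIc.norm_image_sub_le_of_norm_hasDerivWithin_le
    (f := fun y => sqLogPow s y - sqLogPowDeriv s x * y)
    (fun y hy => ((hasDerivAt_sqLogPow s (hone y hy)).sub
      ((hasDerivAt_id y).const_mul (sqLogPowDeriv s x))).hasDerivWithinAt)
    (fun y hy => by simpa using hd1 y hy) hxI hxhI
  rw [add_sub_cancel_left, Real.norm_eq_abs, Real.norm_eq_abs, mul_assoc, abs_mul_abs_self,
    ← sq] at hd0
  calc _ = |sqLogPow s (x + h) - sqLogPowDeriv s x * (x + h) -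
        (sqLogPow s x - sqLogPowDeriv s x * x)| := by congr 1; ring
    _ ≤ _ := hd0.trans_eq (by ring)

/-- Recovering a summatory function from an expansion of its first Riesz sum. -/
lemma exists_abs_summatory_sub_le {a : ℕ → ℝ} (ha : ∀ n, 0 ≤ a n) {r : ℝ} (hr : r ≤ 0)
    (hr1 : -1 ≤ r) {ι : Type*} (t : Finset ι) (b s : ι → ℝ) (hs : ∀ i ∈ t, s i ≤ r) {M : ℝ}
    (hM : ∀ x : ℝ, 1 < x → |rieszSum a x - ∑ i ∈ t, b i * sqLogPow (s i) x| ≤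
      M * x ^ 2 * Real.log x ^ (-5 : ℝ)) :
    ∃ C : ℝ, ∀ᶠ x : ℝ in atTop, |summatory a x - ∑ i ∈ t, b i * sqLogPowDeriv (s i) x| ≤
      C * (x * Real.log x ^ (r - 2)) := by
  have h1 : ∀ i, ∃ C : ℝ, 0 ≤ C ∧ (i ∈ t → ∀ x h : ℝ, 4 ≤ x → |h| ≤ x / 2 →
      |sqLogPow (s i) (x + h) - sqLogPow (s i) x - h * sqLogPowDeriv (s i) x| ≤
        C * h ^ 2 * Real.log x ^ r) := by
    intro i
    by_cases hi : i ∈ t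
    · obtain ⟨C, hC, h⟩ := exists_abs_sqLogPow_taylor_le (hs i hi) hr
      exact ⟨C, hC, fun _ => h⟩
    · exact ⟨0, le_rfl, fun h => absurd h hi⟩
  choose C hC0 hC using h1
  set D := ∑ i ∈ t, |b i| * C i with hD
  have hM0 : 0 ≤ M := by
    have h2 := (abs_nonneg _).trans (hM 2 one_lt_two)
    have h3 : 0 < (2 : ℝ) ^ 2 * Real.log 2 ^ (-5 : ℝ) := by
      have := Real.log_pos one_lt_two
      positivity
    rw [mul_assoc] at h2
    exact nonneg_of_mul_nonneg_left h2 h3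
  set P : ℝ → ℝ := fun x => ∑ i ∈ t, b i * sqLogPow (s i) x with hP
  set P' : ℝ → ℝ := fun x => ∑ i ∈ t, b i * sqLogPowDeriv (s i) x with hP'
  have htaylor : ∀ x h : ℝ, 4 ≤ x → |h| ≤ x / 2 →
      |P (x + h) - P x - h * P' x| ≤ D * h ^ 2 * Real.log x ^ r := by
    intro x h hx hh
    simp only [hP, hP', hD]
    rw [Finset.mul_sum, ← Finset.sum_sub_distrib, ← Finset.sum_sub_distrib, Finset.sum_mul,
      Finset.sum_mul]
    refine (Finset.abs_sum_le_sum_abs _ _).trans (Finset.sum_le_sum fun i hi => ?_)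
    rw [show b i * sqLogPow (s i) (x + h) - b i * sqLogPow (s i) x -
      h * (b i * sqLogPowDeriv (s i) x) = b i * (sqLogPow (s i) (x + h) - sqLogPow (s i) x -
      h * sqLogPowDeriv (s i) x) by ring, abs_mul, mul_assoc, mul_assoc]
    refine mul_le_mul_of_nonneg_left ?_ (abs_nonneg _)
    rw [← mul_assoc]
    exact hC i hi x h hx hh
  set M' := M * (4 * 2 ^ (5 : ℝ)) with hM'
  have herr : ∀ x h : ℝ, 4 ≤ x → |h| ≤ x / 2 →
      |rieszSum a (x + h) - P (x + h)| ≤ M' * x ^ 2 * Real.log x ^ (-5 : ℝ) := by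
    intro x h hx hh
    obtain ⟨hh1, hh2⟩ := abs_le.mp hh
    refine (hM (x + h) (by linarith)).trans ?_
    have e1 := log_rpow_le_of_half_le (s := -5) (r := -5) le_rfl (by norm_num) hx
      (y := x + h) (by linarith)
    rw [neg_neg] at e1
    have e2 : (x + h) ^ 2 ≤ 4 * x ^ 2 := by nlinarith
    have e3 : 0 ≤ Real.log (x + h) := Real.log_nonneg (by linarith)
    calc _ ≤ M * (4 * x ^ 2) * (2 ^ (5 : ℝ) * Real.log x ^ (-5 : ℝ)) := by gcongr
      _ = _ := by rw [hM']; ring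
  refine ⟨D + 2 * M', ?_⟩
  filter_upwards [eventually_ge_atTop 4, Real.tendsto_log_atTop.eventually_ge_atTop 2] with x hx hL
  set L := Real.log x with hLdef
  have hL0 : 0 < L := by linarith
  set h := x * L ^ (-2 : ℝ) with hh
  have hh0 : 0 < h := by positivity
  have hhx : h ≤ x / 2 := by
    rw [hh, Real.rpow_neg hL0.le, Real.rpow_two, ← div_eq_mul_inv]
    gcongr
    nlinarith
  have hh' : |h| ≤ x / 2 := by rwa [abs_of_pos hh0]
  have hnh' : |-h| ≤ x / 2 := by rwa [abs_neg]
  have hx0 : |(0 : ℝ)| ≤ x / 2 := by rw [abs_zero]; linarith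
  have t1 := abs_le.mp (htaylor x h hx hh')
  have t2 := abs_le.mp (htaylor x (-h) hx hnh')
  have r0 := abs_le.mp (herr x 0 hx hx0)
  have r1 := abs_le.mp (herr x h hx hh')
  have r2 := abs_le.mp (herr x (-h) hx hnh')
  rw [add_zero] at r0
  rw [neg_sq] at t2
  have u1 := mul_summatory_le ha (x := x) (by linarith) hh0.le
  have u2 := le_mul_summatory ha hh0.le (by linarith : h ≤ x)
  rw [← sub_eq_add_neg] at t2 r2
  have key : h * |summatory a x - P' x| ≤ D * h ^ 2 * L ^ r + 2 * (M' * x ^ 2 * L ^ (-5 : ℝ)) := by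
    rw [← abs_of_pos hh0, ← abs_mul, abs_of_pos hh0, abs_le]
    constructor <;> nlinarith
  have e1 : D * h ^ 2 * L ^ r = h * (D * (x * L ^ (r - 2))) := by
    rw [sub_eq_add_neg, Real.rpow_add hL0, hh]
    ring
  have hM'0 : 0 ≤ M' := by positivity
  have e2 : M' * x ^ 2 * L ^ (-5 : ℝ) ≤ h * (M' * (x * L ^ (r - 2))) := by
    have h2 : L ^ (-5 : ℝ) = L ^ (-2 : ℝ) * L ^ (-3 : ℝ) := by
      rw [← Real.rpow_add hL0]
      norm_num
    have h3 : L ^ (-3 : ℝ) ≤ L ^ (r - 2) :=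
      Real.rpow_le_rpow_of_exponent_le (by linarith) (by linarith)
    calc M' * x ^ 2 * L ^ (-5 : ℝ) = M' * x ^ 2 * L ^ (-2 : ℝ) * L ^ (-3 : ℝ) := by
          rw [h2]; ring
      _ ≤ M' * x ^ 2 * L ^ (-2 : ℝ) * L ^ (r - 2) := by gcongr
      _ = _ := by rw [hh]; ring
  refine le_of_mul_le_mul_left (key.trans ?_) hh0
  linarith

/-- A Tauberian theorem of Selberg–Delange type for coefficients in `[0, 1]`, with two terms of the
expansion. -/
theorem exists_abs_summatory_sub_two_terms_le {a : ℕ → ℝ} (ha0 : a 0 = 0)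
    (ha : ∀ n, a n ∈ Set.Icc (0 : ℝ) 1) (hF : SlowUpTo 5 (LSeries fun n => (a n : ℂ))) {z ρ : ℝ}
    (hz : 0 < z) (hz1 : z < 1) (hρ : 0 < ρ) {K : ℂ → ℂ}
    (hK : DifferentiableOn ℂ K (Metric.ball 0 ρ))
    (hFK : ∀ w ∈ Metric.ball (0 : ℂ) ρ, 0 < w.re →
      LSeries (fun n => (a n : ℂ)) (1 + w) = w ^ (-(z : ℂ)) * K w) :
    ∃ C : ℝ, ∀ᶠ x : ℝ in atTop, |summatory a x - (Real.Gamma z)⁻¹ * x *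
      ((K 0).re * Real.log x ^ (z - 1) +
        (z - 1) * (deriv K 0 - K 0).re * Real.log x ^ (z - 2))| ≤
      C * (x * Real.log x ^ (z - 3)) := by
  obtain ⟨c, M, hc0, hc1, hM⟩ := exists_norm_pow_mul_sub_sum_le hF hz hz1 (by norm_num) hρ hK hFK
    (laplaceAdmissible_rieszLog ha0 ha) (continuousOn_rieszLog a)
    fun w hw => laplace_rieszLog ha0 ha hw
  set b : ℕ → ℝ := fun j => (c j).re * singularCoeff z 5 j with hb
  have hexp : ∀ x : ℝ, 1 < x → |rieszSum a x - ∑ j ∈ Finset.range 5, b j * sqLogPow (z - 1 - j) x| ≤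
      M * x ^ 2 * Real.log x ^ (-5 : ℝ) := by
    intro x hx
    have hx0 : 0 < x := by linarith
    have hL : 0 < Real.log x := Real.log_pos hx
    have h1 := (Complex.abs_re_le_norm _).trans (hM (Real.log x) hL)
    have h2 : ((Real.log x : ℂ) ^ 5 * rieszLog a (Real.log x) - ∑ j ∈ Finset.range 5,
        c j * singularCoeff z 5 j * (Real.log x : ℂ) ^ ((z - j + (5 : ℕ) - 1 : ℝ) : ℂ)).re =
        Real.log x ^ (5 : ℝ) * (x ^ 2)⁻¹ * (rieszSum a x -
          ∑ j ∈ Finset.range 5, b j * sqLogPow (z - 1 - j) x) := by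
      rw [Complex.sub_re, Complex.re_sum, mul_sub, Finset.mul_sum]
      congr 1
      · have h3 : Real.exp (-(2 * Real.log x)) = (x ^ 2)⁻¹ := by
          rw [Real.exp_neg, mul_comm, Real.exp_mul, Real.exp_log hx0, Real.rpow_two]
        rw [rieszLog, h3, Real.exp_log hx0, ← Complex.ofReal_pow, ← Complex.ofReal_mul,
          Complex.ofReal_re, ← mul_assoc, ← Real.rpow_natCast]
        norm_num
      · refine Finset.sum_congr rfl fun j _ => ?_
        rw [← Complex.ofReal_cpow hL.le, mul_assoc, ← Complex.ofReal_mul, Complex.re_mul_ofReal,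
          sqLogPow, show z - j + ((5 : ℕ) : ℝ) - 1 = 5 + (z - 1 - j) by push_cast; ring,
          Real.rpow_add hL]
        field_simp
        rw [hb]
    rw [h2, abs_mul, abs_of_pos (by positivity)] at h1
    rw [Real.rpow_neg hL.le]
    rw [mul_comm, ← le_div_iff₀ (by positivity)] at h1
    refine h1.trans_eq ?_
    field_simp
  obtain ⟨C, hC⟩ := exists_abs_summatory_sub_le (fun n => (ha n).1) (r := z - 1)
    (by linarith) (by linarith) (Finset.range 5) b (fun j => z - 1 - j)
    (fun j _ => by simp) hexp
  have hb0 : b 0 = (K 0).re / 2 * (Real.Gamma z)⁻¹ := by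
    simp only [hb, hc0, singularCoeff_zero hz]
    simp
  have hb1 : b 1 = ((deriv K 0).re / 2 - 3 / 4 * (K 0).re) *
      ((z - 1) * (Real.Gamma z)⁻¹) := by
    simp only [hb, hc1, singularCoeff_one hz 4]
    congr 1
    have : (3 / 4 : ℂ) = ((3 / 4 : ℝ) : ℂ) := by push_cast; rfl
    rw [Complex.sub_re, this, Complex.re_ofReal_mul]
    simp
  set D := |b 1 * (z - 2)| + ∑ j ∈ Finset.range 3,
    (|2 * b (j + 2)| + |b (j + 2) * (z - 1 - (j + 2 : ℕ))|) with hD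
  refine ⟨C + D, ?_⟩
  filter_upwards [hC, eventually_gt_atTop 0, Real.tendsto_log_atTop.eventually_ge_atTop 1]
    with x hx hx0 hL
  set L := Real.log x
  have hL0 : 0 < L := by linarith
  have hrest : |∑ j ∈ Finset.range 5, b j * sqLogPowDeriv (z - 1 - j) x - (Real.Gamma z)⁻¹ * x *
      ((K 0).re * L ^ (z - 1) + (z - 1) * (deriv K 0 - K 0).re * L ^ (z - 2))| ≤
      D * (x * L ^ (z - 3)) := by
    have hsplit : ∑ j ∈ Finset.range 5, b j * sqLogPowDeriv (z - 1 - j) x -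
        (Real.Gamma z)⁻¹ * x *
        ((K 0).re * L ^ (z - 1) + (z - 1) * (deriv K 0 - K 0).re * L ^ (z - 2)) =
        b 1 * (z - 2) * (x * L ^ (z - 3)) +
          ∑ j ∈ Finset.range 3, b (j + 2) * sqLogPowDeriv (z - 1 - (j + 2 : ℕ)) x := by
      rw [Finset.sum_range_succ', Finset.sum_range_succ']
      simp only [sqLogPowDeriv, hb0, zero_add, hb1, Complex.sub_re]
      push_cast
      rw [show z - 1 - 0 = z - 1 by ring, show z - 1 - 1 = z - 2 by ring,
        show z - 2 - 1 = z - 3 by ring]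
      simp only [add_assoc, one_add_one_eq_two]
      ring
    rw [hsplit, hD, add_mul, Finset.sum_mul]
    have hpos : 0 < x * L ^ (z - 3) := by positivity
    refine (abs_add_le _ _).trans (add_le_add ?_ ?_)
    · rw [abs_mul _ (x * L ^ (z - 3)), abs_of_pos hpos]
    · refine (Finset.abs_sum_le_sum_abs _ _).trans (Finset.sum_le_sum fun j _ => ?_)
      have hp : ∀ s : ℝ, s ≤ z - 3 → |x * L ^ s| ≤ x * L ^ (z - 3) := fun s hs => by
        rw [abs_of_pos (by positivity)]
        gcongr
      have hj : (0 : ℝ) ≤ j := Nat.cast_nonneg j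
      have e1 := hp (z - 1 - (j + 2 : ℕ)) (by push_cast; linarith)
      have e2 := hp (z - 1 - (j + 2 : ℕ) - 1) (by push_cast; linarith)
      rw [sqLogPowDeriv, mul_add, ← mul_assoc (b (j + 2)) 2, mul_comm (b (j + 2)) 2,
        ← mul_assoc (b (j + 2)) (z - 1 - (j + 2 : ℕ)), add_mul]
      refine (abs_add_le _ _).trans (add_le_add ?_ ?_)
      · rw [abs_mul]
        exact mul_le_mul_of_nonneg_left e1 (abs_nonneg _)
      · rw [abs_mul]
        exact mul_le_mul_of_nonneg_left e2 (abs_nonneg _)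
  rw [show z - 1 - 2 = z - 3 by ring] at hx
  calc _ ≤ |summatory a x - ∑ j ∈ Finset.range 5, b j * sqLogPowDeriv (z - 1 - j) x| +
        |∑ j ∈ Finset.range 5, b j * sqLogPowDeriv (z - 1 - j) x - (Real.Gamma z)⁻¹ * x *
      ((K 0).re * L ^ (z - 1) + (z - 1) * (deriv K 0 - K 0).re * L ^ (z - 2))| :=
        abs_sub_le _ _ _
    _ ≤ _ := by linarith

end Tauberian

/-- The indicator function of the integers `n` with `q ∤ σ_k(n)`, with real values. -/
noncomputable def realSigmaIndicator (q k n : ℕ) : ℝ := if q ∣ sigmak k n then 0 else 1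

theorem realSigmaIndicator_zero (q k : ℕ) : realSigmaIndicator q k 0 = 0 := by
  simp [realSigmaIndicator, sigmak]

theorem realSigmaIndicator_mem_Icc (q k n : ℕ) :
    realSigmaIndicator q k n ∈ Set.Icc (0 : ℝ) 1 := by
  unfold realSigmaIndicator
  split_ifs <;> simp

theorem ofReal_realSigmaIndicator (q k : ℕ) :
    (fun n => (realSigmaIndicator q k n : ℂ)) = sigmaIndicator q k := by
  ext n
  unfold realSigmaIndicator sigmaIndicator
  split_ifs <;> simp

theorem Skq_eq_summatory (k q : ℕ) {x : ℝ} (hx : 0 ≤ x) :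
    (Skq k q x : ℝ) = summatory (realSigmaIndicator q k) x := by
  have h : {n : ℕ | 1 ≤ n ∧ (n : ℝ) ≤ x ∧ ¬ q ∣ sigmak k n} =
      ((Finset.range (⌊x⌋₊ + 1)).filter fun n => ¬ q ∣ sigmak k n : Finset ℕ) := by
    ext n
    rcases n.eq_zero_or_pos with rfl | hn
    · have h0 : q ∣ sigmak k 0 := by simp [sigmak]
      simp [h0]
    · simp [Nat.le_floor_iff hx, Nat.one_le_iff_ne_zero.2, hn.ne']
  rw [Skq, h, Nat.card_coe_set_eq, Set.ncard_coe_finset, Finset.card_filter, summatory]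
  push_cast
  refine Finset.sum_congr rfl fun n _ => ?_
  unfold realSigmaIndicator
  split_ifs <;> simp_all

/-- Let `q` be an odd prime and `k ≥ 1`, `r = gcd(k, q-1)`, `h = (q-1)/r`
even. Then there is `C > 0` (depending only on `r` and `q`) with
`S_{k,q}(x) = C·x/(log x)^{1/h} · (1 + (1 − γ_{k,q})/(h·log x)) + O(x/(log x)^{2+1/h})`. -/
theorem statement0 (q k r h : ℕ) (hq : q.Prime) (hq_odd : q ≠ 2) (hk : 1 ≤ k)
    (hr : r = Nat.gcd k (q - 1)) (hh : h = (q - 1) / r) (hheven : 2 ∣ h) :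
    ∃ C : ℝ, 0 < C ∧
      (fun x : ℝ => (Skq k q x : ℝ) -
          C * x / Real.log x ^ ((1 : ℝ) / h) *
            (1 + (1 - gammakq q k) / (h * Real.log x)))
        =O[atTop] fun x : ℝ => x / Real.log x ^ (2 + (1 : ℝ) / h) := by
  have : Fact q.Prime := ⟨hq⟩
  have hk0 : k ≠ 0 := by omega
  have hr0 : k.gcd (q - 1) ≠ 0 := (Nat.gcd_pos_of_pos_left _ hk).ne'
  have hrq : r ∣ q - 1 := hr ▸ Nat.gcd_dvd_right _ _
  have hrh : r * h = q - 1 := hh ▸ Nat.mul_div_cancel' hrq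
  have hr2 : 2 * k.gcd (q - 1) ∣ q - 1 := by
    rw [← hr, ← hrh, mul_comm]
    exact mul_dvd_mul_left r hheven
  have hh0 : h ≠ 0 := by
    rintro rfl
    have := hq.two_le
    omega
  have hh2 : (2 : ℝ) ≤ h := by exact_mod_cast Nat.le_of_dvd (by omega) hheven
  obtain ⟨ρ, K, κ, hρ, hK, hFK, hκ, hK0, hK1⟩ := exists_local_factorization (q := q) hk0 hr2
  set z : ℝ := 1 - 1 / h with hz_def
  have hhi : (1 : ℝ) / h ≤ 1 / 2 := one_div_le_one_div_of_le two_pos hh2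
  have hhi0 : (0 : ℝ) < 1 / h := by positivity
  have hz : 0 < z := by linarith
  have hz1 : z < 1 := by linarith
  have hexp : (charExponent (k.gcd (q - 1)) (1 : DirichletCharacter ℂ q) : ℂ) = (z : ℂ) := by
    rw [charExponent_one hr0, ← hr, ← hh, hz_def]
  rw [hexp, ← ofReal_realSigmaIndicator] at hFK
  obtain ⟨C, hC⟩ := exists_abs_summatory_sub_two_terms_le (realSigmaIndicator_zero q k)
    (realSigmaIndicator_mem_Icc q k)
    (by rw [ofReal_realSigmaIndicator]; exact slowUpTo_LSeries_sigmaIndicator hk0 hr2 5)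
    hz hz1 hρ hK hFK
  have hre : (deriv K 0 - K 0).re = κ * (gammakq q k - 1) := by
    rw [hK1, hK0, Complex.sub_re, Complex.re_ofReal_mul, re_regularPart_one hk0 hr2,
      Complex.ofReal_re]
    ring
  rw [hre, hK0, Complex.ofReal_re] at hC
  refine ⟨κ * (Real.Gamma z)⁻¹, mul_pos hκ (inv_pos.2 (Real.Gamma_pos_of_pos hz)),
    Asymptotics.IsBigO.of_bound C ?_⟩
  filter_upwards [hC, eventually_gt_atTop 1] with x hx hx1
  have hx0 : 0 < x := by linarith
  have hL : 0 < Real.log x := Real.log_pos hx1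
  rw [Real.norm_eq_abs, Real.norm_eq_abs, Skq_eq_summatory k q hx0.le,
    abs_of_pos (show 0 < x / Real.log x ^ (2 + (1 : ℝ) / h) by positivity)]
  have e1 : Real.log x ^ (z - 1) = (Real.log x ^ ((1 : ℝ) / h))⁻¹ := by
    rw [← Real.rpow_neg hL.le]; congr 1; rw [hz_def]; ring
  have e2 : Real.log x ^ (z - 2) = (Real.log x ^ ((1 : ℝ) / h))⁻¹ * (Real.log x)⁻¹ := by
    rw [← e1, ← Real.rpow_neg_one (Real.log x), ← Real.rpow_add hL]; congr 1; ring
  have e3 : Real.log x ^ (z - 3) = (Real.log x ^ (2 + (1 : ℝ) / h))⁻¹ := by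
    rw [← Real.rpow_neg hL.le]; congr 1; rw [hz_def]; ring
  rw [e3, ← div_eq_mul_inv] at hx
  refine le_trans (le_of_eq ?_) hx
  rw [e1, e2]
  congr 2
  have hhr : (h : ℝ) ≠ 0 := by exact_mod_cast hh0
  have hz' : z - 1 = -(1 / h) := by rw [hz_def]; ring
  rw [hz']
  have hP : Real.log x ^ ((1 : ℝ) / h) ≠ 0 := by positivity
  generalize Real.log x ^ ((1 : ℝ) / h) = P at hP
  field_simp
  ring
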